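/- arXiv:2012.11902 — 4 statements merged into one kernel-verified Lean document; each statement's English description precedes it below -/
import Mathlib

section
/- Let f:X→Y be a subexponentially distorted embedding between geodesic metric spaces, and suppose Y is hyperbolic relative to a collection of subsets 𝒫. Then there exists ρ₀≥0 so that for every ρ≥ρ₀, the space X is hyperbolic relative to the collection of subsets {f^{−1}(N_ρ(P))}_{P∈𝒫}. -/
noncomputable section

open Metric Set Filter

namespace RelHypPaper

/-! ## Coarse maps between metric spaces -/

section CoarseMaps

variable {X : Type*} {X' : Type*} [PseudoMetricSpace X] [PseudoMetricSpace X']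

/-- `f` is coarsely Lipschitz with constant `C`. -/
def CoarseLipschitzWith (C : ℝ) (f : X → X') : Prop :=
  ∀ x y : X, dist (f x) (f y) ≤ C * dist x y + C

def CoarselyLipschitz (f : X → X') : Prop :=
  ∃ C : ℝ, 0 < C ∧ CoarseLipschitzWith C f

/-- `f` is `τ`-uniformly proper. -/
def UniformlyProperWith (τ : ℝ → ℝ) (f : X → X') : Prop :=
  CoarselyLipschitz f ∧ Filter.Tendsto τ Filter.atTop Filter.atTop ∧
    ∀ x y : X, τ (dist x y) ≤ dist (f x) (f y)

/-- quasi-isometric embedding with constants `Λ, μ`. -/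
def QIEmbeddingWith (Λ μ : ℝ) (f : X → X') : Prop :=
  ∀ x y : X, dist x y / Λ - μ ≤ dist (f x) (f y) ∧ dist (f x) (f y) ≤ Λ * dist x y + μ

def QIEmbedding (f : X → X') : Prop :=
  ∃ Λ μ : ℝ, 1 ≤ Λ ∧ 0 ≤ μ ∧ QIEmbeddingWith Λ μ f

/-- `s` is `μ`-coarsely dense. -/
def CoarselyDense (μ : ℝ) (s : Set X) : Prop :=
  ∀ x : X, ∃ y ∈ s, dist x y ≤ μ

/-- `f` is a quasi-isometry: a quasi-isometric embedding with coarsely dense image. -/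
def QuasiIsometry (f : X → X') : Prop :=
  ∃ Λ μ : ℝ, 1 ≤ Λ ∧ 0 ≤ μ ∧ QIEmbeddingWith Λ μ f ∧ CoarselyDense μ (Set.range f)

/-- polynomially distorted map: coarsely Lipschitz with lower bound `d^α - C`. -/
def PolynomiallyDistorted (f : X → X') : Prop :=
  CoarselyLipschitz f ∧ ∃ α C : ℝ, α ∈ Set.Ioc (0:ℝ) 1 ∧ 0 < C ∧
    ∀ x y : X, dist x y ^ α - C ≤ dist (f x) (f y)

/-- subexponentially distorted map. -/
def SubexponentiallyDistorted (f : X → X') : Prop :=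
  CoarselyLipschitz f ∧ ∃ τ : ℝ → ℝ,
    Filter.Tendsto (fun t => τ t / Real.log t) Filter.atTop Filter.atTop ∧
    ∀ x y : X, τ (dist x y) ≤ dist (f x) (f y)

end CoarseMaps

/-! ## Geodesics, Gromov hyperbolicity, rays -/

section Geodesics

variable {X : Type*} [PseudoMetricSpace X]

/-- `γ` is a unit-speed geodesic from `x` to `y`, parametrised on `[0, dist x y]`. -/
def IsGeodesicFrom (γ : ℝ → X) (x y : X) : Prop :=
  γ 0 = x ∧ γ (dist x y) = y ∧
    ∀ s ∈ Set.Icc (0:ℝ) (dist x y), ∀ t ∈ Set.Icc (0:ℝ) (dist x y),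
      dist (γ s) (γ t) = |s - t|

/-- a geodesic metric space. -/
class GeodesicSpace (Y : Type*) [PseudoMetricSpace Y] : Prop where
  exists_geod : ∀ x y : Y, ∃ γ : ℝ → Y, IsGeodesicFrom γ x y

/-- the Gromov product of `x` and `y` at `o`. -/
def gromovProd (o x y : X) : ℝ := (dist o x + dist o y - dist x y) / 2

/-- `δ`-hyperbolicity (four point condition). -/
def GromovHyperbolicWith (δ : ℝ) (Y : Type*) [PseudoMetricSpace Y] : Prop :=
  ∀ o x y z : Y, min (gromovProd o x y) (gromovProd o y z) - δ ≤ gromovProd o x z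

def GromovHyperbolic (Y : Type*) [PseudoMetricSpace Y] : Prop :=
  ∃ δ : ℝ, 0 ≤ δ ∧ GromovHyperbolicWith δ Y

/-- a unit speed geodesic ray based at `o`. -/
def GeodesicRay (o : X) (γ : ℝ → X) : Prop :=
  γ 0 = o ∧ ∀ s t : ℝ, 0 ≤ s → 0 ≤ t → dist (γ s) (γ t) = |s - t|

/-- a bi-infinite unit speed geodesic. -/
def IsGeodesicLine (ℓ : ℝ → X) : Prop :=
  ∀ s t : ℝ, dist (ℓ s) (ℓ t) = |s - t|

/-- the image of `γ₁` on `[0,∞)` lies within distance `C` of that of `γ₂`. -/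
def WithinOf (C : ℝ) (γ₁ γ₂ : ℝ → X) : Prop :=
  ∀ t : ℝ, 0 ≤ t → ∃ s : ℝ, 0 ≤ s ∧ dist (γ₁ t) (γ₂ s) ≤ C

/-- two rays converge to the same point at infinity: their images on `[0,∞)`
are at finite Hausdorff distance. -/
def SameEndpoint (γ₁ γ₂ : ℝ → X) : Prop :=
  ∃ C : ℝ, WithinOf C γ₁ γ₂ ∧ WithinOf C γ₂ γ₁

/-- the Gromov product at `o` of the endpoints at infinity of two rays. -/
def rayProd (o : X) (γ₁ γ₂ : ℝ → X) : ℝ :=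
  Filter.liminf (fun t => gromovProd o (γ₁ t) (γ₂ t)) Filter.atTop

/-- a hyperbolic space is visual if every point is uniformly close to a
geodesic ray from the basepoint. -/
def Visual (Y : Type*) [PseudoMetricSpace Y] : Prop :=
  ∀ w : Y, ∃ C : ℝ, 0 ≤ C ∧ ∀ x : Y, ∃ γ : ℝ → Y, GeodesicRay w γ ∧
    ∃ t : ℝ, 0 ≤ t ∧ dist x (γ t) ≤ C

end Geodesics

/-! ## Boundaries at infinity with visual metrics -/

/-- A realisation of the Gromov boundary of `Y`, with a visual metric of
parameter `ε` based at `o`: a metric space `Z` together with an assignment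
`β` of boundary points to geodesic rays from `o`, which is surjective,
identifies exactly asymptotic rays, and whose metric is comparable to
`exp (-ε ·(Gromov product))`. -/
structure VisualBoundary (Y : Type*) [MetricSpace Y] where
  Z : Type*
  [metZ : MetricSpace Z]
  o : Y
  ε : ℝ
  C₀ : ℝ
  hε : 0 < ε
  hC₀ : 1 ≤ C₀
  β : (ℝ → Y) → Z
  surj : ∀ z : Z, ∃ γ : ℝ → Y, GeodesicRay o γ ∧ β γ = z
  eq_iff : ∀ γ₁ γ₂ : ℝ → Y, GeodesicRay o γ₁ → GeodesicRay o γ₂ →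
    (β γ₁ = β γ₂ ↔ SameEndpoint γ₁ γ₂)
  visual_le : ∀ γ₁ γ₂ : ℝ → Y, GeodesicRay o γ₁ → GeodesicRay o γ₂ →
    ¬ SameEndpoint γ₁ γ₂ →
    dist (β γ₁) (β γ₂) ≤ C₀ * Real.exp (-ε * rayProd o γ₁ γ₂)
  visual_ge : ∀ γ₁ γ₂ : ℝ → Y, GeodesicRay o γ₁ → GeodesicRay o γ₂ →
    ¬ SameEndpoint γ₁ γ₂ →
    Real.exp (-ε * rayProd o γ₁ γ₂) ≤ C₀ * dist (β γ₁) (β γ₂)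

attribute [instance] VisualBoundary.metZ

/-- `h` is the boundary map induced by `F`: the `F`-image of a ray representing
a boundary point `z` stays within bounded distance of any ray representing `h z`. -/
def InducesOnBoundary {Y Y' : Type*} [MetricSpace Y] [MetricSpace Y']
    (V : VisualBoundary Y) (V' : VisualBoundary Y') (F : Y → Y') (h : V.Z → V'.Z) : Prop :=
  ∀ γ γ' : ℝ → _, GeodesicRay V.o γ → GeodesicRay V'.o γ' → V'.β γ' = h (V.β γ) →
    ∃ C : ℝ, WithinOf C (fun t => F (γ t)) γ'

end RelHypPaper

namespace RelHypPaper

/-! ## Druțu's characterisation of relative hyperbolicity -/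

/-- a continuous `(1,c)`-quasi-geodesic path defined on `[a,b]`. -/
def QGeodPath {X : Type*} [MetricSpace X] (c a b : ℝ) (γ : ℝ → X) : Prop :=
  ContinuousOn γ (Set.Icc a b) ∧ ∀ s ∈ Set.Icc a b, ∀ t ∈ Set.Icc a b,
    |s - t| - c ≤ dist (γ s) (γ t) ∧ dist (γ s) (γ t) ≤ |s - t| + c

/-- the entrance time of the path `γ : [a,b] → X` into the set `A`. -/
def entryTime {X : Type*} [MetricSpace X] (γ : ℝ → X) (a b : ℝ) (A : Set X) : ℝ :=
  sInf {t ∈ Set.Icc a b | γ t ∈ A}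

/-- the exit time of the path `γ : [a,b] → X` from the set `A`. -/
def exitTime {X : Type*} [MetricSpace X] (γ : ℝ → X) (a b : ℝ) (A : Set X) : ℝ :=
  sSup {t ∈ Set.Icc a b | γ t ∈ A}

/-- Druțu's characterisation: `X` is hyperbolic relative to the collection of
peripheral subsets `P i`. -/
structure DrutuRelHyp (X : Type*) [MetricSpace X] {ι : Type*} (P : ι → Set X) : Prop where
  /-- distinct peripherals have uniformly bounded coarse intersections -/
  bdd_intersections : ∀ K : ℝ, 0 < K → ∃ B : ℝ, 0 ≤ B ∧ ∀ i j : ι, P i ≠ P j →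
    EMetric.diam (Metric.cthickening K (P i) ∩ Metric.cthickening K (P j)) ≤
      ENNReal.ofReal B
  /-- geodesics between points near a peripheral set pass near it -/
  geod_near : ∃ ε : ℝ, ε ∈ Set.Ioo (0:ℝ) (1/2) ∧ ∃ M : ℝ, 0 ≤ M ∧
    ∀ i : ι, ∀ x y : X, x ∈ Metric.cthickening (ε * dist x y) (P i) →
      y ∈ Metric.cthickening (ε * dist x y) (P i) →
      ∀ γ : ℝ → X, IsGeodesicFrom γ x y →
        ∃ t ∈ Set.Icc (0:ℝ) (dist x y), γ t ∈ Metric.cthickening M (P i)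
  /-- quasi-geodesic triangles are either `δ`-centred or `P`-centred -/
  thin_triangles : ∀ c : ℝ, 0 ≤ c → ∃ σ δ : ℝ, 0 ≤ σ ∧ 0 ≤ δ ∧
    ∀ (x y z : X) (b₁ b₂ b₃ : ℝ) (γ₁ γ₂ γ₃ : ℝ → X),
      0 ≤ b₁ → 0 ≤ b₂ → 0 ≤ b₃ →
      QGeodPath c 0 b₁ γ₁ → QGeodPath c 0 b₂ γ₂ → QGeodPath c 0 b₃ γ₃ →
      γ₁ 0 = x → γ₁ b₁ = y → γ₂ 0 = y → γ₂ b₂ = z → γ₃ 0 = z → γ₃ b₃ = x →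
      -- (1) a ball of radius δ meets all three sides, or
      (∃ w : X, (∃ t ∈ Set.Icc (0:ℝ) b₁, dist w (γ₁ t) ≤ δ) ∧
        (∃ t ∈ Set.Icc (0:ℝ) b₂, dist w (γ₂ t) ≤ δ) ∧
        (∃ t ∈ Set.Icc (0:ℝ) b₃, dist w (γ₃ t) ≤ δ)) ∨
      -- (2) the σ-neighbourhood of a peripheral set meets all three sides,
      -- with the exit point of each side δ-close to the entrance point of the next
      (∃ i : ι,
        (∃ t ∈ Set.Icc (0:ℝ) b₁, γ₁ t ∈ Metric.cthickening σ (P i)) ∧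
        (∃ t ∈ Set.Icc (0:ℝ) b₂, γ₂ t ∈ Metric.cthickening σ (P i)) ∧
        (∃ t ∈ Set.Icc (0:ℝ) b₃, γ₃ t ∈ Metric.cthickening σ (P i)) ∧
        dist (γ₁ (exitTime γ₁ 0 b₁ (Metric.cthickening σ (P i))))
             (γ₂ (entryTime γ₂ 0 b₂ (Metric.cthickening σ (P i)))) ≤ δ ∧
        dist (γ₂ (exitTime γ₂ 0 b₂ (Metric.cthickening σ (P i))))
             (γ₃ (entryTime γ₃ 0 b₃ (Metric.cthickening σ (P i)))) ≤ δ ∧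
        dist (γ₃ (exitTime γ₃ 0 b₃ (Metric.cthickening σ (P i))))
             (γ₁ (entryTime γ₁ 0 b₁ (Metric.cthickening σ (P i)))) ≤ δ)

end RelHypPaper

namespace RelHypPaper

universe u v w

section Yfacts
variable {Y : Type v} [MetricSpace Y] {ι : Type w} {P : ι → Set Y}

def nb (P : ι → Set Y) (H : ℝ) (k : ι) (x : Y) : Prop := ∃ p ∈ P k, dist x p ≤ H

lemma nb.mono {H H' : ℝ} {k : ι} {x : Y} (h : nb P H k x) (hH : H ≤ H') : nb P H' k x := by
  obtain ⟨p, hp, hd⟩ := h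
  exact ⟨p, hp, hd.trans hH⟩

lemma nb.move {H E H' : ℝ} {k : ι} {x y : Y} (h : nb P H k x) (hxy : dist x y ≤ E)
    (hH : H + E ≤ H') : nb P H' k y := by
  obtain ⟨p, hp, hd⟩ := h
  exact ⟨p, hp, by linarith [dist_triangle_left y p x]⟩

lemma nb.congr {H : ℝ} {k i : ι} {x : Y} (h : nb P H k x) (e : P k = P i) : nb P H i x := by
  obtain ⟨p, hp, hd⟩ := h
  exact ⟨p, e ▸ hp, hd⟩

lemma nb_of_mem {H : ℝ} {k : ι} {x : Y} (hH : 0 ≤ H) (h : x ∈ P k) : nb P H k x :=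
  ⟨x, h, by simpa using hH⟩

lemma nb_of_cth {H : ℝ} {k : ι} {x : Y} (hH : 0 ≤ H) (h : x ∈ cthickening H (P k)) :
    nb P (H+1) k x := by
  have := cthickening_subset_thickening' (by linarith : 0 < H + 1) (by linarith : H < H+1) (P k) h
  obtain ⟨p, hp, hd⟩ := mem_thickening_iff.1 this
  exact ⟨p, hp, hd.le⟩

lemma cth_of_nb {H : ℝ} {k : ι} {x : Y} (h : nb P H k x) : x ∈ cthickening H (P k) := by
  obtain ⟨p, hp, hd⟩ := h
  exact mem_cthickening_of_dist_le x p H (P k) hp hd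

namespace IsGeodesicFrom
variable {γ : ℝ → Y} {x y : Y}

lemma dist_eq (h : IsGeodesicFrom γ x y) {s t : ℝ} (hs : 0 ≤ s) (hst : s ≤ t)
    (ht : t ≤ dist x y) : dist (γ s) (γ t) = t - s := by
  rw [h.2.2 s ⟨hs, by linarith⟩ t ⟨by linarith, ht⟩, abs_sub_comm, abs_of_nonneg (by linarith)]

lemma dist_left (h : IsGeodesicFrom γ x y) {s : ℝ} (hs : 0 ≤ s)
    (hs' : s ≤ dist x y) : dist x (γ s) = s := by
  have := h.dist_eq le_rfl hs hs'
  rw [h.1] at this; linarith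

lemma dist_right (h : IsGeodesicFrom γ x y) {s : ℝ} (hs : 0 ≤ s)
    (hs' : s ≤ dist x y) : dist (γ s) y = dist x y - s := by
  have := h.dist_eq hs hs' le_rfl
  rwa [h.2.1] at this

lemma sub (h : IsGeodesicFrom γ x y) {s t : ℝ} (hs : 0 ≤ s) (hst : s ≤ t)
    (ht : t ≤ dist x y) : IsGeodesicFrom (fun r => γ (s + r)) (γ s) (γ t) := by
  have e := h.dist_eq hs hst ht
  refine ⟨by simp, by rw [e]; simp, ?_⟩
  intro a ha b hb
  rw [e] at ha hb
  rw [h.2.2 (s+a) ⟨by linarith [ha.1], by linarith [ha.2]⟩ (s+b)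
    ⟨by linarith [hb.1], by linarith [hb.2]⟩]
  congr 1; ring

lemma left (h : IsGeodesicFrom γ x y) {s : ℝ} (hs : 0 ≤ s)
    (hs' : s ≤ dist x y) : IsGeodesicFrom γ x (γ s) := by
  have := h.sub le_rfl hs hs'
  simpa [h.1] using this

lemma rev (h : IsGeodesicFrom γ x y) : IsGeodesicFrom (fun r => γ (dist x y - r)) y x := by
  refine ⟨by simpa using h.2.1, by rw [dist_comm y x]; simpa using h.1, ?_⟩
  intro a ha b hb
  rw [dist_comm y x] at ha hb
  rw [h.2.2 _ ⟨by linarith [ha.2], by linarith [ha.1]⟩ _ ⟨by linarith [hb.2], by linarith [hb.1]⟩]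
  rw [abs_sub_comm]; congr 1; ring

lemma qgeod (h : IsGeodesicFrom γ x y) {c : ℝ} (hc : 0 ≤ c) : QGeodPath c 0 (dist x y) γ := by
  refine ⟨?_, fun s hs t ht => ?_⟩
  · have : LipschitzOnWith 1 γ (Icc 0 (dist x y)) := by
      refine LipschitzOnWith.of_dist_le_mul fun a ha b hb => ?_
      rw [h.2.2 a ha b hb, Real.dist_eq]; simp
    exact this.continuousOn
  · rw [h.2.2 s hs t ht]; constructor <;> linarith

end IsGeodesicFrom

lemma fact_A (hY : DrutuRelHyp Y P) (K : ℝ) : ∃ B : ℝ, 0 ≤ B ∧ ∀ i j x y, P i ≠ P j →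
    nb P K i x → nb P K j x → nb P K i y → nb P K j y → dist x y ≤ B := by
  obtain ⟨B, hB, h⟩ := hY.bdd_intersections (max K 1) (by positivity)
  refine ⟨B, hB, fun i j x y hij h1 h2 h3 h4 => ?_⟩
  have := h i j hij
  have h5 := Metric.edist_le_ediam_of_mem
    (show x ∈ cthickening (max K 1) (P i) ∩ cthickening (max K 1) (P j) from
      ⟨cth_of_nb (h1.mono (le_max_left _ _)), cth_of_nb (h2.mono (le_max_left _ _))⟩)
    (show y ∈ cthickening (max K 1) (P i) ∩ cthickening (max K 1) (P j) from
      ⟨cth_of_nb (h3.mono (le_max_left _ _)), cth_of_nb (h4.mono (le_max_left _ _))⟩)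
  have h6 := h5.trans this
  rw [edist_dist] at h6
  exact (ENNReal.ofReal_le_ofReal_iff hB).1 h6

lemma exists_last (p : ℝ → Prop) (a b : ℝ) (h : ∃ s, a ≤ s ∧ s ≤ b ∧ p s) :
    ∃ s, a ≤ s ∧ s ≤ b ∧ p s ∧ ∀ s', s + 1 < s' → s' ≤ b → ¬ p s' := by
  obtain ⟨s0, h1, h2, h3⟩ := h
  have hbd : BddAbove {s | a ≤ s ∧ s ≤ b ∧ p s} := ⟨b, fun s hs => hs.2.1⟩
  obtain ⟨s, hs, hlt⟩ := exists_lt_of_lt_csSup (s := {s | a ≤ s ∧ s ≤ b ∧ p s}) ⟨s0, h1, h2, h3⟩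
    (by linarith : sSup {s | a ≤ s ∧ s ≤ b ∧ p s} - 1 < _)
  refine ⟨s, hs.1, hs.2.1, hs.2.2, fun s' h4 h5 h6 => ?_⟩
  have := le_csSup hbd (show s' ∈ {s | a ≤ s ∧ s ≤ b ∧ p s} from ⟨by linarith [hs.1], h5, h6⟩)
  linarith

lemma exists_first (p : ℝ → Prop) (a b : ℝ) (h : ∃ s, a ≤ s ∧ s ≤ b ∧ p s) :
    ∃ s, a ≤ s ∧ s ≤ b ∧ p s ∧ ∀ s', a ≤ s' → s' < s - 1 → ¬ p s' := by
  obtain ⟨s0, h1, h2, h3⟩ := h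
  obtain ⟨s, h4, h5, h6, h7⟩ := exists_last (fun s => p (-s)) (-b) (-a)
    ⟨-s0, by linarith, by linarith, by simpa using h3⟩
  refine ⟨-s, by linarith, by linarith, h6, fun s' h8 h9 h10 => ?_⟩
  exact h7 (-s') (by linarith) (by linarith) (by simpa using h10)

lemma fact_QC (hY : DrutuRelHyp Y P) : ∃ D₂ : ℝ, 0 ≤ D₂ ∧ ∀ H : ℝ, ∃ R : ℝ, 0 ≤ R ∧
    ∀ γ x y k, IsGeodesicFrom γ x y → nb P H k x → nb P H k y →
    ∀ t, R ≤ t → t ≤ dist x y - R → nb P D₂ k (γ t) := by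
  obtain ⟨ε, hε, M, hM, h⟩ := hY.geod_near
  have hε0 : 0 < ε := hε.1
  have key : ∀ γ x y k, IsGeodesicFrom γ x y → ∀ s₁ s₂ h : ℝ, 0 ≤ s₁ → s₁ ≤ s₂ → s₂ ≤ dist x y →
      nb P h k (γ s₁) → nb P h k (γ s₂) → h / ε ≤ s₂ - s₁ →
      ∃ s, s₁ ≤ s ∧ s ≤ s₂ ∧ nb P (M+1) k (γ s) := by
    intro γ x y k hγ s₁ s₂ h' h1 h2 h3 h4 h5 h6
    have e := hγ.dist_eq h1 h2 h3
    have h7 : h' ≤ ε * dist (γ s₁) (γ s₂) := by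
      rw [e]; rw [div_le_iff₀ hε0] at h6; linarith
    obtain ⟨t, ht, h8⟩ := h k _ _ (cth_of_nb (h4.mono h7)) (cth_of_nb (h5.mono h7)) _ (hγ.sub h1 h2 h3)
    rw [e] at ht
    exact ⟨s₁ + t, by linarith [ht.1], by linarith [ht.2], nb_of_cth hM h8⟩
  have key2 : ∀ γ x y k, IsGeodesicFrom γ x y → ∀ t₁ t t₂ h : ℝ, 0 ≤ t₁ → t₁ ≤ t → t ≤ t₂ →
      t₂ ≤ dist x y → nb P h k (γ t₁) → nb P h k (γ t₂) →
      (∀ s, t₁ + 1 < s → s ≤ t → ¬ nb P (M+1) k (γ s)) →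
      (∀ s, t ≤ s → s < t₂ - 1 → ¬ nb P (M+1) k (γ s)) →
      nb P (M+1) k (γ t) ∨ t₂ - t₁ ≤ (h + 2)/ε + 4 := by
    intro γ x y k hγ t₁ t t₂ h' h1 h2 h3 h4 h5 h6 h7 h8
    by_contra hc
    push Not at hc
    obtain ⟨hc1, hc2⟩ := hc
    have ha1 : t₁ ≤ min (t₁+2) t := le_min (by linarith) h2
    have ha2 : min (t₁+2) t ≤ t₁ + 2 := min_le_left _ _
    have ha3 : min (t₁+2) t ≤ t := min_le_right _ _
    have hb1 : max (t₂-2) t ≤ t₂ := max_le (by linarith) h3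
    have hb2 : t₂ - 2 ≤ max (t₂-2) t := le_max_left _ _
    have hb3 : t ≤ max (t₂-2) t := le_max_right _ _
    obtain ⟨s, hs1, hs2, hs3⟩ := key γ x y k hγ (min (t₁+2) t) (max (t₂-2) t) (h'+2)
      (by linarith) (by linarith) (by linarith)
      (h5.move (E := 2) (by rw [hγ.dist_eq h1 ha1 (by linarith)]; linarith) le_rfl)
      (h6.move (E := 2) (by rw [dist_comm, hγ.dist_eq (by linarith) hb1 (by linarith)]; linarith) le_rfl)
      (by linarith)
    rcases le_total s t with hst | hst
    · rcases min_cases (t₁+2) t with ⟨h9, _⟩ | ⟨h9, _⟩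
      · exact h7 s (by linarith) hst hs3
      · have : s = t := by linarith
        exact hc1 (this ▸ hs3)
    · rcases max_cases (t₂-2) t with ⟨h9, _⟩ | ⟨h9, _⟩
      · exact h8 s hst (by linarith) hs3
      · have : s = t := by linarith
        exact hc1 (this ▸ hs3)
  refine ⟨M + 1 + ((M + 1 + 2)/ε + 4), by positivity, fun H => ?_⟩
  set h' := max H (M+1) with hh'
  have hh1 : M + 1 ≤ h' := le_max_right _ _
  have hR0 : 0 ≤ h' := by linarith
  have hR : 0 ≤ (h'+2)/ε := by positivity
  refine ⟨(h'+2)/ε + 5, by linarith, ?_⟩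
  intro γ x y k hγ hx hy t ht1 ht2
  have hR1 : 0 ≤ (M + 1 + 2)/ε + 4 := by positivity
  have hx' : nb P h' k (γ 0) := by rw [hγ.1]; exact hx.mono (le_max_left _ _)
  have hy' : nb P h' k (γ (dist x y)) := by rw [hγ.2.1]; exact hy.mono (le_max_left _ _)
  by_cases hl : ∃ s, 0 ≤ s ∧ s ≤ t ∧ nb P (M+1) k (γ s)
  · obtain ⟨t₁, h1, h2, h3, h4⟩ := exists_last (fun s => nb P (M+1) k (γ s)) 0 t hl
    by_cases hr : ∃ s, t ≤ s ∧ s ≤ dist x y ∧ nb P (M+1) k (γ s)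
    · obtain ⟨t₂, g1, g2, g3, g4⟩ := exists_first (fun s => nb P (M+1) k (γ s)) t (dist x y) hr
      rcases key2 γ x y k hγ t₁ t t₂ (M+1) h1 h2 g1 g2 h3 g3 h4 g4 with hh | hh
      · exact hh.mono (by linarith)
      · exact h3.move (E := t - t₁) (by rw [hγ.dist_eq h1 h2 (by linarith)]) (by linarith)
    · push Not at hr
      rcases key2 γ x y k hγ t₁ t (dist x y) h' h1 h2 (by linarith) le_rfl (h3.mono hh1) hy' h4
        (fun s hs hs' => hr s hs (by linarith)) with hh | hh
      · exact hh.mono (by linarith)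
      · linarith
  · push Not at hl
    by_cases hr : ∃ s, t ≤ s ∧ s ≤ dist x y ∧ nb P (M+1) k (γ s)
    · obtain ⟨t₂, g1, g2, g3, g4⟩ := exists_first (fun s => nb P (M+1) k (γ s)) t (dist x y) hr
      rcases key2 γ x y k hγ 0 t t₂ h' le_rfl (by linarith) g1 g2 hx' (g3.mono hh1)
        (fun s hs hs' => hl s (by linarith) hs') g4 with hh | hh
      · exact hh.mono (by linarith)
      · linarith
    · push Not at hr
      rcases key2 γ x y k hγ 0 t (dist x y) h' le_rfl (by linarith) (by linarith) le_rfl hx' hy'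
        (fun s hs hs' => hl s (by linarith) hs') (fun s hs hs' => hr s hs (by linarith)) with hh | hh
      · exact hh.mono (by linarith)
      · linarith

lemma fact_F1 (hY : DrutuRelHyp Y P) (H : ℝ) : ∃ H' : ℝ, 0 ≤ H' ∧ H ≤ H' ∧
    ∀ γ x y k, IsGeodesicFrom γ x y → nb P H k x → nb P H k y →
    ∀ t, 0 ≤ t → t ≤ dist x y → nb P H' k (γ t) := by
  obtain ⟨D₂, hD, h⟩ := fact_QC hY
  obtain ⟨R, hR, h⟩ := h H
  refine ⟨max (max D₂ (H + R)) H, le_max_of_le_left (le_max_of_le_left hD), le_max_right _ _, ?_⟩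
  intro γ x y k hγ hx hy t ht0 ht1
  have m1 : D₂ ≤ max (max D₂ (H + R)) H := le_max_of_le_left (le_max_left _ _)
  have m2 : H + R ≤ max (max D₂ (H + R)) H := le_max_of_le_left (le_max_right _ _)
  rcases le_total R t with h1 | h1
  · rcases le_total t (dist x y - R) with h2 | h2
    · exact (h γ x y k hγ hx hy t h1 h2).mono m1
    · exact hy.move (E := R) (by rw [dist_comm, hγ.dist_right ht0 ht1]; linarith) m2
  · exact hx.move (E := R) (by rw [hγ.dist_left ht0 ht1]; linarith) m2

end Yfacts

section Entry
variable {X : Type u} [MetricSpace X]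

lemma entry_spec {γ : ℝ → X} {a b : ℝ} {A : Set X} (hγ : ContinuousOn γ (Icc a b))
    (hA : IsClosed A) (h : ∃ t ∈ Icc a b, γ t ∈ A) :
    entryTime γ a b A ∈ Icc a b ∧ γ (entryTime γ a b A) ∈ A ∧
      ∀ t ∈ Icc a b, γ t ∈ A → entryTime γ a b A ≤ t := by
  have hc : IsCompact {t ∈ Icc a b | γ t ∈ A} := by
    have : IsClosed (Icc a b ∩ γ ⁻¹' A) := hγ.preimage_isClosed_of_isClosed isClosed_Icc hA
    exact isCompact_Icc.of_isClosed_subset this (fun t ht => ht.1)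
  obtain ⟨t, ht, ht'⟩ := h
  have h1 := hc.sInf_mem ⟨t, ht, ht'⟩
  exact ⟨h1.1, h1.2, fun t ht ht' => csInf_le ⟨a, fun s hs => hs.1.1⟩ ⟨ht, ht'⟩⟩

lemma exit_spec {γ : ℝ → X} {a b : ℝ} {A : Set X} (hγ : ContinuousOn γ (Icc a b))
    (hA : IsClosed A) (h : ∃ t ∈ Icc a b, γ t ∈ A) :
    exitTime γ a b A ∈ Icc a b ∧ γ (exitTime γ a b A) ∈ A ∧
      ∀ t ∈ Icc a b, γ t ∈ A → t ≤ exitTime γ a b A := by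
  have hc : IsCompact {t ∈ Icc a b | γ t ∈ A} := by
    have : IsClosed (Icc a b ∩ γ ⁻¹' A) := hγ.preimage_isClosed_of_isClosed isClosed_Icc hA
    exact isCompact_Icc.of_isClosed_subset this (fun t ht => ht.1)
  obtain ⟨t, ht, ht'⟩ := h
  have h1 := hc.sSup_mem ⟨t, ht, ht'⟩
  exact ⟨h1.1, h1.2, fun t ht ht' => le_csSup ⟨b, fun s hs => hs.1.2⟩ ⟨ht, ht'⟩⟩
end Entry

section Yfacts2
variable {Y : Type v} [MetricSpace Y] {ι : Type w} {P : ι → Set Y}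

lemma fact_T (hY : DrutuRelHyp Y P) : ∃ D₀ : ℝ, 0 ≤ D₀ ∧ ∀ p a b γ η ζ,
    IsGeodesicFrom γ p a → IsGeodesicFrom η p b → IsGeodesicFrom ζ a b →
    (∃ s ∈ Icc 0 (dist p a), ∃ t ∈ Icc 0 (dist p b), ∃ u ∈ Icc 0 (dist a b),
      dist (γ s) (η t) ≤ D₀ ∧ dist (γ s) (ζ u) ≤ D₀ ∧ dist (η t) (ζ u) ≤ D₀) ∨
    (∃ k, ∃ s ∈ Icc 0 (dist p a), ∃ s' ∈ Icc 0 (dist p a),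
      ∃ t ∈ Icc 0 (dist p b), ∃ t' ∈ Icc 0 (dist p b),
      ∃ u ∈ Icc 0 (dist a b), ∃ u' ∈ Icc 0 (dist a b),
      (nb P D₀ k (γ s) ∧ nb P D₀ k (γ s') ∧ nb P D₀ k (η t) ∧ nb P D₀ k (η t') ∧
      nb P D₀ k (ζ u) ∧ nb P D₀ k (ζ u')) ∧
      dist (γ s) (η t) ≤ D₀ ∧ dist (γ s') (ζ u) ≤ D₀ ∧ dist (ζ u') (η t') ≤ D₀) := by
  obtain ⟨σ, δ, hσ, hδ, h⟩ := hY.thin_triangles 0 le_rfl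
  refine ⟨2 * δ + σ + 1, by linarith, ?_⟩
  intro p a b γ η ζ hγ hη hζ
  have hη' : IsGeodesicFrom (fun r => η (dist p b - r)) b p := hη.rev
  rcases h p a b _ _ _ γ ζ _ dist_nonneg dist_nonneg dist_nonneg (hγ.qgeod le_rfl)
    (hζ.qgeod le_rfl) (hη'.qgeod le_rfl) hγ.1 hγ.2.1 hζ.1 hζ.2.1 hη'.1 hη'.2.1 with
    ⟨w, ⟨s, hs, h1⟩, ⟨u, hu, h2⟩, ⟨t, ht, h3⟩⟩ | ⟨k, h1, h2, h3, h4, h5, h6⟩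
  · left
    rw [dist_comm b p] at ht
    refine ⟨s, hs, dist p b - t, ⟨by linarith [ht.2], by linarith [ht.1]⟩, u, hu, ?_, ?_, ?_⟩
    · linarith [dist_triangle_left (γ s) (η (dist p b - t)) w]
    · linarith [dist_triangle_left (γ s) (ζ u) w]
    · linarith [dist_triangle_left (η (dist p b - t)) (ζ u) w]
  · right
    have e1 := entry_spec (hγ.qgeod le_rfl).1 isClosed_cthickening h1
    have e2 := entry_spec (hζ.qgeod le_rfl).1 isClosed_cthickening h2
    have e3 := entry_spec (hη'.qgeod le_rfl).1 isClosed_cthickening h3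
    have x1 := exit_spec (hγ.qgeod le_rfl).1 isClosed_cthickening h1
    have x2 := exit_spec (hζ.qgeod le_rfl).1 isClosed_cthickening h2
    have x3 := exit_spec (hη'.qgeod le_rfl).1 isClosed_cthickening h3
    have hh : ∀ v, v ∈ Icc 0 (dist b p) → dist p b - v ∈ Icc 0 (dist p b) := by
      intro v hv; rw [dist_comm b p] at hv; exact ⟨by linarith [hv.2], by linarith [hv.1]⟩
    have hc : ∀ z : Y, z ∈ cthickening σ (P k) → nb P (2 * δ + σ + 1) k z := fun z hz =>
      (nb_of_cth hσ hz).mono (by linarith)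
    refine ⟨k, _, e1.1, _, x1.1, _, hh _ x3.1, _, hh _ e3.1, _, e2.1, _, x2.1,
      ⟨hc _ e1.2.1, hc _ x1.2.1, hc _ x3.2.1, hc _ e3.2.1, hc _ e2.2.1, hc _ x2.2.1⟩, ?_, ?_, ?_⟩
    · exact (dist_comm _ _).trans_le (h6.trans (by linarith))
    · exact h4.trans (by linarith)
    · exact h5.trans (by linarith)

def Near (P : ι → Set Y) (E : ℝ) (w p : Y) (k : ι) : Prop :=
  p ∈ P k ∧ ∀ p' ∈ P k, dist w p ≤ dist w p' + E

lemma Near.mono {E E' : ℝ} {w p : Y} {k : ι} (h : Near P E w p k) (hE : E ≤ E') :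
    Near P E' w p k := ⟨h.1, fun p' hp' => by linarith [h.2 p' hp']⟩

lemma Near.move {E F E' : ℝ} {w w' p : Y} {k : ι} (h : Near P E w p k) (hF : dist w w' ≤ F)
    (hE : E + 2 * F ≤ E') : Near P E' w' p k :=
  ⟨h.1, fun p' hp' => by linarith [h.2 p' hp', dist_triangle_left w' p w, dist_triangle w w' p']⟩

lemma Near.between {E F E' : ℝ} {w e p : Y} {k : ι} (h : Near P E w p k)
    (hF : dist w e + dist e p ≤ dist w p + F)
    (hE : E + F ≤ E') : Near P E' e p k :=
  ⟨h.1, fun p' hp' => by linarith [h.2 p' hp', dist_triangle w e p']⟩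

lemma Near.le_of_nb {E C : ℝ} {w p : Y} {k : ι} (h : Near P E w p k) (hn : nb P C k w) :
    dist w p ≤ C + E := by
  obtain ⟨q, hq, hd⟩ := hn
  linarith [h.2 q hq]

lemma exists_near (w : Y) (k : ι) (h : (P k).Nonempty) : ∃ p, Near P 1 w p k := by
  obtain ⟨p, hp, hd⟩ := (infDist_lt_iff h).1 (lt_add_one (infDist w (P k)))
  exact ⟨p, hp, fun p' hp' => by linarith [infDist_le_dist_of_mem (x := w) hp']⟩

lemma nb.nonempty {H : ℝ} {k : ι} {x : Y} (h : nb P H k x) : (P k).Nonempty := by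
  obtain ⟨p, hp, _⟩ := h; exact ⟨p, hp⟩

variable [GeodesicSpace Y]

lemma fact_E (hY : DrutuRelHyp Y P) (H : ℝ) : ∃ C : ℝ, 0 ≤ C ∧ ∀ p x y γ η k,
    IsGeodesicFrom γ p x → IsGeodesicFrom η p y → nb P H k x → nb P H k y →
    ∃ s ∈ Icc 0 (dist p x), ∃ t ∈ Icc 0 (dist p y), nb P C k (γ s) ∧ nb P C k (η t) ∧
      dist (γ s) (η t) ≤ C := by
  obtain ⟨H', hH0, -, h1⟩ := fact_F1 hY H
  obtain ⟨D₀, hD, hT⟩ := fact_T hY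
  obtain ⟨B, hB, hA⟩ := fact_A hY (max H' D₀)
  refine ⟨H' + 2 * D₀ + B, by linarith, ?_⟩
  intro p x y γ η k hγ hη hx hy
  obtain ⟨ζ, hζ⟩ := GeodesicSpace.exists_geod x y
  have h2 := h1 ζ x y k hζ hx hy
  rcases hT p x y γ η ζ hγ hη hζ with ⟨s, hs, t, ht, u, hu, a1, a2, a3⟩ |
    ⟨i, s, hs, s', hs', t, ht, t', ht', u, hu, u', hu', ⟨n1, n2, n3, n4, n5, n6⟩, d1, d2, d3⟩
  · have := h2 u hu.1 hu.2
    rw [dist_comm] at a2 a3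
    exact ⟨s, hs, t, ht, this.move a2 (by linarith), this.move a3 (by linarith), by linarith⟩
  · by_cases hik : P i = P k
    · exact ⟨s, hs, t, ht, (n1.congr hik).mono (by linarith), (n3.congr hik).mono (by linarith),
        by linarith⟩
    · have g1 := h2 u hu.1 hu.2
      have g2 := h2 u' hu'.1 hu'.2
      have := hA i k _ _ hik (n5.mono (le_max_right _ _)) (g1.mono (le_max_left _ _))
        (n6.mono (le_max_right _ _)) (g2.mono (le_max_left _ _))
      refine ⟨s', hs', t', ht', g1.move ((dist_comm _ _).trans_le d2) (by linarith),
        g2.move d3 (by linarith), ?_⟩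
      linarith [dist_triangle4 (γ s') (ζ u) (ζ u') (η t')]

lemma fact_P1 (hY : DrutuRelHyp Y P) (H E : ℝ) : ∃ C : ℝ, 0 ≤ C ∧ ∀ w z γ q k,
    IsGeodesicFrom γ w z → Near P E w q k → nb P H k z →
    ∃ s ∈ Icc 0 (dist w z), dist (γ s) q ≤ C := by
  obtain ⟨C, hC, h⟩ := fact_E hY (max H 0)
  refine ⟨2 * C + |E|, by positivity, ?_⟩
  intro w z γ q k hγ hq hz
  obtain ⟨η, hη⟩ := GeodesicSpace.exists_geod w q
  obtain ⟨s, hs, t, ht, n1, n2, d⟩ := h w q z η γ k hη hγ (nb_of_mem (le_max_right _ _) hq.1)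
    (hz.mono (le_max_left _ _))
  refine ⟨t, ht, ?_⟩
  have := (hq.between (e := η s) (F := 0) (by rw [hη.dist_left hs.1 hs.2, hη.dist_right hs.1 hs.2]; linarith)
    le_rfl).le_of_nb n1
  linarith [dist_triangle_left (γ t) q (η s), le_abs_self E]

lemma fact_P1' (hY : DrutuRelHyp Y P) (E F : ℝ) : ∃ C : ℝ, 0 ≤ C ∧ ∀ w w' q q' k,
    Near P E w q k → Near P E w' q' k → dist w w' ≤ F → dist q q' ≤ C := by
  obtain ⟨C, hC, h⟩ := fact_P1 hY 0 (E + 2 * |F|)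
  refine ⟨2 * C + |E| + 2 * |F|, by positivity, ?_⟩
  intro w w' q q' k h1 h2 h3
  have h4 : Near P (E + 2 * |F|) w q' k := h2.move (F := F) (by rw [dist_comm]; exact h3)
    (by linarith [le_abs_self F])
  have h5 : Near P (E + 2 * |F|) w q k := h1.mono (by linarith [abs_nonneg F])
  obtain ⟨γ, hγ⟩ := GeodesicSpace.exists_geod w q'
  obtain ⟨s, hs, hd⟩ := h w q' γ q k hγ h5 (nb_of_mem le_rfl h2.1)
  have h6 := h4.2 q h1.1
  have h7 := dist_triangle w (γ s) q
  have h8 := hγ.dist_left hs.1 hs.2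
  have h9 := hγ.dist_right hs.1 hs.2
  linarith [dist_triangle_left q q' (γ s), le_abs_self E]

lemma fact_F3 (hY : DrutuRelHyp Y P) (E : ℝ) : ∃ C : ℝ, 0 ≤ C ∧ ∀ p b c γ η,
    IsGeodesicFrom γ p b → IsGeodesicFrom η p c → dist p b + dist b c ≤ dist p c + E →
    (∃ t ∈ Icc 0 (dist p c), dist b (η t) ≤ C) ∨
    ∃ i, nb P C i b ∧ (∃ s ∈ Icc 0 (dist p b), ∃ t ∈ Icc 0 (dist p c), dist (γ s) (η t) ≤ C ∧
      nb P C i (γ s)) ∧ ∃ t' ∈ Icc 0 (dist p c), dist p b - C ≤ t' ∧ nb P C i (η t') := by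
  obtain ⟨D₀, hD, hT⟩ := fact_T hY
  refine ⟨|E| + 2 * D₀, by positivity, ?_⟩
  intro p b c γ η hγ hη hE
  obtain ⟨ζ, hζ⟩ := GeodesicSpace.exists_geod b c
  have key : ∀ s ∈ Icc 0 (dist p b), ∀ u ∈ Icc 0 (dist b c), dist (γ s) (ζ u) ≤ D₀ →
      dist (γ s) b ≤ |E| + D₀ := by
    intro s hs u hu h
    have h1 := hγ.dist_left hs.1 hs.2
    have h2 := hγ.dist_right hs.1 hs.2
    have h3 := hζ.dist_right hu.1 hu.2
    linarith [dist_triangle4 p (γ s) (ζ u) c, le_abs_self E, hu.1]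
  rcases hT p b c γ η ζ hγ hη hζ with ⟨s, hs, t, ht, u, hu, a1, a2, a3⟩ |
    ⟨i, s, hs, s', hs', t, ht, t', ht', u, hu, u', hu', ⟨n1, n2, n3, n4, n5, n6⟩, d1, d2, d3⟩
  · left
    refine ⟨t, ht, ?_⟩
    linarith [dist_triangle_left b (η t) (γ s), key s hs u hu a2]
  · right
    refine ⟨i, n2.move (key s' hs' u hu d2) (by linarith), ⟨s, hs, t, ht, by linarith [abs_nonneg E],
      n1.mono (by linarith [abs_nonneg E])⟩, t', ht', ?_, n4.mono (by linarith [abs_nonneg E])⟩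
    have h3 := hζ.dist_right hu'.1 hu'.2
    have h4 := hη.dist_left ht'.1 ht'.2
    rw [dist_comm] at d3
    linarith [dist_triangle4 p (η t') (ζ u') c, le_abs_self E, hu'.1]

end Yfacts2

section Yfacts3
variable {Y : Type v} [MetricSpace Y] {ι : Type w} {P : ι → Set Y}

def RR (P : ι → Set Y) (D : ℝ) (a b : Y) : Prop := dist a b ≤ D ∨ ∃ k, nb P D k a ∧ nb P D k b

lemma RR.symm {D : ℝ} {a b : Y} (h : RR P D a b) : RR P D b a := by
  rcases h with h | ⟨k, h1, h2⟩
  · exact Or.inl (by rwa [dist_comm])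
  · exact Or.inr ⟨k, h2, h1⟩

variable [GeodesicSpace Y]

def geo (p x : Y) : ℝ → Y := Classical.choose (GeodesicSpace.exists_geod p x)

lemma geo_spec (p x : Y) : IsGeodesicFrom (geo p x) p x :=
  Classical.choose_spec (GeodesicSpace.exists_geod p x)

def Gd (P : ι → Set Y) (D : ℝ) (p : Y) (r : ℝ) (x y : Y) : Prop :=
  ∃ s ∈ Icc 0 (dist p x), ∃ t ∈ Icc 0 (dist p y), r ≤ s ∧ r ≤ t ∧ RR P D (geo p x s) (geo p y t)

lemma Gd.symm {D r : ℝ} {p x y : Y} (h : Gd P D p r x y) : Gd P D p r y x := by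
  obtain ⟨s, hs, t, ht, h1, h2, h3⟩ := h
  exact ⟨t, ht, s, hs, h2, h1, h3.symm⟩

lemma Gd.mono {D r r' : ℝ} {p x y : Y} (h : Gd P D p r x y) (hr : r' ≤ r) : Gd P D p r' x y := by
  obtain ⟨s, hs, t, ht, h1, h2, h3⟩ := h
  exact ⟨s, hs, t, ht, hr.trans h1, hr.trans h2, h3⟩

def ImpP (P : ι → Set Y) (D : ℝ) : Prop := ∀ D' : ℝ, ∃ C : ℝ, 0 ≤ C ∧ ∀ (p x y : Y) (r s t : ℝ),
  s ∈ Icc 0 (dist p x) → t ∈ Icc 0 (dist p y) → r ≤ s → r ≤ t →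
  RR P D' (geo p x s) (geo p y t) → Gd P D p (r - C) x y

lemma fact_Imp (hY : DrutuRelHyp Y P) : ∃ D : ℝ, 0 ≤ D ∧ ImpP P D := by
  obtain ⟨D₀, hD₀, hT⟩ := fact_T hY
  obtain ⟨D₂, hD₂, hQ⟩ := fact_QC hY
  have hm0 : D₀ ≤ max D₀ D₂ := le_max_left _ _
  have hm2 : D₂ ≤ max D₀ D₂ := le_max_right _ _
  refine ⟨max D₀ D₂, by positivity, fun D' => ?_⟩
  have close : ∀ D' (p x y : Y) (r s t : ℝ),
      s ∈ Icc 0 (dist p x) → t ∈ Icc 0 (dist p y) → r ≤ s → r ≤ t →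
      dist (geo p x s) (geo p y t) ≤ D' → Gd P (max D₀ D₂) p (r - (D' + D₀)) x y := by
    intro D' p x y r s t hs ht hrs hrt hd
    have hx := geo_spec p x
    have hy := geo_spec p y
    obtain ⟨ζ, hζ⟩ := GeodesicSpace.exists_geod (geo p x s) (geo p y t)
    have es := hx.dist_left hs.1 hs.2
    have et := hy.dist_left ht.1 ht.2
    have ks : ∀ s1 ∈ Icc 0 s, ∀ u ∈ Icc 0 (dist (geo p x s) (geo p y t)),
        dist (geo p x s1) (ζ u) ≤ D₀ → r - (D' + D₀) ≤ s1 := by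
      intro s1 hs1 u hu h1
      have := hζ.dist_left hu.1 hu.2
      have h2 := hx.dist_eq hs1.1 hs1.2 hs.2
      linarith [dist_triangle (geo p x s1) (ζ u) (geo p x s), dist_comm (ζ u) (geo p x s), hu.2]
    have kt : ∀ t1 ∈ Icc 0 t, ∀ u ∈ Icc 0 (dist (geo p x s) (geo p y t)),
        dist (geo p y t1) (ζ u) ≤ D₀ → r - (D' + D₀) ≤ t1 := by
      intro t1 ht1 u hu h1
      have := hζ.dist_right hu.1 hu.2
      have h2 := hy.dist_eq ht1.1 ht1.2 ht.2
      linarith [dist_triangle (geo p y t1) (ζ u) (geo p y t), hu.1]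
    rcases hT p _ _ _ _ ζ (hx.left hs.1 hs.2) (hy.left ht.1 ht.2) hζ with
      ⟨s1, hs1, t1, ht1, u, hu, a1, a2, a3⟩ |
      ⟨i, s1, hs1, s', hs', t1, ht1, t', ht', u, hu, u', hu', ⟨n1, n2, n3, n4, n5, n6⟩, d1, d2, d3⟩
    · rw [es] at hs1; rw [et] at ht1
      exact ⟨s1, ⟨hs1.1, hs1.2.trans hs.2⟩, t1, ⟨ht1.1, ht1.2.trans ht.2⟩, ks s1 hs1 u hu a2,
        kt t1 ht1 u hu a3, Or.inl (a1.trans hm0)⟩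
    · rw [es] at hs'; rw [et] at ht'
      exact ⟨s', ⟨hs'.1, hs'.2.trans hs.2⟩, t', ⟨ht'.1, ht'.2.trans ht.2⟩, ks s' hs' u hu d2,
        kt t' ht' u' hu' ((dist_comm _ _).trans_le d3), Or.inr ⟨i, n2.mono hm0, n4.mono hm0⟩⟩
  obtain ⟨C, hC, hE⟩ := fact_E hY D'
  obtain ⟨R, hR, hQ⟩ := hQ (max D' C)
  refine ⟨|D'| + 2 * C + D₀ + 2 * R, by positivity, ?_⟩
  intro p x y r s t hs ht hrs hrt hRR
  have hx := geo_spec p x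
  have hy := geo_spec p y
  have es := hx.dist_left hs.1 hs.2
  have et := hy.dist_left ht.1 ht.2
  rcases hRR with hd | ⟨k, n1, n2⟩
  · exact (close D' p x y r s t hs ht hrs hrt hd).mono (by linarith [le_abs_self D'])
  · obtain ⟨s1, hs1, t1, ht1, m1, m2, hd⟩ := hE p _ _ _ _ k (hx.left hs.1 hs.2) (hy.left ht.1 ht.2) n1 n2
    rw [es] at hs1; rw [et] at ht1
    have e1 := hx.dist_left hs1.1 (hs1.2.trans hs.2)
    have e2 := hy.dist_left ht1.1 (ht1.2.trans ht.2)
    have e3 := dist_triangle p (geo p x s1) (geo p y t1)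
    have e4 := dist_triangle_right p (geo p x s1) (geo p y t1)
    by_cases c1 : s - s1 < 2 * R
    · exact (close C p x y (r - 2 * R - C) s1 t1 ⟨hs1.1, hs1.2.trans hs.2⟩ ⟨ht1.1, ht1.2.trans ht.2⟩
        (by linarith) (by linarith) hd).mono (by linarith [abs_nonneg D'])
    by_cases c2 : t - t1 < 2 * R
    · exact (close C p x y (r - 2 * R - C) s1 t1 ⟨hs1.1, hs1.2.trans hs.2⟩ ⟨ht1.1, ht1.2.trans ht.2⟩
        (by linarith) (by linarith) hd).mono (by linarith [abs_nonneg D'])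
    push Not at c1 c2
    have q1 := hQ _ _ _ k (hx.sub hs1.1 hs1.2 hs.2) (m1.mono (le_max_right _ _))
      (n1.mono (le_max_left _ _)) (s - R - s1) (by linarith)
      (by rw [hx.dist_eq hs1.1 hs1.2 hs.2]; linarith)
    have q2 := hQ _ _ _ k (hy.sub ht1.1 ht1.2 ht.2) (m2.mono (le_max_right _ _))
      (n2.mono (le_max_left _ _)) (t - R - t1) (by linarith)
      (by rw [hy.dist_eq ht1.1 ht1.2 ht.2]; linarith)
    simp only [add_sub_cancel] at q1 q2
    exact ⟨s - R, ⟨by linarith [hs1.1], by linarith [hs.2]⟩, t - R,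
      ⟨by linarith [ht1.1], by linarith [ht.2]⟩, by linarith [abs_nonneg D'],
      by linarith [abs_nonneg D'], Or.inr ⟨k, q1.mono hm2, q2.mono hm2⟩⟩

def AltC (P : ι → Set Y) (C r : ℝ) (p b c : Y) (γb γc : ℝ → Y) : Prop :=
  (∃ t ∈ Icc 0 (dist p c), dist b (γc t) ≤ C) ∨
    ∃ i, nb P C i b ∧ (∃ s ∈ Icc 0 (dist p b), ∃ t ∈ Icc 0 (dist p c), dist (γb s) (γc t) ≤ C ∧
      nb P C i (γb s)) ∧ ∃ t' ∈ Icc 0 (dist p c), r - C ≤ t' ∧ nb P C i (γc t')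

lemma fact_W (hY : DrutuRelHyp Y P) (D₁ C : ℝ) (hC : 0 ≤ C) (hD₁ : 0 ≤ D₁) : ∃ C' : ℝ, 0 ≤ C' ∧
    ∀ p a b c γa γb γc r, IsGeodesicFrom γa p a → IsGeodesicFrom γb p b → IsGeodesicFrom γc p c →
    RR P D₁ a b → r ≤ dist p a → r ≤ dist p b → AltC P C r p b c γb γc →
    ∃ s ∈ Icc 0 (dist p a), ∃ t ∈ Icc 0 (dist p c), r - C' ≤ s ∧ r - C' ≤ t ∧
      RR P C' (γa s) (γc t) := by
  obtain ⟨CE, hCE, hE⟩ := fact_E hY D₁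
  obtain ⟨H', hH', hHC, hF⟩ := fact_F1 hY (max D₁ (max C CE))
  obtain ⟨B, hB, hA⟩ := fact_A hY H'
  have m1 : D₁ ≤ H' := (le_max_left _ _).trans hHC
  have m2 : C ≤ H' := ((le_max_left _ _).trans (le_max_right _ _)).trans hHC
  have m3 : CE ≤ H' := ((le_max_right _ _).trans (le_max_right _ _)).trans hHC
  refine ⟨D₁ + 2 * C + H' + B + CE, by positivity, ?_⟩
  intro p a b c γa γb γc r ha hb hc hab hra hrb halt
  have ea : ∀ Q : Y → Prop, Q a → Q (γa (dist p a)) := fun Q h => by rw [ha.2.1]; exact h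
  have ma : dist p a ∈ Icc 0 (dist p a) := ⟨dist_nonneg, le_rfl⟩
  rcases halt with ⟨t, ht, hd⟩ | ⟨i, n1, ⟨s, hs, t, ht, hd, n2⟩, t', ht', hrt', n3⟩
  · refine ⟨dist p a, ma, t, ht, by linarith, ?_, ?_⟩
    · have := hc.dist_left ht.1 ht.2
      linarith [dist_triangle_right p b (γc t)]
    · rw [ha.2.1]
      rcases hab with h | ⟨k, k1, k2⟩
      · exact Or.inl (by linarith [dist_triangle a b (γc t)])
      · exact Or.inr ⟨k, k1.mono (by linarith), k2.move hd (by linarith)⟩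
  · rcases hab with h | ⟨k, k1, k2⟩
    · refine ⟨dist p a, ma, t', ht', by linarith, by linarith, Or.inr ⟨i, ?_, n3.mono (by linarith)⟩⟩
      rw [ha.2.1]; exact n1.move ((dist_comm _ _).trans_le h) (by linarith)
    by_cases hki : P k = P i
    · refine ⟨dist p a, ma, t', ht', by linarith, by linarith, Or.inr ⟨i, ?_, n3.mono (by linarith)⟩⟩
      rw [ha.2.1]; exact (k1.congr hki).mono (by linarith)
    · obtain ⟨s1, hs1, s2, hs2, e1, e2, e3⟩ := hE p a b γa γb k ha hb k1 k2
      have f0 := hb.dist_left hs.1 hs.2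
      have f1 := ha.dist_left hs1.1 hs1.2
      have f2 := hb.dist_left hs2.1 hs2.2
      have f3 := hb.dist_right hs2.1 hs2.2
      have f4 := hc.dist_left ht.1 ht.2
      have f5 := hb.dist_right hs.1 hs.2
      rcases le_total s s2 with h | h
      · have hsub := hb.sub hs.1 h hs2.2
        have q : nb P H' i (γb s2) := by
          have := hF _ _ _ i (hb.sub hs.1 hs.2 le_rfl)
            (n2.mono ((le_max_left _ _).trans (le_max_right _ _)))
            (by rw [hb.2.1]; exact n1.mono ((le_max_left _ _).trans (le_max_right _ _)))
            (s2 - s) (by linarith) (by rw [hb.2.1, f5]; linarith [hs2.2])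
          simpa using this
        have := hA i k _ _ (fun h => hki h.symm) q (e2.mono m3) (n1.mono m2) (k2.mono m1)
        refine ⟨s1, hs1, t', ht', ?_, by linarith,
          Or.inr ⟨i, q.move ((dist_comm _ _).trans_le e3) (by linarith), n3.mono (by linarith)⟩⟩
        linarith [dist_triangle p (γa s1) (γb s2)]
      · have q : nb P H' k (γb s) := by
          have := hF _ _ _ k (hb.sub hs2.1 hs2.2 le_rfl)
            (e2.mono ((le_max_right _ _).trans (le_max_right _ _)))
            (by rw [hb.2.1]; exact k2.mono (le_max_left _ _))
            (s - s2) (by linarith) (by rw [hb.2.1, f3]; linarith [hs.2])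
          simpa using this
        have := hA i k _ _ (fun h => hki h.symm) (n2.mono m2) q (n1.mono m2) (k2.mono m1)
        refine ⟨dist p a, ma, t, ht, by linarith, ?_,
          Or.inr ⟨k, ?_, q.move hd (by linarith)⟩⟩
        · linarith [dist_triangle_right p (γb s) (γc t)]
        · rw [ha.2.1]; exact k1.mono (by linarith)

lemma fact_U (hY : DrutuRelHyp Y P) {D : ℝ} (hD : 0 ≤ D) (hI : ImpP P D) : ∃ C : ℝ, 0 ≤ C ∧
    ∀ p r x y z, Gd P D p r x y → Gd P D p r y z → Gd P D p (r - C) x z := by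
  obtain ⟨CE, hCE, hE⟩ := fact_E hY D
  obtain ⟨C3, hC3, hF3⟩ := fact_F3 hY (2 * D + 2 * CE)
  obtain ⟨H, hH, hHm, hF⟩ := fact_F1 hY (max D CE)
  obtain ⟨C', hC', hW⟩ := fact_W hY D (C3 + CE + H + D) (by positivity) hD
  obtain ⟨C4, hC4, hI4⟩ := hI C'
  have mD : D ≤ H := (le_max_left _ _).trans hHm
  have mE : CE ≤ H := (le_max_right _ _).trans hHm
  have main : ∀ p r x y z s t t' u, s ∈ Icc 0 (dist p x) → t ∈ Icc 0 (dist p y) →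
      t' ∈ Icc 0 (dist p y) → u ∈ Icc 0 (dist p z) → r ≤ s → r ≤ t → r ≤ u → t ≤ t' →
      RR P D (geo p x s) (geo p y t) → RR P D (geo p y t') (geo p z u) →
      Gd P D p (r - (C' + C4)) x z := by
    intro p r x y z s t t' u hs ht ht' hu rs rt ru htt' h1 h2
    have hx := geo_spec p x
    have hy := geo_spec p y
    have hz := geo_spec p z
    have es := hx.dist_left hs.1 hs.2
    have et := hy.dist_left ht.1 ht.2
    have et' := hy.dist_left ht'.1 ht'.2
    have eu := hz.dist_left hu.1 hu.2
    have ett := hy.dist_eq ht.1 htt' ht'.2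
    have halt : AltC P (C3 + CE + H + D) r p (geo p y t) z (geo p y) (geo p z) := by
      have close : ∀ u2 ∈ Icc 0 (dist p z), dist p (geo p y t) + dist (geo p y t) (geo p z u2) ≤
          dist p (geo p z u2) + (2 * D + 2 * CE) →
          AltC P (C3 + CE + H + D) r p (geo p y t) z (geo p y) (geo p z) := by
        intro u2 hu2 h
        have eu2 := hz.dist_left hu2.1 hu2.2
        rcases hF3 p _ _ _ _ (hy.left ht.1 ht.2) (hz.left hu2.1 hu2.2) h with
          ⟨v, hv, hd⟩ | ⟨i, n1, ⟨s, hs, v, hv, hd, n2⟩, v', hv', hrt', n3⟩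
        · rw [eu2] at hv
          exact Or.inl ⟨v, ⟨hv.1, hv.2.trans hu2.2⟩, by linarith⟩
        · rw [eu2] at hv hv'
          exact Or.inr ⟨i, n1.mono (by linarith), ⟨s, hs, v, ⟨hv.1, hv.2.trans hu2.2⟩, by linarith,
            n2.mono (by linarith)⟩, v', ⟨hv'.1, hv'.2.trans hu2.2⟩, by linarith,
            n3.mono (by linarith)⟩
      rcases h2 with h2 | ⟨j, n1, n2⟩
      · refine close u hu ?_
        linarith [dist_triangle (geo p y t) (geo p y t') (geo p z u),
          dist_triangle_right p (geo p y t') (geo p z u)]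
      · obtain ⟨s2, hs2, u2, hu2, m1, m2, hd⟩ := hE p _ _ _ _ j (hy.left ht'.1 ht'.2)
          (hz.left hu.1 hu.2) n1 n2
        rw [et'] at hs2; rw [eu] at hu2
        have es2 := hy.dist_left hs2.1 (hs2.2.trans ht'.2)
        rcases le_total t s2 with h | h
        · refine close u2 ⟨hu2.1, hu2.2.trans hu.2⟩ ?_
          have := hy.dist_eq ht.1 h (hs2.2.trans ht'.2)
          linarith [dist_triangle (geo p y t) (geo p y s2) (geo p z u2),
            dist_triangle_right p (geo p y s2) (geo p z u2)]
        · right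
          refine ⟨j, ?_, ⟨s2, ⟨hs2.1, by linarith⟩, u2, ⟨hu2.1, hu2.2.trans hu.2⟩, by linarith,
            m1.mono (by linarith)⟩, u, hu, by linarith, n2.mono (by linarith)⟩
          have := hF _ _ _ j (hy.sub hs2.1 hs2.2 ht'.2) (m1.mono (le_max_right _ _))
            (n1.mono (le_max_left _ _)) (t - s2) (by linarith)
            (by rw [hy.dist_eq hs2.1 hs2.2 ht'.2]; linarith)
          simp only [add_sub_cancel] at this
          exact this.mono (by linarith)
    obtain ⟨s', hs', v, hv, g1, g2, g3⟩ := hW p _ _ z _ _ _ r (hx.left hs.1 hs.2) (hy.left ht.1 ht.2)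
      hz h1 (by linarith) (by linarith) halt
    rw [es] at hs'
    exact (hI4 p x z (r - C') s' v ⟨hs'.1, hs'.2.trans hs.2⟩ hv g1 g2 g3).mono (by linarith)
  refine ⟨C' + C4, by positivity, ?_⟩
  rintro p r x y z ⟨s, hs, t, ht, h1, h2, h3⟩ ⟨t', ht', u, hu, h4, h5, h6⟩
  rcases le_total t t' with h | h
  · exact main p r x y z s t t' u hs ht ht' hu h1 h2 h5 h h3 h6
  · exact (main p r z y x u t' t s hu ht' ht hs h5 h4 h1 h h6.symm h3.symm).symm

lemma fact_I {D : ℝ} (hI : ImpP P D) (E : ℝ) : ∃ C : ℝ, 0 ≤ C ∧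
    ∀ p r x x', dist x x' ≤ E → r ≤ dist p x → r ≤ dist p x' → Gd P D p (r - C) x x' := by
  obtain ⟨C, hC, h⟩ := hI E
  refine ⟨C, hC, fun p r x x' h1 h2 h3 => h p x x' r _ _ ⟨dist_nonneg, le_rfl⟩ ⟨dist_nonneg, le_rfl⟩
    h2 h3 (Or.inl ?_)⟩
  rw [(geo_spec p x).2.1, (geo_spec p x').2.1]; exact h1

end Yfacts3

section Yfacts4
variable {Y : Type v} [MetricSpace Y] {ι : Type w} {P : ι → Set Y} [GeodesicSpace Y]

lemma fact_GB (hY : DrutuRelHyp Y P) {D : ℝ} (hD : 0 ≤ D) : ∃ C₂ C' : ℝ, 0 ≤ C₂ ∧ 0 ≤ C' ∧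
    ∀ w z p q k, Near P 1 w p k → Near P 1 z q k → C₂ ≤ dist p q → ¬ Gd P D p C' w z := by
  obtain ⟨C1, hC1, hP1⟩ := fact_P1 hY 0 1
  obtain ⟨H', hH', hHm, hF⟩ := fact_F1 hY C1
  obtain ⟨C3, hC3, hP3⟩ := fact_P1 hY H' 1
  obtain ⟨C5, hC5, hE5⟩ := fact_E hY D
  obtain ⟨H2, hH2, hHm2, hF2⟩ := fact_F1 hY (max D C5)
  have mD : D ≤ H2 := (le_max_left _ _).trans hHm2
  have m5 : C5 ≤ H2 := (le_max_right _ _).trans hHm2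
  obtain ⟨B, hB, hA⟩ := fact_A hY (H2 + C3 + H')
  obtain ⟨C4, hC4, hP4⟩ := fact_P1' hY (2 * C1 + 1) (D + C5)
  refine ⟨C4 + 2 * (C5 + B + C1) + 2 * C1 + 2, H' + D + 2 + B, by positivity, by positivity, ?_⟩
  rintro w z p q k hw hz hpq ⟨s, hs, t, ht, h1, h2, h3⟩
  have gw := geo_spec p w
  have gz := geo_spec p z
  set a := geo p w s with ha_def
  set b := geo p z t with hb_def
  have ea : dist p a = s := gw.dist_left hs.1 hs.2
  have eb : dist p b = t := gz.dist_left ht.1 ht.2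
  have ea' : dist a w = dist p w - s := gw.dist_right hs.1 hs.2
  have eb' : dist b z = dist p z - t := gz.dist_right ht.1 ht.2
  have na : Near P 1 a p k := hw.between (F := 0)
    (by rw [dist_comm w a, dist_comm a p, dist_comm w p]; linarith) (by norm_num)
  have sa : ∀ C, nb P C k a → s ≤ C + 1 := fun C h => by
    have := na.le_of_nb h; rw [dist_comm] at this; linarith
  obtain ⟨m', hm', hdm⟩ := hP1 z p _ q k gz.rev hz (nb_of_mem le_rfl hw.1)
  obtain ⟨m, hm, hdm⟩ : ∃ m ∈ Icc 0 (dist p z), dist (geo p z m) q ≤ C1 :=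
    ⟨dist p z - m', ⟨by linarith [hm'.2, dist_comm z p], by linarith [hm'.1]⟩, hdm⟩
  have nq : nb P C1 k (geo p z m) := ⟨q, hz.1, hdm⟩
  rcases le_total t m with htm | htm
  · have nbb : nb P H' k b := hF _ _ _ k (gz.left hm.1 hm.2) (nb_of_mem hC1 hw.1) nq t ht.1
      (by rw [gz.dist_left hm.1 hm.2]; exact htm)
    rcases h3 with h3 | ⟨i, i1, i2⟩
    · have := sa _ (nbb.move ((dist_comm _ _).trans_le h3) le_rfl)
      linarith
    · by_cases hik : P i = P k
      · have := sa _ (i1.congr hik)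
        linarith
      · obtain ⟨ζ, hζ⟩ := GeodesicSpace.exists_geod a b
        obtain ⟨u, hu, hud⟩ := hP3 a b ζ p k hζ na nbb
        have := hF2 ζ a b i hζ (i1.mono (le_max_left _ _)) (i2.mono (le_max_left _ _)) u hu.1 hu.2
        have := hA i k p b hik (this.move hud (by linarith)) (nb_of_mem (by linarith) hw.1)
          (i2.mono (by linarith)) (nbb.mono (by linarith))
        linarith
  · have em := gz.dist_eq hm.1 htm ht.2
    have em' := gz.dist_right hm.1 hm.2
    have nbq : Near P (2 * C1 + 1) b q k := hz.between (F := 2 * C1)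
      (by linarith [dist_triangle_left b q (geo p z m), dist_triangle_right (geo p z m) z q,
          dist_comm b z]) (by linarith)
    have na' : Near P (2 * C1 + 1) a p k := na.mono (by linarith)
    rcases h3 with h3 | ⟨i, i1, i2⟩
    · have := hP4 a b p q k na' nbq (by linarith)
      linarith
    · by_cases hik : P i = P k
      · have := sa _ (i1.congr hik)
        linarith
      · obtain ⟨ζ, hζ⟩ := GeodesicSpace.exists_geod q a
        obtain ⟨ξ, hξ⟩ := GeodesicSpace.exists_geod q b
        obtain ⟨s1, hs1, s2, hs2, e1, e2, e3⟩ := hE5 q a b ζ ξ i hζ hξ i1 i2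
        obtain ⟨v', hv', hdv⟩ := hP1 a q _ p k hζ.rev na (nb_of_mem le_rfl hz.1)
        obtain ⟨v, hv, hdv⟩ : ∃ v ∈ Icc 0 (dist q a), dist (ζ v) p ≤ C1 :=
          ⟨dist q a - v', ⟨by linarith [hv'.2, dist_comm q a], by linarith [hv'.1]⟩, hdv⟩
        have ne' : Near P (2 * C1 + 1) (ξ s2) q k := nbq.between (F := 0)
          (by have f1 := hξ.dist_left hs2.1 hs2.2
              have f2 := hξ.dist_right hs2.1 hs2.2
              linarith [dist_comm q (ξ s2), dist_comm (ξ s2) b, dist_comm q b]) (by linarith)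
        have fv := hζ.dist_left hv.1 hv.2
        have fv' := hζ.dist_right hv.1 hv.2
        have fs := hζ.dist_right hs1.1 hs1.2
        rcases le_total s1 v with h | h
        · have k1 := hF _ _ _ k (hζ.left hv.1 hv.2) (nb_of_mem hC1 hz.1) ⟨p, hw.1, hdv⟩ s1 hs1.1
            (by rw [fv]; exact h)
          have k2 : nb P H2 i (ζ v) := by
            have := hF2 _ _ _ i (hζ.sub hs1.1 hs1.2 le_rfl) (e1.mono (le_max_right _ _))
              (by rw [hζ.2.1]; exact i1.mono (le_max_left _ _)) (v - s1) (by linarith)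
              (by rw [hζ.2.1, fs]; linarith [hv.2])
            simpa using this
          have k3 : nb P H' k (ζ v) := nb.mono ⟨p, hw.1, hdv⟩ hHm
          have := hA i k _ _ hik (e1.mono (by linarith)) (k1.mono (by linarith))
            (k2.mono (by linarith)) (k3.mono (by linarith))
          have g := ne'.2 p hw.1
          have g2 : dist (ξ s2) p ≤ C5 + B + C1 := by
            linarith [dist_triangle4 (ξ s2) (ζ s1) (ζ v) p, dist_comm (ξ s2) (ζ s1)]
          linarith [dist_triangle_left p q (ξ s2)]
        · have f1 := hζ.dist_eq hv.1 h hs1.2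
          have ne : Near P (2 * C1 + 1) (ζ s1) p k := na.between (F := 2 * C1)
            (by linarith [dist_triangle_left (ζ s1) p (ζ v), dist_triangle_right (ζ v) a p,
              dist_comm (ζ s1) a]) (by linarith)
          have := hP4 _ _ p q k ne ne' (by linarith)
          linarith

end Yfacts4

section Morse
variable {Y : Type v} [MetricSpace Y] {ι : Type w} {P : ι → Set Y} [GeodesicSpace Y]

lemma morse_seq (hY : DrutuRelHyp Y P) {D : ℝ} (hD : 0 ≤ D) (hImp : ImpP P D) (E : ℝ) (hE : 0 ≤ E) :
    ∃ κ : ℝ, 0 < κ ∧ ∀ T₀ : ℝ, ∃ K : ℝ, 0 ≤ K ∧ ∀ (y : ℕ → Y) (N : ℕ),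
    (∀ l, l < N → dist (y l) (y (l+1)) ≤ E) →
    (∀ i j, i ≤ j → j ≤ N → ∀ t, T₀ ≤ t → dist (y i) (y j) ≤ t → (j:ℝ) - i ≤ Real.exp (κ * t)) →
    ∀ (p : Y) (n : ℕ) (i j : ℕ) (r : ℝ), n = j - i → i ≤ j → j ≤ N → 0 ≤ r →
      ¬ Gd P D p r (y i) (y j) → ∃ l, i ≤ l ∧ l ≤ j ∧ dist p (y l) ≤ 2 * r + K := by
  obtain ⟨C, hC, hU⟩ := fact_U hY hD hImp
  obtain ⟨CI, hCI, hI⟩ := fact_I hImp E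
  have hl2 : 0 < Real.log 2 := Real.log_pos (by norm_num)
  refine ⟨Real.log 2 / (160 * (C + 1)), by positivity, fun T₀ => ?_⟩
  set κ := Real.log 2 / (160 * (C + 1)) with hκ
  have hκ0 : 0 < κ := by positivity
  refine ⟨|T₀| + 10 * (CI + 5 * C) + 1, by positivity, ?_⟩
  set K := |T₀| + 10 * (CI + 5 * C) + 1 with hK
  intro y N hstep hsub p n
  have RL : ∀ m i j : ℕ, i ≤ j → j ≤ N → j - i ≤ 2 ^ m → ∀ r, (∀ l, i ≤ l → l ≤ j → r ≤ dist p (y l)) →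
      Gd P D p (r - CI - m * C) (y i) (y j) := by
    intro m
    induction m with
    | zero =>
      intro i j hij hj hm r hr
      have : j = i ∨ j = i + 1 := by simp at hm; omega
      have hd : dist (y i) (y j) ≤ E := by
        rcases this with h | h
        · rw [h, dist_self]; exact hE
        · rw [h]; exact hstep i (by omega)
      exact (hI p r _ _ hd (hr i le_rfl hij) (hr j hij le_rfl)).mono (by simp)
    | succ m ih =>
      intro i j hij hj hm r hr
      rw [pow_succ] at hm
      have a := ih i ((i + j)/2) (by omega) (by omega) (by omega) r
        (fun l h1 h2 => hr l h1 (by omega))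
      have b := ih ((i+j)/2) j (by omega) (by omega) (by omega) r
        (fun l h1 h2 => hr l (by omega) h2)
      exact (hU p _ _ _ _ a b).mono (by push_cast; linarith)
  induction n using Nat.strong_induction_on with
  | _ n IH =>
  intro i j r hn hij hj hr hG
  by_contra hcon
  push Not at hcon
  obtain ⟨l0, hl0, hmin⟩ := Finset.exists_min_image (Finset.Icc i j) (fun l => dist p (y l))
    ⟨i, by simp [hij]⟩
  rw [Finset.mem_Icc] at hl0
  have hmin' : ∀ l, i ≤ l → l ≤ j → dist p (y l0) ≤ dist p (y l) := fun l h1 h2 =>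
    hmin l (Finset.mem_Icc.2 ⟨h1, h2⟩)
  set Dm := dist p (y l0) with hDm
  have hDmK : 2 * r + K < Dm := hcon l0 hl0.1 hl0.2
  have hT0 : T₀ ≤ |T₀| := le_abs_self _
  have hT1 : 0 ≤ |T₀| := abs_nonneg _
  have hDm0 : 0 ≤ Dm := dist_nonneg
  set S := (Finset.Icc i j).filter (fun l => dist p (y l) ≤ 10 * Dm) with hS
  have hSne : S.Nonempty := ⟨l0, by simp [hS, hl0]; linarith⟩
  set l₁ := S.min' hSne with hl₁
  set l₂ := S.max' hSne with hl₂
  have h1S : l₁ ∈ S := S.min'_mem _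
  have h2S : l₂ ∈ S := S.max'_mem _
  have h12 : l₁ ≤ l₂ := S.min'_le _ h2S
  have h1out : ∀ l, i ≤ l → l < l₁ → 10 * Dm < dist p (y l) := by
    intro l h1 h2
    by_contra h3
    have h1j : l₁ ≤ j := by simp [hS] at h1S; omega
    have : l ∈ S := by simp only [hS, Finset.mem_filter, Finset.mem_Icc]
                       exact ⟨⟨h1, by omega⟩, not_lt.1 h3⟩
    have := S.min'_le _ this
    omega
  have h2out : ∀ l, l₂ < l → l ≤ j → 10 * Dm < dist p (y l) := by
    intro l h1 h2
    by_contra h3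
    have h1j : i ≤ l₂ := by simp [hS] at h2S; omega
    have : l ∈ S := by simp only [hS, Finset.mem_filter, Finset.mem_Icc]
                       exact ⟨⟨by omega, h2⟩, not_lt.1 h3⟩
    have := S.le_max' _ this
    omega
  simp only [hS, Finset.mem_filter, Finset.mem_Icc] at h1S h2S
  obtain ⟨⟨h1i, h1j⟩, h1d⟩ := h1S
  obtain ⟨⟨h2i, h2j⟩, h2d⟩ := h2S
  -- middle
  have mid : Gd P D p (r + 2 * C) (y l₁) (y l₂) := by
    have hd : dist (y l₁) (y l₂) ≤ 20 * Dm := by linarith [dist_triangle_left (y l₁) (y l₂) p]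
    have h5 := hsub l₁ l₂ h12 (by omega) (20 * Dm) (by linarith) hd
    set m := ⌈κ * (20 * Dm) / Real.log 2⌉₊ with hm
    have hm1 : κ * (20 * Dm) / Real.log 2 ≤ m := Nat.le_ceil _
    have hm2 : (m : ℝ) < κ * (20 * Dm) / Real.log 2 + 1 := Nat.ceil_lt_add_one (by positivity)
    have h6 : Real.exp (κ * (20 * Dm)) ≤ (2:ℝ) ^ m := by
      rw [← Real.exp_log (show (0:ℝ) < 2 ^ m by positivity), Real.log_pow]
      apply Real.exp_le_exp.2
      rwa [div_le_iff₀ hl2] at hm1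
    have h7 : l₂ - l₁ ≤ 2 ^ m := by
      have : ((l₂ - l₁ : ℕ) : ℝ) ≤ ((2 ^ m : ℕ) : ℝ) := by
        rw [Nat.cast_sub h12]; push_cast; linarith
      exact_mod_cast this
    refine (RL m l₁ l₂ h12 (by omega) h7 Dm (fun l h1 h2 => hmin' l (by omega) (by omega))).mono ?_
    have h8 : κ * (20 * Dm) / Real.log 2 = Dm / (8 * (C + 1)) := by
      rw [hκ]; field_simp; ring
    have h9 : Dm / (8 * (C+1)) * C ≤ Dm / 8 := by
      rw [div_mul_eq_mul_div, div_le_div_iff₀ (by positivity) (by norm_num)]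
      nlinarith
    have h10 : (m:ℝ) * C ≤ Dm / 8 + C := by
      have : (m:ℝ) * C ≤ (Dm / (8 * (C + 1)) + 1) * C := by
        apply mul_le_mul_of_nonneg_right _ hC; rw [← h8]; exact hm2.le
      linarith
    linarith
  have left : Gd P D p (r + 2 * C) (y i) (y l₁) := by
    rcases Nat.eq_or_lt_of_le h1i with h | h
    · rw [← h]
      exact (hI p (2 * r + K) (y i) (y i) (by simpa using hE) (hcon i le_rfl hij).le
        (hcon i le_rfl hij).le).mono (by linarith)
    · have a : Gd P D p (r + 3 * C) (y i) (y (l₁ - 1)) := by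
        by_contra hg
        obtain ⟨l, q1, q2, q3⟩ := IH (l₁ - 1 - i) (by omega) i (l₁ - 1) (r + 3 * C) rfl (by omega)
          (by omega) (by linarith) hg
        have := h1out l q1 (by omega)
        linarith
      have b : Gd P D p (r + 3 * C) (y (l₁ - 1)) (y l₁) := by
        have := hstep (l₁ - 1) (by omega)
        rw [Nat.sub_add_cancel (by omega)] at this
        exact (hI p (2 * r + K) _ _ this (hcon _ (by omega) (by omega)).le
          (hcon _ (by omega) (by omega)).le).mono (by linarith)
      exact (hU p _ _ _ _ a b).mono (by linarith)
  have right : Gd P D p (r + 2 * C) (y l₂) (y j) := by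
    rcases Nat.eq_or_lt_of_le h2j with h | h
    · rw [h]
      exact (hI p (2 * r + K) (y j) (y j) (by simpa using hE) (hcon j hij le_rfl).le
        (hcon j hij le_rfl).le).mono (by linarith)
    · have a : Gd P D p (r + 3 * C) (y (l₂ + 1)) (y j) := by
        by_contra hg
        obtain ⟨l, q1, q2, q3⟩ := IH (j - (l₂ + 1)) (by omega) (l₂ + 1) j (r + 3 * C) rfl (by omega)
          (by omega) (by linarith) hg
        have := h2out l (by omega) q2
        linarith
      have b : Gd P D p (r + 3 * C) (y l₂) (y (l₂ + 1)) := by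
        exact (hI p (2 * r + K) _ _ (hstep l₂ (by omega)) (hcon _ (by omega) (by omega)).le
          (hcon _ (by omega) (by omega)).le).mono (by linarith)
      exact (hU p _ _ _ _ b a).mono (by linarith)
  have := hU p _ _ _ _ left mid
  exact hG ((hU p _ _ _ _ this (right.mono (by linarith))).mono (by linarith))

variable {X : Type u} [MetricSpace X] {f : X → Y}

lemma subexp_bound {Y : Type v} [MetricSpace Y] {f : X → Y}
    (hf : SubexponentiallyDistorted f) (κ : ℝ) (hκ : 0 < κ) : ∃ A : ℝ, 0 ≤ A ∧
    ∀ x y t, dist (f x) (f y) ≤ t → dist x y ≤ A + Real.exp (κ * t) := by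
  obtain ⟨-, τ, hτ, hle⟩ := hf
  obtain ⟨R, hR⟩ := (hτ.eventually_ge_atTop (1/κ)).exists_forall_of_atTop
  refine ⟨max R 2, by positivity, fun x y t ht => ?_⟩
  rcases le_total (dist x y) (max R 2) with h | h
  · linarith [Real.exp_pos (κ * t)]
  · have h1 := hR _ ((le_max_left _ _).trans h)
    have h2 : 2 ≤ dist x y := (le_max_right _ _).trans h
    have h3 : 0 < Real.log (dist x y) := Real.log_pos (by linarith)
    rw [div_le_div_iff₀ hκ h3] at h1
    have h4 := hle x y
    have h5 : Real.log (dist x y) ≤ κ * t := by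
      have : τ (dist x y) * κ ≤ t * κ := mul_le_mul_of_nonneg_right (h4.trans ht) hκ.le
      linarith
    have := (Real.log_le_iff_le_exp (by linarith)).1 h5
    have : 0 ≤ max R 2 := by positivity
    linarith

lemma fact_proper {Y : Type v} [MetricSpace Y] {f : X → Y}
    (hf : SubexponentiallyDistorted f) (A : ℝ) : ∃ R : ℝ, 0 ≤ R ∧
    ∀ x y, dist (f x) (f y) ≤ A → dist x y ≤ R := by
  obtain ⟨B, hB, h⟩ := subexp_bound hf 1 one_pos
  exact ⟨B + Real.exp (1 * A), by positivity, fun x y hxy => h x y A hxy⟩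

lemma fact_XM (hY : DrutuRelHyp Y P) {D : ℝ} (hD : 0 ≤ D) (hImp : ImpP P D)
    (hf : SubexponentiallyDistorted f) (c : ℝ) (hc : 0 ≤ c) : ∃ K : ℝ, 0 ≤ K ∧
    ∀ b γ, QGeodPath c 0 b γ → ∀ s t, 0 ≤ s → s ≤ t → t ≤ b → ∀ p r, 0 ≤ r →
    ¬ Gd P D p r (f (γ s)) (f (γ t)) → ∃ u, s ≤ u ∧ u ≤ t ∧ dist p (f (γ u)) ≤ 2 * r + K := by
  obtain ⟨Cf, hCf, hL⟩ := hf.1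
  obtain ⟨κ, hκ, h⟩ := morse_seq hY hD hImp (Cf * (1 + c) + Cf) (by positivity)
  obtain ⟨A, hA, hB⟩ := subexp_bound hf (κ/2) (by positivity)
  obtain ⟨K, hK, h⟩ := h (2 * (A + 1 + c) / κ)
  refine ⟨K, hK, fun b γ hγ s t hs hst htb p r hr hG => ?_⟩
  set N := ⌈t - s⌉₊ with hN
  have hN1 : t - s ≤ N := Nat.le_ceil _
  have hN2 : (N:ℝ) < t - s + 1 := Nat.ceil_lt_add_one (by linarith)
  have hmem : ∀ l : ℕ, min (s + l) t ∈ Icc 0 b := fun l =>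
    ⟨le_min (by positivity) (by linarith), (min_le_right _ _).trans htb⟩
  have main := h (fun l => f (γ (min (s + l) t))) N ?_ ?_ p N 0 N r rfl (Nat.zero_le _) le_rfl hr ?_
  · obtain ⟨l, -, h2, h3⟩ := main
    exact ⟨min (s + l) t, le_min (by linarith [Nat.cast_nonneg (α := ℝ) l]) hst, min_le_right _ _, h3⟩
  · intro l _
    have h1 := (hγ.2 _ (hmem l) _ (hmem (l+1))).2
    have h2 : |min (s + l) t - min (s + ((l+1 : ℕ):ℝ)) t| ≤ 1 := by
      have := abs_min_sub_min_le_max (s + (l:ℝ)) t (s + ((l+1:ℕ):ℝ)) t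
      refine this.trans ?_
      push_cast
      simp
    refine (hL _ _).trans ?_
    have := mul_le_mul_of_nonneg_left (h1.trans (add_le_add_left h2 c)) hCf.le
    linarith
  · intro i j hij hjN t' ht' hd
    have h1 := (hγ.2 _ (hmem i) _ (hmem j)).1
    have h2 := hB _ _ _ hd
    have hjN' : (j:ℝ) ≤ N := by exact_mod_cast hjN
    have hij' : (i:ℝ) ≤ j := by exact_mod_cast hij
    have h3 : (j:ℝ) - i - 1 ≤ |min (s + (i:ℝ)) t - min (s + (j:ℝ)) t| := by
      rw [abs_sub_comm]
      refine le_trans ?_ (le_abs_self _)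
      have a1 : s + j - 1 ≤ min (s + (j:ℝ)) t := le_min (by linarith) (by linarith)
      have a2 := min_le_left (s + (i:ℝ)) t
      linarith
    have h4 : (j:ℝ) - i ≤ A + 1 + c + Real.exp (κ / 2 * t') := by linarith
    have h5 : A + 1 + c + 1 ≤ Real.exp (κ / 2 * t') := by
      have := Real.add_one_le_exp (κ / 2 * t')
      rw [div_le_iff₀ hκ] at ht'
      linarith
    have h6 : Real.exp (κ * t') = Real.exp (κ / 2 * t') * Real.exp (κ / 2 * t') := by
      rw [← Real.exp_add]; congr 1; ring
    rw [h6]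
    nlinarith
  · have e1 : min (s + ((0:ℕ):ℝ)) t = s := by simp [hst]
    have e2 : min (s + (N:ℝ)) t = t := min_eq_right (by linarith)
    simp only [e1, e2]
    exact hG

lemma fact_CM (hY : DrutuRelHyp Y P) {D : ℝ} (hD : 0 ≤ D) (hImp : ImpP P D)
    (hf : SubexponentiallyDistorted f) : ∃ C₂ : ℝ, 0 ≤ C₂ ∧ ∀ c : ℝ, 0 ≤ c → ∃ K : ℝ, 0 ≤ K ∧
    ∀ b γ, QGeodPath c 0 b γ → ∀ s t, 0 ≤ s → s ≤ t → t ≤ b → ∀ p q k,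
    Near P 1 (f (γ s)) p k → Near P 1 (f (γ t)) q k → C₂ ≤ dist p q →
    (∃ u, s ≤ u ∧ u ≤ t ∧ dist p (f (γ u)) ≤ K) ∧ (∃ u, s ≤ u ∧ u ≤ t ∧ dist q (f (γ u)) ≤ K) := by
  obtain ⟨C₂, C', hC₂, hC', h⟩ := fact_GB hY hD
  refine ⟨C₂, hC₂, fun c hc => ?_⟩
  obtain ⟨K, hK, hM⟩ := fact_XM hY hD hImp hf c hc
  refine ⟨2 * C' + K, by positivity, ?_⟩
  intro b γ hγ s t hs hst ht p q k hp hq hpq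
  refine ⟨hM b γ hγ s t hs hst ht p C' hC' (h _ _ _ _ _ hp hq hpq),
    hM b γ hγ s t hs hst ht q C' hC' fun hg => h _ _ _ _ _ hq hp (by rwa [dist_comm]) hg.symm⟩

end Morse

section Xfacts
variable {X : Type u} {Y : Type v} [MetricSpace X] [MetricSpace Y] {ι : Type w} {P : ι → Set Y}
  [GeodesicSpace Y] {f : X → Y}

lemma fact_XQC (hY : DrutuRelHyp Y P) (hf : SubexponentiallyDistorted f) (c : ℝ) (hc : 0 ≤ c) :
    ∃ K₀ : ℝ, 0 ≤ K₀ ∧ ∀ H : ℝ, ∃ R : ℝ, 0 ≤ R ∧ ∀ b γ, QGeodPath c 0 b γ → ∀ s t, 0 ≤ s → s ≤ t →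
    t ≤ b → ∀ k, nb P H k (f (γ s)) → nb P H k (f (γ t)) → ∀ q, s + R ≤ q → q ≤ t - R →
    nb P K₀ k (f (γ q)) := by
  obtain ⟨D, hD, hImp⟩ := fact_Imp hY
  obtain ⟨C₂, hC₂, hCM⟩ := fact_CM hY hD hImp hf
  obtain ⟨K, hK, hCM⟩ := hCM c hc
  obtain ⟨R1, hR1, hp1⟩ := fact_proper hf (2 * K)
  obtain ⟨Cf, hCf, hL⟩ := hf.1
  refine ⟨K + (Cf * (R1 + 2 * c) + Cf), by positivity, fun H => ?_⟩
  obtain ⟨R2, hR2, hp2⟩ := fact_proper hf (2 * |H| + 2 + 2 * C₂ + K)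
  have hH := le_abs_self H
  have hH0 := abs_nonneg H
  refine ⟨R2 + c + 1, by positivity, ?_⟩
  intro b γ hγ s t hs hst ht k ns nt q hq1 hq2
  have hmem : ∀ u, s ≤ u → u ≤ t → u ∈ Icc 0 b := fun u h1 h2 => ⟨by linarith, by linarith⟩
  have lower : ∀ u v, s ≤ u → u ≤ v → v ≤ t → v - u - c ≤ dist (γ u) (γ v) := by
    intro u v h1 h2 h3
    have := (hγ.2 u (hmem u h1 (by linarith)) v (hmem v (by linarith) h3)).1
    rw [abs_sub_comm, abs_of_nonneg (by linarith)] at this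
    exact this
  obtain ⟨p, hp⟩ := exists_near (f (γ q)) k ns.nonempty
  obtain ⟨ps, hps⟩ := exists_near (f (γ s)) k ns.nonempty
  obtain ⟨pt, hpt⟩ := exists_near (f (γ t)) k ns.nonempty
  have ds := hps.le_of_nb ns
  have dt := hpt.le_of_nb nt
  rcases le_or_gt C₂ (dist ps p) with h1 | h1
  · obtain ⟨-, u1, hu1, hu1', e1⟩ := hCM b γ hγ s q hs (by linarith) (by linarith) ps p k hps hp h1
    rcases le_or_gt C₂ (dist p pt) with h2 | h2
    · obtain ⟨⟨u2, hu2, hu2', e2⟩, -⟩ := hCM b γ hγ q t (by linarith) (by linarith) ht p pt k hp hpt h2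
      have h3 := hp1 (γ u1) (γ u2) (by linarith [dist_triangle_left (f (γ u1)) (f (γ u2)) p])
      have h4 := lower u1 u2 hu1 (by linarith) hu2'
      have h5 := (hγ.2 u1 (hmem u1 hu1 (by linarith)) q (hmem q (by linarith) (by linarith))).2
      rw [abs_sub_comm, abs_of_nonneg (by linarith)] at h5
      have h6 := hL (γ u1) (γ q)
      have h7 : Cf * dist (γ u1) (γ q) ≤ Cf * (R1 + 2 * c) :=
        mul_le_mul_of_nonneg_left (by linarith) hCf.le
      refine ⟨p, hp.1, ?_⟩
      linarith [dist_triangle_left (f (γ q)) p (f (γ u1)), dist_comm p (f (γ u1))]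
    · have h3 := hp2 (γ u1) (γ t) (by
        linarith [dist_triangle4 (f (γ u1)) p pt (f (γ t)),
          dist_comm (f (γ u1)) p, dist_comm pt (f (γ t))])
      have h4 := lower u1 t hu1 (by linarith) le_rfl
      linarith
  · rcases le_or_gt C₂ (dist p pt) with h2 | h2
    · obtain ⟨⟨u2, hu2, hu2', e2⟩, -⟩ := hCM b γ hγ q t (by linarith) (by linarith) ht p pt k hp hpt h2
      have h3 := hp2 (γ s) (γ u2) (by linarith [dist_triangle4 (f (γ s)) ps p (f (γ u2))])
      have h4 := lower s u2 le_rfl (by linarith) hu2'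
      linarith
    · have h3 := hp2 (γ s) (γ t) (by
        linarith [dist_triangle4 (f (γ s)) ps pt (f (γ t)),
          dist_triangle ps p pt, dist_comm pt (f (γ t))])
      have h4 := lower s t le_rfl hst le_rfl
      linarith

variable [GeodesicSpace X]

lemma fact_near (hY : DrutuRelHyp Y P) (hf : SubexponentiallyDistorted f) :
    ∃ K₀ : ℝ, 0 ≤ K₀ ∧ ∀ H : ℝ, ∃ R : ℝ, 0 ≤ R ∧ ∀ k a a', nb P H k (f a) → nb P H k (f a') →
      2 * R ≤ dist a a' → ∃ x, nb P K₀ k (f x) ∧ dist a x ≤ R := by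
  obtain ⟨K₀, hK₀, h⟩ := fact_XQC hY hf 0 le_rfl
  refine ⟨K₀, hK₀, fun H => ?_⟩
  obtain ⟨R, hR, h⟩ := h H
  refine ⟨R, hR, fun k a a' h1 h2 h3 => ?_⟩
  obtain ⟨γ, hγ⟩ := GeodesicSpace.exists_geod a a'
  refine ⟨γ R, h _ γ (hγ.qgeod le_rfl) 0 (dist a a') le_rfl dist_nonneg le_rfl k
    (by rw [hγ.1]; exact h1) (by rw [hγ.2.1]; exact h2) R (by linarith) (by linarith), ?_⟩
  rw [hγ.dist_left hR (by linarith)]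

lemma nb_pull {Cf : ℝ} (hCf : 0 < Cf) (hL : CoarseLipschitzWith Cf f) {ρ σ : ℝ} (hρ : 0 ≤ ρ)
    (hσ : 0 ≤ σ) {k : ι} {x : X} (h : x ∈ cthickening σ (f ⁻¹' cthickening ρ (P k))) :
    nb P (ρ + 1 + (Cf * (σ + 1) + Cf)) k (f x) := by
  obtain ⟨x', hx', hd⟩ := nb_of_cth (P := fun i => f ⁻¹' cthickening ρ (P i)) (k := k) hσ h
  have h1 := nb_of_cth hρ hx'
  refine h1.move (E := Cf * (σ + 1) + Cf) ((hL _ _).trans ?_) le_rfl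
  have := mul_le_mul_of_nonneg_left hd hCf.le
  rw [dist_comm]; linarith

lemma fact_a (hY : DrutuRelHyp Y P) (hf : SubexponentiallyDistorted f) (ρ : ℝ) (hρ : 0 ≤ ρ) :
    ∀ K : ℝ, 0 < K → ∃ B : ℝ, 0 ≤ B ∧ ∀ i j : ι,
      f ⁻¹' cthickening ρ (P i) ≠ f ⁻¹' cthickening ρ (P j) →
    Metric.ediam (Metric.cthickening K (f ⁻¹' cthickening ρ (P i)) ∩
      Metric.cthickening K (f ⁻¹' cthickening ρ (P j))) ≤ ENNReal.ofReal B := by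
  intro K hK
  obtain ⟨Cf, hCf, hL⟩ := hf.1
  obtain ⟨B, hB, hA⟩ := fact_A hY (ρ + 1 + (Cf * (K + 1) + Cf))
  obtain ⟨R, hR, hp⟩ := fact_proper hf B
  refine ⟨R, hR, fun i j hij => Metric.ediam_le fun x hx y hy => ?_⟩
  rw [edist_dist]
  refine ENNReal.ofReal_le_ofReal (hp x y (hA i j _ _ (fun h => hij (by rw [h])) ?_ ?_ ?_ ?_))
  · exact nb_pull hCf hL hρ hK.le hx.1
  · exact nb_pull hCf hL hρ hK.le hx.2
  · exact nb_pull hCf hL hρ hK.le hy.1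
  · exact nb_pull hCf hL hρ hK.le hy.2

lemma fact_b (hY : DrutuRelHyp Y P) (hf : SubexponentiallyDistorted f) : ∃ ρ₁ : ℝ, 0 ≤ ρ₁ ∧
    ∀ ρ, ρ₁ ≤ ρ → ∃ ε : ℝ, ε ∈ Set.Ioo (0:ℝ) (1/2) ∧ ∃ M : ℝ, 0 ≤ M ∧
    ∀ i : ι, ∀ x y : X, x ∈ Metric.cthickening (ε * dist x y) (f ⁻¹' cthickening ρ (P i)) →
      y ∈ Metric.cthickening (ε * dist x y) (f ⁻¹' cthickening ρ (P i)) →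
      ∀ γ : ℝ → X, IsGeodesicFrom γ x y →
        ∃ t ∈ Set.Icc (0:ℝ) (dist x y), γ t ∈ Metric.cthickening M (f ⁻¹' cthickening ρ (P i)) := by
  obtain ⟨D, hD, hImp⟩ := fact_Imp hY
  obtain ⟨C₂, hC₂, hCM⟩ := fact_CM hY hD hImp hf
  obtain ⟨K, hK, hCM⟩ := hCM 0 le_rfl
  refine ⟨K, hK, fun ρ hρ => ⟨1/8, by norm_num, ?_⟩⟩
  have hρ0 : 0 ≤ ρ := hK.trans hρ
  obtain ⟨R, hR, hp⟩ := fact_proper hf (2 * (K + C₂ + ρ + 2) + C₂)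
  refine ⟨2 * (R + 2), by positivity, ?_⟩
  intro i x y hx hy γ hγ
  rcases le_total (dist x y) (2 * (R + 2)) with hd | hd
  · refine ⟨0, ⟨le_rfl, dist_nonneg⟩, ?_⟩
    rw [hγ.1]
    exact cthickening_mono (by linarith [dist_nonneg (x := x) (y := y)]) _ hx
  have hd0 : 0 ≤ 1 / 8 * dist x y := by positivity
  have foot : ∀ x : X, ∀ e, 0 ≤ e → x ∈ cthickening e (f ⁻¹' cthickening ρ (P i)) → ∀ p,
      Near P 1 (f x) p i → ∃ u, dist x u ≤ e + 1 ∧ dist p (f u) ≤ K + C₂ + ρ + 2 := by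
    intro x e he hx p hpx
    obtain ⟨x', hx', hdx⟩ := nb_of_cth (P := fun i => f ⁻¹' cthickening ρ (P i)) (k := i) he hx
    have n1 := nb_of_cth hρ0 hx'
    obtain ⟨p', hp'⟩ := exists_near (f x') i n1.nonempty
    have d1 := hp'.le_of_nb n1
    rcases le_or_gt C₂ (dist p p') with h | h
    · obtain ⟨η, hη⟩ := GeodesicSpace.exists_geod x x'
      obtain ⟨⟨u, hu, hu', hdu⟩, -⟩ := hCM _ η (hη.qgeod le_rfl) 0 (dist x x') le_rfl dist_nonneg le_rfl
        p p' i (by rw [hη.1]; exact hpx) (by rw [hη.2.1]; exact hp') h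
      exact ⟨η u, by rw [hη.dist_left hu hu']; linarith, by linarith⟩
    · exact ⟨x', hdx, by linarith [dist_triangle p p' (f x'), dist_comm p' (f x')]⟩
  have nx := (nb_of_cth (P := fun i => f ⁻¹' cthickening ρ (P i)) (k := i) hd0 hx)
  obtain ⟨x', hx', -⟩ := nx
  have hne := (nb_of_cth hρ0 hx').nonempty
  obtain ⟨p, hpx⟩ := exists_near (f x) i hne
  obtain ⟨q, hqy⟩ := exists_near (f y) i hne
  rcases le_or_gt C₂ (dist p q) with h | h
  · obtain ⟨⟨u, hu, hu', hdu⟩, -⟩ := hCM _ γ (hγ.qgeod le_rfl) 0 (dist x y) le_rfl dist_nonneg le_rfl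
        p q i (by rw [hγ.1]; exact hpx) (by rw [hγ.2.1]; exact hqy) h
    refine ⟨u, ⟨hu, hu'⟩, self_subset_cthickening _ ?_⟩
    exact cth_of_nb ⟨p, hpx.1, by rw [dist_comm]; linarith⟩
  · exfalso
    obtain ⟨u1, h1, h2⟩ := foot x _ hd0 hx p hpx
    obtain ⟨u2, h3, h4⟩ := foot y _ hd0 hy q hqy
    have := hp u1 u2 (by linarith [dist_triangle4 (f u1) p q (f u2), dist_comm (f u1) p])
    linarith [dist_triangle4 x u1 u2 y, dist_comm y u2]

lemma fact_entry (hY : DrutuRelHyp Y P) (hf : SubexponentiallyDistorted f) : ∃ ρ₂ : ℝ, 0 ≤ ρ₂ ∧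
    ∀ c, 0 ≤ c → ∃ σ₀ : ℝ, 0 ≤ σ₀ ∧ ∀ ρ, ρ₂ ≤ ρ → ∀ σ, σ₀ ≤ σ → ∃ C : ℝ, 0 ≤ C ∧
    ∀ b γ k t₀ p, QGeodPath c 0 b γ → t₀ ∈ Icc 0 b →
      γ t₀ ∈ cthickening σ (f ⁻¹' cthickening ρ (P k)) →
      (∀ t ∈ Icc 0 b, γ t ∈ cthickening σ (f ⁻¹' cthickening ρ (P k)) → t₀ ≤ t) →
      Near P 1 (f (γ 0)) p k → dist p (f (γ t₀)) ≤ C := by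
  obtain ⟨D, hD, hImp⟩ := fact_Imp hY
  obtain ⟨C₂, hC₂, hCM⟩ := fact_CM hY hD hImp hf
  obtain ⟨ρ₂, hρ₂, hN⟩ := fact_near hY hf
  obtain ⟨Cf, hCf, hL⟩ := hf.1
  refine ⟨ρ₂, hρ₂, fun c hc => ?_⟩
  obtain ⟨K, hK, hCM⟩ := hCM c hc
  obtain ⟨K₀, hK₀, hQ⟩ := fact_XQC hY hf c hc
  obtain ⟨R2, hR2, hN⟩ := hN K₀
  refine ⟨R2, hR2, fun ρ hρ σ hσ => ?_⟩
  have hρ0 : 0 ≤ ρ := hρ₂.trans hρ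
  have hσ0 : 0 ≤ σ := hR2.trans hσ
  set h := ρ + 1 + (Cf * (σ + 1) + Cf) with hh
  have hh0 : 0 ≤ h := by positivity
  obtain ⟨R1, hR1, hQ⟩ := hQ (max K h)
  set L := 2 * R1 + 2 * R2 + c with hLd
  have hL0 : 0 ≤ L := by positivity
  have hL1 : 0 ≤ Cf * (L + c) + Cf := by positivity
  refine ⟨C₂ + h + 1 + K + (Cf * (L + c) + Cf), by positivity, ?_⟩
  intro b γ k t₀ p hγ ht₀ hmem hfirst hp
  have n0 : nb P h k (f (γ t₀)) := nb_pull hCf hL hρ0 hσ0 hmem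
  obtain ⟨p', hp'⟩ := exists_near (f (γ t₀)) k n0.nonempty
  have d1 := hp'.le_of_nb n0
  rcases le_or_gt C₂ (dist p p') with hc2 | hc2
  · obtain ⟨⟨u, hu, hu', hdu⟩, -⟩ := hCM b γ hγ 0 t₀ le_rfl ht₀.1 ht₀.2 p p' k hp hp' hc2
    have nu : nb P K k (f (γ u)) := ⟨p, hp.1, by rwa [dist_comm]⟩
    have hlen : t₀ - u ≤ L := by
      by_contra hcon
      push Not at hcon
      have i1 := hQ b γ hγ u t₀ hu hu' ht₀.2 k (nu.mono (le_max_left _ _)) (n0.mono (le_max_right _ _))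
        (u + R1) le_rfl (by linarith)
      have i2 := hQ b γ hγ u t₀ hu hu' ht₀.2 k (nu.mono (le_max_left _ _)) (n0.mono (le_max_right _ _))
        (t₀ - R1) (by linarith) le_rfl
      have hm1 : u + R1 ∈ Icc 0 b := ⟨by linarith, by linarith [ht₀.2]⟩
      have hm2 : t₀ - R1 ∈ Icc 0 b := ⟨by linarith, by linarith [ht₀.2]⟩
      have i3 := (hγ.2 _ hm1 _ hm2).1
      rw [abs_sub_comm, abs_of_nonneg (by linarith)] at i3
      obtain ⟨x, nx, dx⟩ := hN k _ _ i1 i2 (by linarith)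
      have := hfirst _ hm1 (mem_cthickening_of_dist_le _ x σ _ (cth_of_nb (nx.mono hρ))
        (dx.trans hσ))
      linarith
    have i4 := (hγ.2 u ⟨hu, by linarith [ht₀.2]⟩ t₀ ht₀).2
    rw [abs_sub_comm, abs_of_nonneg (by linarith)] at i4
    have i5 := hL (γ u) (γ t₀)
    have i6 : Cf * dist (γ u) (γ t₀) ≤ Cf * (L + c) := mul_le_mul_of_nonneg_left (by linarith) hCf.le
    linarith [dist_triangle p (f (γ u)) (f (γ t₀))]
  · linarith [dist_triangle p p' (f (γ t₀)), dist_comm p' (f (γ t₀))]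

end Xfacts

section Tri
variable {X : Type u} {Y : Type v} [MetricSpace X] [MetricSpace Y] {ι : Type w} {P : ι → Set Y}
  [GeodesicSpace Y] {f : X → Y}

def Btw (E : ℝ) (w x y : Y) : Prop := dist x w + dist w y ≤ dist x y + E

lemma Btw.symm {E : ℝ} {w x y : Y} (h : Btw E w x y) : Btw E w y x := by
  unfold Btw at *
  linarith [dist_comm x w, dist_comm w y, dist_comm x y]

lemma Btw.mono {E E' : ℝ} {w x y : Y} (h : Btw E w x y) (hE : E ≤ E') : Btw E' w x y := by
  unfold Btw at *
  linarith

/-- two points on geodesics from `w` are far apart if `w` is between the endpoints. -/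
lemma Btw.far {E : ℝ} {w x y m n : Y} (h : Btw E w x y) (hm : dist w m + dist m x = dist w x)
    (hn : dist w n + dist n y = dist w y) : dist w m + dist w n - E ≤ dist m n := by
  unfold Btw at h
  linarith [dist_triangle4 x m n y, dist_comm x w, dist_comm x m]

lemma fact_A2 (hY : DrutuRelHyp Y P) {D : ℝ} (hD : 0 ≤ D) (E C₂ : ℝ) (hE : 0 ≤ E) (hC₂ : 0 ≤ C₂) :
    ∃ A : ℝ, 0 ≤ A ∧ ∀ w x y z, Btw E w x y → Btw E w y z → Btw E w x z → Gd P D w A x y →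
    ∃ k, (P k).Nonempty ∧ ∀ px py pz, Near P 1 x px k → Near P 1 y py k → Near P 1 z pz k →
      C₂ ≤ dist px py ∧ C₂ ≤ dist py pz ∧ C₂ ≤ dist px pz := by
  obtain ⟨C1, hC1, hP1⟩ := fact_P1 hY D 1
  obtain ⟨C7, hC7, hP7⟩ := fact_P1 hY D (1 + C₂ + (E + 2 * C1))
  refine ⟨D + E + C₂ + 2 * C1 + C7 + 1, by positivity, ?_⟩
  set A := D + E + C₂ + 2 * C1 + C7 + 1 with hA
  have mid : ∀ w x s px k, s ∈ Icc 0 (dist w x) → A ≤ s → nb P D k (geo w x s) →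
      Near P 1 x px k → ∃ m, dist w m + dist m x = dist w x ∧ A ≤ dist w m ∧ dist m px ≤ C1 := by
    intro w x s px k hs hAs hnb hx
    have hg := geo_spec w x
    have h1 := (hg.sub hs.1 hs.2 le_rfl).rev
    rw [hg.2.1] at h1
    obtain ⟨v, hv, hd⟩ := hP1 _ _ _ px k h1 hx hnb
    have e1 := hg.dist_right hs.1 hs.2
    rw [dist_comm, e1] at hv
    simp only [e1] at hd
    have h2 := hg.dist_left (s := s + (dist w x - s - v)) (by linarith [hv.2, hs.1]) (by linarith [hv.1])
    have h3 := hg.dist_right (s := s + (dist w x - s - v)) (by linarith [hv.2, hs.1]) (by linarith [hv.1])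
    exact ⟨_, by linarith, by linarith [hv.2], hd⟩
  have key : ∀ w x y z s t px py pz k, Btw E w x y → Btw E w y z →
      s ∈ Icc 0 (dist w x) → A ≤ s → nb P D k (geo w x s) →
      t ∈ Icc 0 (dist w y) → A ≤ t → nb P D k (geo w y t) →
      Near P 1 x px k → Near P 1 y py k → Near P 1 z pz k → C₂ ≤ dist py pz := by
    intro w x y z s t px py pz k bxy byz hs hAs hns ht hAt hnt hx hy hz
    by_contra hcon
    push Not at hcon
    obtain ⟨m, hm1, hm2, hm3⟩ := mid w y t py k ht hAt hnt hy
    have n1 : Near P (1 + C₂) z py k := ⟨hy.1, fun p' hp' => by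
      linarith [hz.2 p' hp', dist_triangle z pz py, dist_comm py pz]⟩
    have n2 : Near P (1 + C₂ + (E + 2 * C1)) w py k := by
      refine n1.between (F := E + 2 * C1) ?_ le_rfl
      unfold Btw at byz
      linarith [dist_triangle w m py, dist_triangle4 z py m y, dist_comm z w, dist_comm w y,
        dist_comm y z, dist_comm m py]
    have hg := geo_spec w x
    obtain ⟨v, hv, hd⟩ := hP7 _ _ _ py k (hg.left hs.1 hs.2) n2 hns
    rw [hg.dist_left hs.1 hs.2] at hv
    have h2 := hg.dist_left hv.1 (hv.2.trans hs.2)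
    have h3 := hg.dist_right hv.1 (hv.2.trans hs.2)
    have h4 := bxy.far (m := geo w x v) (n := m) (by linarith) hm1
    linarith [dist_triangle_right (geo w x v) m py, hv.1]
  intro w x y z bxy byz bxz hG
  obtain ⟨s, hs, t, ht, hAs, hAt, hR⟩ := hG
  have hgx := geo_spec w x
  have hgy := geo_spec w y
  have a1 := hgx.dist_left hs.1 hs.2
  have a2 := hgx.dist_right hs.1 hs.2
  have a3 := hgy.dist_left ht.1 ht.2
  have a4 := hgy.dist_right ht.1 ht.2
  have hfar := bxy.far (m := geo w x s) (n := geo w y t) (by linarith) (by linarith)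
  rcases hR with hR | ⟨k, hns, hnt⟩
  · linarith
  refine ⟨k, hns.nonempty, fun px py pz hx hy hz => ⟨?_, ?_, ?_⟩⟩
  · obtain ⟨m, hm1, hm2, hm3⟩ := mid w x s px k hs hAs hns hx
    obtain ⟨n, hn1, hn2, hn3⟩ := mid w y t py k ht hAt hnt hy
    have := bxy.far hm1 hn1
    linarith [dist_triangle4 m px py n, dist_comm n py]
  · exact key w x y z s t px py pz k bxy byz hs hAs hns ht hAt hnt hx hy hz
  · exact key w y x z t s py px pz k bxy.symm bxz ht hAt hnt hs hAs hns hy hx hz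

lemma Btw.move {E C E' : ℝ} {w w' x y : Y} (h : Btw E w x y) (hC : dist w w' ≤ C)
    (hE : E + 2 * C ≤ E') : Btw E' w' x y := by
  unfold Btw at *
  linarith [dist_triangle x w w', dist_triangle_left w' y w]

lemma btw_geo {γ : ℝ → Y} {x y : Y} (h : IsGeodesicFrom γ x y) {s : ℝ} (hs : s ∈ Icc 0 (dist x y)) :
    Btw 0 (γ s) x y := by
  unfold Btw
  linarith [h.dist_left hs.1 hs.2, h.dist_right hs.1 hs.2]

lemma fact_cen (hY : DrutuRelHyp Y P) (C₂ : ℝ) (hC₂ : 0 ≤ C₂) : ∃ E : ℝ, 0 ≤ E ∧ ∀ x y z,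
    (∃ w, Btw E w x y ∧ Btw E w y z ∧ Btw E w x z) ∨
    ∃ k, (P k).Nonempty ∧ ∀ px py pz, Near P 1 x px k → Near P 1 y py k → Near P 1 z pz k →
      C₂ ≤ dist px py ∧ C₂ ≤ dist py pz ∧ C₂ ≤ dist px pz := by
  obtain ⟨D₀, hD₀, hT⟩ := fact_T hY
  obtain ⟨C1, hC1, hP1⟩ := fact_P1 hY D₀ 1
  have L : ∀ (a b : Y) γ s p k, IsGeodesicFrom γ a b → s ∈ Icc 0 (dist a b) → nb P D₀ k (γ s) →
      Near P 1 a p k → Btw (2 * C1) p a b := by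
    intro a b γ s p k hγ hs hn hp
    obtain ⟨v, hv, hd⟩ := hP1 _ _ _ p k (hγ.left hs.1 hs.2) hp hn
    rw [hγ.dist_left hs.1 hs.2] at hv
    exact (btw_geo hγ ⟨hv.1, hv.2.trans hs.2⟩).move hd (by linarith)
  have R : ∀ (a b : Y) γ s p k, IsGeodesicFrom γ a b → s ∈ Icc 0 (dist a b) → nb P D₀ k (γ s) →
      Near P 1 b p k → Btw (2 * C1) p a b := by
    intro a b γ s p k hγ hs hn hp
    refine (L b a _ (dist a b - s) p k hγ.rev ⟨by linarith [hs.2], ?_⟩ ?_ hp).symm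
    · rw [dist_comm b a]; linarith [hs.1]
    · simpa using hn
  refine ⟨2 * D₀ + (2 * C1 + 2 * C₂), by positivity, fun x y z => ?_⟩
  rcases hT x y z _ _ _ (geo_spec x y) (geo_spec x z) (geo_spec y z) with
    ⟨s, hs, t, ht, u, hu, h1, h2, h3⟩ |
    ⟨k, s, hs, s', hs', t, ht, t', ht', u, hu, u', hu', ⟨n1, n2, n3, n4, n5, n6⟩, -⟩
  · left
    refine ⟨geo x y s, (btw_geo (geo_spec x y) hs).mono (by positivity), ?_, ?_⟩
    · exact (btw_geo (geo_spec y z) hu).move ((dist_comm _ _).trans_le h2) (by linarith)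
    · exact (btw_geo (geo_spec x z) ht).move ((dist_comm _ _).trans_le h1) (by linarith)
  · by_cases hc : ∀ px py pz, Near P 1 x px k → Near P 1 y py k → Near P 1 z pz k →
      C₂ ≤ dist px py ∧ C₂ ≤ dist py pz ∧ C₂ ≤ dist px pz
    · exact Or.inr ⟨k, n1.nonempty, hc⟩
    left
    push Not at hc
    obtain ⟨px, py, pz, hx, hy, hz, hc⟩ := hc
    have x1 := L _ _ _ _ _ _ (geo_spec x y) hs n1 hx
    have x2 := L _ _ _ _ _ _ (geo_spec x z) ht n3 hx
    have y1 := R _ _ _ _ _ _ (geo_spec x y) hs n1 hy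
    have y2 := L _ _ _ _ _ _ (geo_spec y z) hu n5 hy
    have z1 := R _ _ _ _ _ _ (geo_spec x z) ht n3 hz
    have z2 := R _ _ _ _ _ _ (geo_spec y z) hu n5 hz
    rcases lt_or_ge (dist px py) C₂ with h | h
    · exact ⟨px, x1.mono (by linarith), y2.move ((dist_comm _ _).trans_le h.le) (by linarith),
        x2.mono (by linarith)⟩
    rcases lt_or_ge (dist py pz) C₂ with h' | h'
    · exact ⟨py, y1.mono (by linarith), y2.mono (by linarith),
        z1.move ((dist_comm _ _).trans_le h'.le) (by linarith)⟩
    · have h'' := hc h h'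
      exact ⟨px, x1.mono (by linarith), z2.move ((dist_comm _ _).trans_le h''.le) (by linarith),
        x2.mono (by linarith)⟩

lemma fact_tri (hY : DrutuRelHyp Y P) (hf : SubexponentiallyDistorted f) (c : ℝ) (hc : 0 ≤ c) :
    ∃ K δ : ℝ, 0 ≤ K ∧ 0 ≤ δ ∧ ∀ (b₁ b₂ b₃ : ℝ) (γ₁ γ₂ γ₃ : ℝ → X),
      0 ≤ b₁ → 0 ≤ b₂ → 0 ≤ b₃ →
      QGeodPath c 0 b₁ γ₁ → QGeodPath c 0 b₂ γ₂ → QGeodPath c 0 b₃ γ₃ →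
      γ₁ b₁ = γ₂ 0 → γ₂ b₂ = γ₃ 0 → γ₃ b₃ = γ₁ 0 →
      (∃ w : X, (∃ t ∈ Set.Icc (0:ℝ) b₁, dist w (γ₁ t) ≤ δ) ∧
        (∃ t ∈ Set.Icc (0:ℝ) b₂, dist w (γ₂ t) ≤ δ) ∧
        (∃ t ∈ Set.Icc (0:ℝ) b₃, dist w (γ₃ t) ≤ δ)) ∨
      ∃ k, (∃ t ∈ Set.Icc (0:ℝ) b₁, nb P K k (f (γ₁ t))) ∧
        (∃ t ∈ Set.Icc (0:ℝ) b₂, nb P K k (f (γ₂ t))) ∧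
        (∃ t ∈ Set.Icc (0:ℝ) b₃, nb P K k (f (γ₃ t))) := by
  obtain ⟨D, hD, hImp⟩ := fact_Imp hY
  obtain ⟨C₂, hC₂, hCM⟩ := fact_CM hY hD hImp hf
  obtain ⟨K, hK, hCM⟩ := hCM c hc
  obtain ⟨E, hE, hcen⟩ := fact_cen hY C₂ hC₂
  obtain ⟨A, hA, hA2⟩ := fact_A2 hY hD E C₂ hE hC₂
  obtain ⟨K', hK', hXM⟩ := fact_XM hY hD hImp hf c hc
  obtain ⟨δ, hδ, hp⟩ := fact_proper hf (2 * (2 * A + K'))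
  refine ⟨K, δ, hK, hδ, ?_⟩
  intro b₁ b₂ b₃ γ₁ γ₂ γ₃ hb₁ hb₂ hb₃ q₁ q₂ q₃ e₁ e₂ e₃
  have fin : (∃ k, (P k).Nonempty ∧ ∀ px py pz, Near P 1 (f (γ₁ 0)) px k →
      Near P 1 (f (γ₂ 0)) py k → Near P 1 (f (γ₃ 0)) pz k →
      C₂ ≤ dist px py ∧ C₂ ≤ dist py pz ∧ C₂ ≤ dist px pz) →
      ∃ k, (∃ t ∈ Set.Icc (0:ℝ) b₁, nb P K k (f (γ₁ t))) ∧
        (∃ t ∈ Set.Icc (0:ℝ) b₂, nb P K k (f (γ₂ t))) ∧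
        (∃ t ∈ Set.Icc (0:ℝ) b₃, nb P K k (f (γ₃ t))) := by
    rintro ⟨k, hne, h⟩
    obtain ⟨px, hx⟩ := exists_near (f (γ₁ 0)) k hne
    obtain ⟨py, hy⟩ := exists_near (f (γ₂ 0)) k hne
    obtain ⟨pz, hz⟩ := exists_near (f (γ₃ 0)) k hne
    obtain ⟨h1, h2, h3⟩ := h px py pz hx hy hz
    refine ⟨k, ?_, ?_, ?_⟩
    · obtain ⟨⟨u, hu, hu', hd⟩, -⟩ := hCM b₁ γ₁ q₁ 0 b₁ le_rfl hb₁ le_rfl px py k hx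
        (by rw [e₁]; exact hy) h1
      exact ⟨u, ⟨hu, hu'⟩, px, hx.1, by rw [dist_comm]; exact hd⟩
    · obtain ⟨⟨u, hu, hu', hd⟩, -⟩ := hCM b₂ γ₂ q₂ 0 b₂ le_rfl hb₂ le_rfl py pz k hy
        (by rw [e₂]; exact hz) h2
      exact ⟨u, ⟨hu, hu'⟩, py, hy.1, by rw [dist_comm]; exact hd⟩
    · obtain ⟨⟨u, hu, hu', hd⟩, -⟩ := hCM b₃ γ₃ q₃ 0 b₃ le_rfl hb₃ le_rfl pz px k hz
        (by rw [e₃]; exact hx) (by rw [dist_comm]; exact h3)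
      exact ⟨u, ⟨hu, hu'⟩, pz, hz.1, by rw [dist_comm]; exact hd⟩
  rcases hcen (f (γ₁ 0)) (f (γ₂ 0)) (f (γ₃ 0)) with ⟨w, bxy, byz, bxz⟩ | h
  swap
  · exact Or.inr (fin h)
  by_cases g1 : Gd P D w A (f (γ₁ 0)) (f (γ₂ 0))
  · exact Or.inr (fin (hA2 w _ _ _ bxy byz bxz g1))
  by_cases g2 : Gd P D w A (f (γ₂ 0)) (f (γ₃ 0))
  · obtain ⟨k, hne, h⟩ := hA2 w _ _ _ byz bxz.symm bxy.symm g2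
    refine Or.inr (fin ⟨k, hne, fun px py pz hx hy hz => ?_⟩)
    obtain ⟨h1, h2, h3⟩ := h py pz px hy hz hx
    exact ⟨by rw [dist_comm]; exact h3, h1, by rw [dist_comm]; exact h2⟩
  by_cases g3 : Gd P D w A (f (γ₃ 0)) (f (γ₁ 0))
  · obtain ⟨k, hne, h⟩ := hA2 w _ _ _ bxz.symm bxy byz.symm g3
    refine Or.inr (fin ⟨k, hne, fun px py pz hx hy hz => ?_⟩)
    obtain ⟨h1, h2, h3⟩ := h pz px py hz hx hy
    exact ⟨h2, by rw [dist_comm]; exact h3, by rw [dist_comm]; exact h1⟩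
  left
  obtain ⟨u1, hu1, hu1', d1⟩ := hXM b₁ γ₁ q₁ 0 b₁ le_rfl hb₁ le_rfl w A hA (by rw [e₁]; exact g1)
  obtain ⟨u2, hu2, hu2', d2⟩ := hXM b₂ γ₂ q₂ 0 b₂ le_rfl hb₂ le_rfl w A hA (by rw [e₂]; exact g2)
  obtain ⟨u3, hu3, hu3', d3⟩ := hXM b₃ γ₃ q₃ 0 b₃ le_rfl hb₃ le_rfl w A hA (by rw [e₃]; exact g3)
  refine ⟨γ₁ u1, ⟨u1, ⟨hu1, hu1'⟩, by simpa using hδ⟩, ⟨u2, ⟨hu2, hu2'⟩, hp _ _ ?_⟩,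
    ⟨u3, ⟨hu3, hu3'⟩, hp _ _ ?_⟩⟩
  · linarith [dist_triangle_left (f (γ₁ u1)) (f (γ₂ u2)) w]
  · linarith [dist_triangle_left (f (γ₁ u1)) (f (γ₃ u3)) w]

lemma QGeodPath.rev {c b : ℝ} {γ : ℝ → X} (h : QGeodPath c 0 b γ) :
    QGeodPath c 0 b (fun t => γ (b - t)) := by
  have hm : ∀ t ∈ Icc 0 b, b - t ∈ Icc 0 b := fun t ht => ⟨by linarith [ht.2], by linarith [ht.1]⟩
  refine ⟨h.1.comp (by fun_prop) hm, fun s hs t ht => ?_⟩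
  have := h.2 (b - s) (hm s hs) (b - t) (hm t ht)
  rwa [show b - s - (b - t) = t - s by ring, abs_sub_comm t s] at this

variable [GeodesicSpace X]

lemma fact_c (hY : DrutuRelHyp Y P) (hf : SubexponentiallyDistorted f) : ∃ ρ₃ : ℝ, 0 ≤ ρ₃ ∧
    ∀ ρ, ρ₃ ≤ ρ → ∀ c : ℝ, 0 ≤ c → ∃ σ δ : ℝ, 0 ≤ σ ∧ 0 ≤ δ ∧
    ∀ (x y z : X) (b₁ b₂ b₃ : ℝ) (γ₁ γ₂ γ₃ : ℝ → X),
      0 ≤ b₁ → 0 ≤ b₂ → 0 ≤ b₃ →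
      QGeodPath c 0 b₁ γ₁ → QGeodPath c 0 b₂ γ₂ → QGeodPath c 0 b₃ γ₃ →
      γ₁ 0 = x → γ₁ b₁ = y → γ₂ 0 = y → γ₂ b₂ = z → γ₃ 0 = z → γ₃ b₃ = x →
      (∃ w : X, (∃ t ∈ Set.Icc (0:ℝ) b₁, dist w (γ₁ t) ≤ δ) ∧
        (∃ t ∈ Set.Icc (0:ℝ) b₂, dist w (γ₂ t) ≤ δ) ∧
        (∃ t ∈ Set.Icc (0:ℝ) b₃, dist w (γ₃ t) ≤ δ)) ∨
      (∃ i : ι,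
        (∃ t ∈ Set.Icc (0:ℝ) b₁, γ₁ t ∈ Metric.cthickening σ (f ⁻¹' cthickening ρ (P i))) ∧
        (∃ t ∈ Set.Icc (0:ℝ) b₂, γ₂ t ∈ Metric.cthickening σ (f ⁻¹' cthickening ρ (P i))) ∧
        (∃ t ∈ Set.Icc (0:ℝ) b₃, γ₃ t ∈ Metric.cthickening σ (f ⁻¹' cthickening ρ (P i))) ∧
        dist (γ₁ (exitTime γ₁ 0 b₁ (Metric.cthickening σ (f ⁻¹' cthickening ρ (P i)))))
             (γ₂ (entryTime γ₂ 0 b₂ (Metric.cthickening σ (f ⁻¹' cthickening ρ (P i))))) ≤ δ ∧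
        dist (γ₂ (exitTime γ₂ 0 b₂ (Metric.cthickening σ (f ⁻¹' cthickening ρ (P i)))))
             (γ₃ (entryTime γ₃ 0 b₃ (Metric.cthickening σ (f ⁻¹' cthickening ρ (P i))))) ≤ δ ∧
        dist (γ₃ (exitTime γ₃ 0 b₃ (Metric.cthickening σ (f ⁻¹' cthickening ρ (P i)))))
             (γ₁ (entryTime γ₁ 0 b₁ (Metric.cthickening σ (f ⁻¹' cthickening ρ (P i))))) ≤ δ) := by
  obtain ⟨K₀, hK₀, hnear⟩ := fact_near hY hf
  obtain ⟨ρ₂, hρ₂, hent⟩ := fact_entry hY hf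
  refine ⟨max K₀ ρ₂, by positivity, fun ρ hρ c hc => ?_⟩
  have hρK : K₀ ≤ ρ := (le_max_left _ _).trans hρ
  have hρ2 : ρ₂ ≤ ρ := (le_max_right _ _).trans hρ
  obtain ⟨σ₀, hσ₀, hent⟩ := hent c hc
  obtain ⟨K, δ₁, hK, hδ₁, htri⟩ := fact_tri hY hf c hc
  obtain ⟨R, hR, hnear⟩ := hnear K
  obtain ⟨C, hC, hent⟩ := hent ρ hρ2 (max σ₀ (3 * R)) (le_max_left _ _)
  obtain ⟨δ₂, hδ₂, hp⟩ := fact_proper hf (2 * C)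
  set σ := max σ₀ (3 * R) with hσ
  have hσR : 3 * R ≤ σ := le_max_right _ _
  have hσ0 : 0 ≤ σ := by positivity
  refine ⟨σ, δ₁ + δ₂ + 2 * R, hσ0, by positivity, ?_⟩
  -- exit of one side close to the entrance of the next
  have ee : ∀ (b b' : ℝ) (γ γ' : ℝ → X) (k : ι), 0 ≤ b → 0 ≤ b' → QGeodPath c 0 b γ →
      QGeodPath c 0 b' γ' → γ b = γ' 0 →
      (∃ t ∈ Set.Icc (0:ℝ) b, γ t ∈ Metric.cthickening σ (f ⁻¹' cthickening ρ (P k))) →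
      (∃ t ∈ Set.Icc (0:ℝ) b', γ' t ∈ Metric.cthickening σ (f ⁻¹' cthickening ρ (P k))) →
      dist (γ (exitTime γ 0 b (Metric.cthickening σ (f ⁻¹' cthickening ρ (P k)))))
        (γ' (entryTime γ' 0 b' (Metric.cthickening σ (f ⁻¹' cthickening ρ (P k))))) ≤ δ₂ := by
    intro b b' γ γ' k hb hb' q q' e h h'
    have hcl : IsClosed (Metric.cthickening σ (f ⁻¹' cthickening ρ (P k))) := isClosed_cthickening
    obtain ⟨a1, a2, a3⟩ := exit_spec q.1 hcl h
    obtain ⟨c1, c2, c3⟩ := entry_spec q'.1 hcl h'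
    have hne : (P k).Nonempty := by
      obtain ⟨x', hx', -⟩ := nb_of_cth (P := fun i => f ⁻¹' cthickening ρ (P i)) (k := k) hσ0 a2
      exact (nb_of_cth (by linarith : 0 ≤ ρ) hx').nonempty
    obtain ⟨p, hpn⟩ := exists_near (f (γ b)) k hne
    have i1 := hent b' γ' k _ p q' c1 c2 c3 (by rw [← e]; exact hpn)
    have i2 := hent b (fun t => γ (b - t)) k
      (b - exitTime γ 0 b (Metric.cthickening σ (f ⁻¹' cthickening ρ (P k)))) p q.rev
      ⟨by linarith [a1.2], by linarith [a1.1]⟩ (by simpa using a2)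
      (fun t ht h => by linarith [a3 (b - t) ⟨by linarith [ht.2], by linarith [ht.1]⟩ h])
      (by simpa using hpn)
    simp only [sub_sub_cancel] at i2
    refine hp _ _ ((dist_triangle_left _ _ p).trans (by linarith))
  intro x y z b₁ b₂ b₃ γ₁ γ₂ γ₃ hb₁ hb₂ hb₃ q₁ q₂ q₃ e1 e2 e3 e4 e5 e6
  have E1 : γ₁ b₁ = γ₂ 0 := e2.trans e3.symm
  have E2 : γ₂ b₂ = γ₃ 0 := e4.trans e5.symm
  have E3 : γ₃ b₃ = γ₁ 0 := e6.trans e1.symm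
  have concl : ∀ k, (∃ t ∈ Set.Icc (0:ℝ) b₁, γ₁ t ∈ Metric.cthickening σ (f ⁻¹' cthickening ρ (P k))) →
        (∃ t ∈ Set.Icc (0:ℝ) b₂, γ₂ t ∈ Metric.cthickening σ (f ⁻¹' cthickening ρ (P k))) →
        (∃ t ∈ Set.Icc (0:ℝ) b₃, γ₃ t ∈ Metric.cthickening σ (f ⁻¹' cthickening ρ (P k))) → _ :=
    fun k h1 h2 h3 => (⟨h1, h2, h3,
      (ee _ _ _ _ k hb₁ hb₂ q₁ q₂ E1 h1 h2).trans (by linarith : δ₂ ≤ δ₁ + δ₂ + 2 * R),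
      (ee _ _ _ _ k hb₂ hb₃ q₂ q₃ E2 h2 h3).trans (by linarith : δ₂ ≤ δ₁ + δ₂ + 2 * R),
      (ee _ _ _ _ k hb₃ hb₁ q₃ q₁ E3 h3 h1).trans (by linarith : δ₂ ≤ δ₁ + δ₂ + 2 * R)⟩ :
      (_ ∧ _ ∧ _ ∧ _ ∧ _ ∧ _))
  rcases htri b₁ b₂ b₃ γ₁ γ₂ γ₃ hb₁ hb₂ hb₃ q₁ q₂ q₃ E1 E2 E3 with
    ⟨w, ⟨t1, m1, d1⟩, ⟨t2, m2, d2⟩, ⟨t3, m3, d3⟩⟩ |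
    ⟨k, ⟨t1, m1, n1⟩, ⟨t2, m2, n2⟩, ⟨t3, m3, n3⟩⟩
  · exact Or.inl ⟨w, ⟨t1, m1, by linarith⟩, ⟨t2, m2, by linarith⟩, ⟨t3, m3, by linarith⟩⟩
  have close : ∀ a x : X, nb P K₀ k (f x) → dist a x ≤ 3 * R →
      a ∈ Metric.cthickening σ (f ⁻¹' cthickening ρ (P k)) := fun a x h1 h2 =>
    mem_cthickening_of_dist_le a x σ _ (cth_of_nb (h1.mono hρK)) (h2.trans hσR)
  have far : ∀ a a' a'' : X, nb P K k (f a) → nb P K k (f a') → nb P K k (f a'') →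
      2 * R ≤ dist a a' → a ∈ Metric.cthickening σ (f ⁻¹' cthickening ρ (P k)) ∧
      a' ∈ Metric.cthickening σ (f ⁻¹' cthickening ρ (P k)) ∧
      a'' ∈ Metric.cthickening σ (f ⁻¹' cthickening ρ (P k)) := by
    intro a a' a'' h h' h'' hd
    obtain ⟨x, nx, dx⟩ := hnear k a a' h h' hd
    obtain ⟨x', nx', dx'⟩ := hnear k a' a h' h (by rw [dist_comm]; exact hd)
    refine ⟨close a x nx (by linarith), close a' x' nx' (by linarith), ?_⟩
    rcases le_or_gt (2 * R) (dist a'' a) with hh | hh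
    · obtain ⟨x'', nx'', dx''⟩ := hnear k a'' a h'' h hh
      exact close a'' x'' nx'' (by linarith)
    · exact close a'' x nx (by linarith [dist_triangle a'' a x])
  rcases le_or_gt (2 * R) (dist (γ₁ t1) (γ₂ t2)) with h12 | h12
  · obtain ⟨f1, f2, f3⟩ := far _ _ _ n1 n2 n3 h12
    exact Or.inr ⟨k, concl k ⟨t1, m1, f1⟩ ⟨t2, m2, f2⟩ ⟨t3, m3, f3⟩⟩
  rcases le_or_gt (2 * R) (dist (γ₁ t1) (γ₃ t3)) with h13 | h13
  · obtain ⟨f1, f3, f2⟩ := far _ _ _ n1 n3 n2 h13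
    exact Or.inr ⟨k, concl k ⟨t1, m1, f1⟩ ⟨t2, m2, f2⟩ ⟨t3, m3, f3⟩⟩
  · exact Or.inl ⟨γ₁ t1, ⟨t1, m1, by rw [dist_self]; positivity⟩, ⟨t2, m2, by linarith⟩,
      ⟨t3, m3, by linarith⟩⟩

end Tri

theorem subexp_X
    {X : Type u} {Y : Type v} [MetricSpace X] [MetricSpace Y]
    [GeodesicSpace X] [GeodesicSpace Y] {ι : Type w} (P : ι → Set Y)
    (hY : DrutuRelHyp Y P) (f : X → Y) (hf : SubexponentiallyDistorted f) :
    ∃ ρ₀ : ℝ, 0 ≤ ρ₀ ∧ ∀ ρ : ℝ, ρ₀ ≤ ρ →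
      DrutuRelHyp X (fun i => f ⁻¹' Metric.cthickening ρ (P i)) := by
  obtain ⟨ρ₁, hρ₁, hb⟩ := fact_b hY hf
  obtain ⟨ρ₃, hρ₃, hc⟩ := fact_c hY hf
  refine ⟨max ρ₁ ρ₃, by positivity, fun ρ hρ => ⟨?_, ?_, ?_⟩⟩
  · exact fact_a hY hf ρ (by linarith [le_max_left ρ₁ ρ₃])
  · exact hb ρ (by linarith [le_max_left ρ₁ ρ₃])
  · exact hc ρ (by linarith [le_max_right ρ₁ ρ₃])


/-- **Theorem 4.1.** If `f : X → Y` is a subexponentially distorted embedding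
and `Y` is hyperbolic relative to the collection of subsets `P i`, then there
is `ρ₀ ≥ 0` such that for all `ρ ≥ ρ₀` the space `X` is hyperbolic relative to
the collection `{f⁻¹(N_ρ(P i))}`. -/
theorem subexp_distorted_pullback_relHyp
    {X : Type u} {Y : Type v} [MetricSpace X] [MetricSpace Y]
    [GeodesicSpace X] [GeodesicSpace Y] {ι : Type w} (P : ι → Set Y)
    (hY : DrutuRelHyp Y P) (f : X → Y) (hf : SubexponentiallyDistorted f) :
    ∃ ρ₀ : ℝ, 0 ≤ ρ₀ ∧ ∀ ρ : ℝ, ρ₀ ≤ ρ →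
      DrutuRelHyp X (fun i => f ⁻¹' Metric.cthickening ρ (P i)) := by
  exact subexp_X P hY f hf


end RelHypPaper
end
end

section
/- There is a universal constant K with the following property. Let Γ be a connected graph with vertex set V, all edges of length one, and path metric d_Γ, and let ℋ(Γ) be the combinatorial horoball over Γ with its path metric d_ℋ. Then for all (x,m),(y,n)∈V×ℕ, |d_ℋ((x,m),(y,n)) − (2·log(d_Γ(x,y)·e^{−max{m,n}}+1) + |m−n|)| ≤ K. -/
noncomputable section

open Classical

namespace RelHypPaper

/-- the weight of a potential edge of the combinatorial horoball `ℋ(Γ)` over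
the graph `Γ`: vertical edges `((v,n),(v,n+1))` have length `1`, horizontal
edges `((v,n),(v',n))` with `v ~ v'` have length `exp (-n)`, and all other
pairs are non-adjacent (weight `∞`). -/
def horoWeight {V : Type*} (Γ : SimpleGraph V) (p q : V × ℕ) : ENNReal :=
  if p.1 = q.1 ∧ (p.2 + 1 = q.2 ∨ q.2 + 1 = p.2) then 1
  else if p.2 = q.2 ∧ Γ.Adj p.1 q.1 then ENNReal.ofReal (Real.exp (-(p.2 : ℝ)))
  else ⊤

/-- the path metric of the combinatorial horoball `ℋ(Γ)`: the infimum of the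
total weight over all finite chains of edges joining the two vertices. -/
def horoDist {V : Type*} (Γ : SimpleGraph V) (p q : V × ℕ) : ENNReal :=
  ⨅ (n : ℕ) (c : ℕ → V × ℕ) (_ : c 0 = p) (_ : c n = q),
    ∑ i ∈ Finset.range n, horoWeight Γ (c i) (c (i + 1))

universe u

theorem horoDist_self {V : Type*} (Γ : SimpleGraph V) (p : V × ℕ) : horoDist Γ p p = 0 := by
  apply le_antisymm _ zero_le
  unfold horoDist
  refine iInf_le_of_le 0 (iInf_le_of_le (fun _ => p) (iInf_le_of_le rfl (iInf_le_of_le rfl ?_)))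
  simp

theorem horoDist_step {V : Type*} (Γ : SimpleGraph V) (p q r : V × ℕ) :
    horoDist Γ p r ≤ horoDist Γ p q + horoWeight Γ q r := by
  conv_rhs => unfold horoDist
  simp only [ENNReal.iInf_add]
  refine le_iInf fun n => le_iInf fun c => le_iInf fun h0 => le_iInf fun hn => ?_
  unfold horoDist
  refine iInf_le_of_le (n+1) (iInf_le_of_le (fun i => if i ≤ n then c i else r)
    (iInf_le_of_le (by simp [h0]) (iInf_le_of_le (by simp) ?_)))
  rw [Finset.sum_range_succ]
  apply add_le_add
  · apply Finset.sum_le_sum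
    intro i hi
    have hi := Finset.mem_range.1 hi
    have h1 : i ≤ n := by omega
    have h2 : i + 1 ≤ n := by omega
    simp [h1, h2]
  · simp [hn]

theorem horoDist_up {V : Type*} (Γ : SimpleGraph V) (p : V × ℕ) (v : V) (n k : ℕ) :
    horoDist Γ p (v, n + k) ≤ horoDist Γ p (v, n) + k := by
  induction k with
  | zero => simp
  | succ k ih =>
    refine (horoDist_step Γ p (v, n+k) _).trans ?_
    have : horoWeight Γ (v, n+k) (v, n+(k+1)) = 1 := by
      unfold horoWeight
      rw [if_pos]
      refine ⟨rfl, Or.inl ?_⟩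
      simp; omega
    rw [this]
    push_cast
    rw [← add_assoc]
    gcongr

theorem horoDist_down {V : Type*} (Γ : SimpleGraph V) (p : V × ℕ) (v : V) (n k : ℕ) :
    horoDist Γ p (v, n) ≤ horoDist Γ p (v, n + k) + k := by
  induction k with
  | zero => simp
  | succ k ih =>
    refine ih.trans ?_
    have h := horoDist_step Γ p (v, n+(k+1)) (v, n+k)
    have : horoWeight Γ (v, n+(k+1)) (v, n+k) = 1 := by
      unfold horoWeight
      rw [if_pos]
      refine ⟨rfl, Or.inr ?_⟩
      simp; omega
    rw [this] at h
    push_cast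
    rw [add_comm (k : ENNReal) 1, ← add_assoc]
    gcongr

theorem horoDist_across {V : Type*} (Γ : SimpleGraph V) (p : V × ℕ) (h : ℕ) {x y : V}
    (w : Γ.Walk x y) :
    horoDist Γ p (y, h) ≤
      horoDist Γ p (x, h) + w.length * ENNReal.ofReal (Real.exp (-(h : ℝ))) := by
  induction w with
  | nil => simp
  | @cons a b c hab w ih =>
    refine ih.trans ?_
    have hs := horoDist_step Γ p (a, h) (b, h)
    have : horoWeight Γ (a, h) (b, h) = ENNReal.ofReal (Real.exp (-(h : ℝ))) := by
      unfold horoWeight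
      rw [if_neg (by simp), if_pos ⟨rfl, hab⟩]
    rw [this] at hs
    rw [SimpleGraph.Walk.length_cons]
    push_cast
    rw [add_mul, one_mul, add_comm (_ * _) (ENNReal.ofReal _), ← add_assoc]
    gcongr

theorem horoDist_le {V : Type*} (Γ : SimpleGraph V) (hΓ : Γ.Connected) (x y : V) (m n h : ℕ)
    (hm : m ≤ h) (hn : n ≤ h) :
    horoDist Γ (x, m) (y, n) ≤ ENNReal.ofReal (((h : ℝ) - m) + (h - n) +
      (Γ.dist x y : ℝ) * Real.exp (-(h : ℝ))) := by
  obtain ⟨a, rfl⟩ := Nat.exists_eq_add_of_le hm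
  obtain ⟨b, hb⟩ := Nat.exists_eq_add_of_le hn
  obtain ⟨w, hw⟩ := hΓ.exists_walk_length_eq_dist x y
  have h1 := horoDist_up Γ (x, m) x m a
  have h2 := horoDist_across Γ (x, m) (m + a) w
  have h3 := horoDist_down Γ (x, m) y n b
  rw [horoDist_self, zero_add] at h1
  rw [← hb] at h3
  have hb' : (((m + a : ℕ) : ℝ) - n) = b := by rw [hb]; push_cast; ring
  have ha' : (((m + a : ℕ) : ℝ) - m) = a := by push_cast; ring
  rw [hb', ha', ENNReal.ofReal_add (by positivity) (by positivity),
    ENNReal.ofReal_add (by positivity) (by positivity), ENNReal.ofReal_mul (by positivity),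
    ENNReal.ofReal_natCast, ENNReal.ofReal_natCast, ENNReal.ofReal_natCast, ← hw, add_right_comm]
  refine h3.trans ?_
  gcongr
  refine h2.trans ?_
  gcongr

theorem chain_lower {V : Type*} (Γ : SimpleGraph V) (hΓ : Γ.Connected) (c : ℕ → V × ℕ) (N : ℕ) :
    ∃ h : ℕ, (c 0).2 ≤ h ∧ (c N).2 ≤ h ∧
      ENNReal.ofReal (((h : ℝ) - (c 0).2) + (h - (c N).2) +
        (Γ.dist (c 0).1 (c N).1 : ℝ) * Real.exp (-(h : ℝ))) ≤
      ∑ i ∈ Finset.range N, horoWeight Γ (c i) (c (i + 1)) := by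
  induction N with
  | zero => exact ⟨(c 0).2, le_rfl, le_rfl, by simp⟩
  | succ N ih =>
    obtain ⟨h, h0, hN, hs⟩ := ih
    rw [Finset.sum_range_succ]
    set S := ∑ i ∈ Finset.range N, horoWeight Γ (c i) (c (i + 1))
    generalize c 0 = p at *
    generalize c N = q at *
    generalize c (N+1) = r at *
    have h0' : (p.2 : ℝ) ≤ h := by exact_mod_cast h0
    have hN' : (q.2 : ℝ) ≤ h := by exact_mod_cast hN
    have hnn : 0 ≤ ((h : ℝ) - p.2) + (h - q.2) +
        (Γ.dist p.1 q.1 : ℝ) * Real.exp (-(h : ℝ)) := by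
      have : 0 ≤ (Γ.dist p.1 q.1 : ℝ) * Real.exp (-(h : ℝ)) := by positivity
      linarith
    unfold horoWeight
    split_ifs with H1 H2
    · obtain ⟨e, H1⟩ := H1
      by_cases hr : r.2 ≤ h
      · refine ⟨h, h0, hr, le_trans ?_ (add_le_add_left hs 1)⟩
        rw [← ENNReal.ofReal_one, ← ENNReal.ofReal_add hnn zero_le_one]
        apply ENNReal.ofReal_le_ofReal
        rw [e]
        have : (q.2 : ℝ) ≤ r.2 + 1 := by
          have : q.2 ≤ r.2 + 1 := by omega
          exact_mod_cast this
        linarith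
      · have hq : q.2 = h := by omega
        have hr' : r.2 = h + 1 := by omega
        refine ⟨h + 1, by omega, by omega, le_trans ?_ (add_le_add_left hs 1)⟩
        rw [← ENNReal.ofReal_one, ← ENNReal.ofReal_add hnn zero_le_one]
        apply ENNReal.ofReal_le_ofReal
        rw [e, hq, hr']
        have : (Γ.dist p.1 r.1 : ℝ) * Real.exp (-((h + 1 : ℕ) : ℝ)) ≤
            (Γ.dist p.1 r.1 : ℝ) * Real.exp (-(h : ℝ)) := by
          gcongr
          omega
        push_cast at *
        linarith
    · obtain ⟨e, H2⟩ := H2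
      refine ⟨h, h0, by omega, le_trans ?_ (add_le_add_left hs _)⟩
      rw [← ENNReal.ofReal_add hnn (Real.exp_pos _).le]
      apply ENNReal.ofReal_le_ofReal
      rw [← e]
      have h1 : Real.exp (-(h : ℝ)) ≤ Real.exp (-(q.2 : ℝ)) := by gcongr
      have h2 : (Γ.dist p.1 r.1 : ℝ) ≤ Γ.dist p.1 q.1 + 1 := by
        have := hΓ.dist_triangle (u := p.1) (v := q.1) (w := r.1)
        rw [SimpleGraph.dist_eq_one_iff_adj.2 H2] at this
        exact_mod_cast this
      have h3 := mul_le_mul_of_nonneg_right h2 (Real.exp_pos (-(h : ℝ))).le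
      linarith
    · exact ⟨max h r.2, by omega, by omega, by simp⟩

theorem real_lower (s t : ℝ) (hs : 0 ≤ s) (ht : 0 ≤ t) :
    2 * Real.log (s + 1) - 1 ≤ 2 * t + s * Real.exp (-t) := by
  have h1 : Real.log (s + 1) - t - Real.log 2 = Real.log ((s + 1) * Real.exp (-t) / 2) := by
    rw [Real.log_div (by positivity) (by norm_num), Real.log_mul (by positivity) (by positivity),
      Real.log_exp]
    ring
  have h2 := Real.log_le_sub_one_of_pos (x := (s + 1) * Real.exp (-t) / 2) (by positivity)
  have h3 : Real.exp (-t) ≤ 1 := by rw [Real.exp_le_one_iff]; linarith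
  have h4 : Real.log 2 ≤ 1 := by
    have := Real.log_le_sub_one_of_pos (x := 2) (by norm_num)
    linarith
  rw [← h1] at h2
  linarith

/-- **Lemma 3.2.** There is a universal constant `K` such that for every
connected graph `Γ` (with unit edge lengths and path metric `Γ.dist`), the
path metric `d_ℋ` on the combinatorial horoball `ℋ(Γ)` satisfies
`|d_ℋ((x,m),(y,n)) - (2 log(d_Γ(x,y) e^{-max(m,n)} + 1) + |m-n|)| ≤ K`. -/
theorem combinatorial_horoball_distance_estimate :
    ∃ K : ℝ, 0 < K ∧
      ∀ (V : Type u) (Γ : SimpleGraph V), Γ.Connected →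
        ∀ (x y : V) (m n : ℕ),
          |(horoDist Γ (x, m) (y, n)).toReal -
              (2 * Real.log ((Γ.dist x y : ℝ) * Real.exp (-(max (m : ℝ) (n : ℝ))) + 1) +
                |(m : ℝ) - (n : ℝ)|)| ≤ K := by
  refine ⟨3, by norm_num, ?_⟩
  intro V Γ hΓ x y m n
  have hkey : |(m : ℝ) - n| = 2 * max (m : ℝ) n - m - n := by
    rcases le_total (m : ℝ) n with h | h
    · rw [max_eq_right h, abs_of_nonpos (by linarith)]; ring
    · rw [max_eq_left h, abs_of_nonneg (by linarith)]; ring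
  rw [hkey]
  have hM : max (m : ℝ) n = ((max m n : ℕ) : ℝ) := by push_cast; rfl
  rw [hM]
  have hmM : m ≤ max m n := le_max_left _ _
  have hnM : n ≤ max m n := le_max_right _ _
  have hMle : ∀ h : ℕ, m ≤ h → n ≤ h → max m n ≤ h := fun h => max_le
  generalize max m n = M at *
  set D : ℝ := (Γ.dist x y : ℝ) with hD
  have hD0 : 0 ≤ D := by positivity
  set s := D * Real.exp (-(M : ℝ)) with hs
  have hs0 : 0 ≤ s := by positivity
  have hl0 : 0 ≤ Real.log (s + 1) := Real.log_nonneg (by linarith)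
  have hexp : ∀ t : ℝ, D * Real.exp (-(M + t)) = s * Real.exp (-t) := by
    intro t
    rw [hs, mul_assoc, ← Real.exp_add]
    ring_nf
  have hup := horoDist_le Γ hΓ x y m n (M + ⌈Real.log (s + 1)⌉₊) (by omega) (by omega)
  have hfin : horoDist Γ (x, m) (y, n) ≠ ⊤ := ne_top_of_le_ne_top ENNReal.ofReal_ne_top hup
  have hlow : ENNReal.ofReal (2 * Real.log (s + 1) + (2 * M - m - n) - 1) ≤
      horoDist Γ (x, m) (y, n) := by
    unfold horoDist
    refine le_iInf fun N => le_iInf fun c => le_iInf fun h0 => le_iInf fun hn => ?_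
    obtain ⟨h, ha, hb, hh⟩ := chain_lower Γ hΓ c N
    refine le_trans (ENNReal.ofReal_le_ofReal ?_) hh
    rw [h0] at ha ⊢
    rw [hn] at hb ⊢
    obtain ⟨t, rfl⟩ := Nat.exists_eq_add_of_le (hMle h ha hb)
    have h1 := real_lower s t hs0 (Nat.cast_nonneg t)
    have h2 := hexp t
    push_cast
    rw [← hD, h2]
    linarith
  have hlow' := (ENNReal.ofReal_le_iff_le_toReal hfin).1 hlow
  have hc1 := Nat.le_ceil (Real.log (s + 1))
  have hc2 := Nat.ceil_lt_add_one hl0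
  have hsmall : s * Real.exp (-(⌈Real.log (s + 1)⌉₊ : ℝ)) ≤ 1 := by
    have h1 : s + 1 ≤ Real.exp (⌈Real.log (s + 1)⌉₊ : ℝ) := by
      rw [← Real.log_le_iff_le_exp (by positivity)]; exact hc1
    rw [Real.exp_neg, ← div_eq_mul_inv, div_le_one (by positivity)]
    linarith
  have hup' := ENNReal.toReal_mono ENNReal.ofReal_ne_top hup
  have hmR : (m : ℝ) ≤ M := by exact_mod_cast hmM
  have hnR : (n : ℝ) ≤ M := by exact_mod_cast hnM
  push_cast at hup'
  rw [← hD, hexp, ENNReal.toReal_ofReal] at hup'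
  · rw [abs_le]
    constructor <;> linarith
  · have : 0 ≤ s * Real.exp (-(⌈Real.log (s + 1)⌉₊ : ℝ)) := by positivity
    linarith

end RelHypPaper
end
end

section
/- Let H = {x∈ℝ^N : x_N ≥ 1} with the path metric d_H induced by the hyperbolic metric of the upper half-space model of ℍ^N, identify ℝ^{N−1} with Euclidean metric ‖·‖ with ℝ^{N−1}×{1}⊂H, and for x∈ℝ^{N−1} let γ_x(t)=(x,e^t) for t≥0. Then H is an admissible horoball over ℝ^{N−1}: (i) there is a universal constant C such that |d_H((x,e^m),(y,e^n)) − (2·log(‖x−y‖·e^{−max{m,n}}+1)+|m−n|)| ≤ C for all x,y∈ℝ^{N−1} and m,n≥0; (ii) there is L≥1 with d_H((x,1),(y,1)) ≥ ‖x−y‖/L whenever d_H((x,1),(y,1))≤1; (iii) every point of H is within distance C of some ray γ_x; (iv) each γ_x is a geodesic ray, H is Gromov hyperbolic, and its Gromov boundary is a single point. -/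
noncomputable section

open Metric Set Filter

namespace RelHypPaper

variable {N : ℕ}

/-- the hyperbolic distance between two points of the upper half-space model
`ℝ^{N} × (0,∞)` of `ℍ^{N+1}`. -/
def upDist {N : ℕ} (p q : EuclideanSpace ℝ (Fin N) × ℝ) : ℝ :=
  2 * Real.log
    ((Real.sqrt (‖p.1 - q.1‖ ^ 2 + (p.2 - q.2) ^ 2) +
      Real.sqrt (‖p.1 - q.1‖ ^ 2 + (p.2 + q.2) ^ 2)) /
    (2 * Real.sqrt (p.2 * q.2)))

/-- the Gromov product on the horoball `H = {x_N ≥ 1}` with respect to the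
hyperbolic distance. -/
def upGromovProd {N : ℕ} (o p q : EuclideanSpace ℝ (Fin N) × ℝ) : ℝ :=
  (upDist o p + upDist o q - upDist p q) / 2

/-- a sequence in `H` going to infinity in the Gromov sense. -/
def upGromovSeq {N : ℕ} (u : ℕ → EuclideanSpace ℝ (Fin N) × ℝ) : Prop :=
  (∀ k, 1 ≤ (u k).2) ∧
    Filter.Tendsto (fun pr : ℕ × ℕ => upGromovProd ((0 : EuclideanSpace ℝ (Fin N)), 1) (u pr.1) (u pr.2))
      Filter.atTop Filter.atTop

/-- two Gromov sequences converge to the same boundary point. -/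
def upGromovEquiv {N : ℕ} (u v : ℕ → EuclideanSpace ℝ (Fin N) × ℝ) : Prop :=
  Filter.Tendsto (fun pr : ℕ × ℕ => upGromovProd ((0 : EuclideanSpace ℝ (Fin N)), 1) (u pr.1) (v pr.2))
    Filter.atTop Filter.atTop

/-- the comparison quantity. -/
def KK {N : ℕ} (p q : EuclideanSpace ℝ (Fin N) × ℝ) : ℝ := ‖p.1 - q.1‖ + p.2 + q.2

lemma KK_pos {N : ℕ} {p q : EuclideanSpace ℝ (Fin N) × ℝ} (hp : 0 < p.2) (hq : 0 < q.2) :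
    0 < KK p q := by
  unfold KK; positivity

lemma KK_comm {N : ℕ} (p q : EuclideanSpace ℝ (Fin N) × ℝ) : KK p q = KK q p := by
  unfold KK; rw [norm_sub_rev]; ring

lemma KK_tri {N : ℕ} (p q r : EuclideanSpace ℝ (Fin N) × ℝ) (hq : 0 < q.2) :
    KK p r ≤ KK p q + KK q r := by
  unfold KK
  have := norm_sub_le_norm_sub_add_norm_sub p.1 q.1 r.1
  linarith

lemma upDist_est {N : ℕ} {p q : EuclideanSpace ℝ (Fin N) × ℝ} (hp : 0 < p.2) (hq : 0 < q.2) :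
    2 * Real.log (KK p q) - Real.log p.2 - Real.log q.2 - 2 * Real.log 4 ≤ upDist p q ∧
    upDist p q ≤ 2 * Real.log (KK p q) - Real.log p.2 - Real.log q.2 := by
  have hK := KK_pos hp hq
  have hpq : 0 < p.2 * q.2 := mul_pos hp hq
  have hs : 0 < Real.sqrt (p.2 * q.2) := Real.sqrt_pos.2 hpq
  have hls : Real.log (Real.sqrt (p.2 * q.2)) = (Real.log p.2 + Real.log q.2) / 2 := by
    rw [Real.log_sqrt hpq.le, Real.log_mul hp.ne' hq.ne']
  have hd := norm_nonneg (p.1 - q.1)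
  have h1 : Real.sqrt (‖p.1 - q.1‖ ^ 2 + (p.2 - q.2) ^ 2) ≤ KK p q := by
    apply Real.sqrt_le_iff.2 ⟨hK.le, ?_⟩
    unfold KK
    nlinarith [mul_nonneg hd hp.le, mul_nonneg hd hq.le]
  have h2 : Real.sqrt (‖p.1 - q.1‖ ^ 2 + (p.2 + q.2) ^ 2) ≤ KK p q := by
    apply Real.sqrt_le_iff.2 ⟨hK.le, ?_⟩
    unfold KK
    nlinarith [mul_nonneg hd hp.le, mul_nonneg hd hq.le]
  have h3 : KK p q / 2 ≤ Real.sqrt (‖p.1 - q.1‖ ^ 2 + (p.2 + q.2) ^ 2) := by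
    apply Real.le_sqrt_of_sq_le
    unfold KK
    nlinarith [sq_nonneg (‖p.1 - q.1‖ - (p.2 + q.2))]
  have h4 := Real.sqrt_nonneg (‖p.1 - q.1‖ ^ 2 + (p.2 - q.2) ^ 2)
  have e1 : Real.log (KK p q / 4 / Real.sqrt (p.2 * q.2)) =
      Real.log (KK p q) - Real.log 4 - (Real.log p.2 + Real.log q.2) / 2 := by
    rw [Real.log_div (by positivity) hs.ne', Real.log_div hK.ne' (by norm_num), hls]
  have e2 : Real.log (KK p q / Real.sqrt (p.2 * q.2)) =
      Real.log (KK p q) - (Real.log p.2 + Real.log q.2) / 2 := by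
    rw [Real.log_div hK.ne' hs.ne', hls]
  unfold upDist
  have b1 : KK p q / 4 / Real.sqrt (p.2 * q.2) ≤
    (Real.sqrt (‖p.1 - q.1‖ ^ 2 + (p.2 - q.2) ^ 2) +
      Real.sqrt (‖p.1 - q.1‖ ^ 2 + (p.2 + q.2) ^ 2)) / (2 * Real.sqrt (p.2 * q.2)) := by
    rw [div_le_div_iff₀ hs (by positivity)]
    nlinarith
  have b2 : (Real.sqrt (‖p.1 - q.1‖ ^ 2 + (p.2 - q.2) ^ 2) +
      Real.sqrt (‖p.1 - q.1‖ ^ 2 + (p.2 + q.2) ^ 2)) / (2 * Real.sqrt (p.2 * q.2)) ≤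
      KK p q / Real.sqrt (p.2 * q.2) := by
    rw [div_le_div_iff₀ (by positivity) hs]
    nlinarith
  have l1 := Real.log_le_log (by positivity) b1
  have l2 := Real.log_le_log (lt_of_lt_of_le (by positivity) b1) b2
  rw [e1] at l1
  rw [e2] at l2
  constructor <;> linarith

lemma upDist_vert {N : ℕ} (x : EuclideanSpace ℝ (Fin N)) (s t : ℝ) :
    upDist (x, Real.exp s) (x, Real.exp t) = |s - t| := by
  have hs : Real.sqrt (Real.exp s * Real.exp t) = Real.exp ((s + t) / 2) := by
    rw [← Real.exp_add, Real.exp_half]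
  have key : (Real.sqrt (‖x - x‖ ^ 2 + (Real.exp s - Real.exp t) ^ 2) +
      Real.sqrt (‖x - x‖ ^ 2 + (Real.exp s + Real.exp t) ^ 2)) =
      2 * Real.exp (max s t) := by
    rw [sub_self, norm_zero]
    simp only [ne_eq, OfNat.ofNat_ne_zero, not_false_eq_true, zero_pow, zero_add]
    rw [Real.sqrt_sq_eq_abs, Real.sqrt_sq (by positivity)]
    rcases le_total s t with h | h
    · rw [max_eq_right h, abs_of_nonpos (by linarith [Real.exp_le_exp.2 h])]; ring
    · rw [max_eq_left h, abs_of_nonneg (by linarith [Real.exp_le_exp.2 h])]; ring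
  unfold upDist
  simp only
  rw [key, hs, mul_div_mul_left _ _ (by norm_num : (2 : ℝ) ≠ 0), ← Real.exp_sub, Real.log_exp]
  rcases le_total s t with h | h
  · rw [max_eq_right h, abs_of_nonpos (by linarith)]; ring
  · rw [max_eq_left h, abs_of_nonneg (by linarith)]; ring

lemma four_pt {a b c e X Y : ℝ} (ha : 0 < a) (hb : 0 < b) (hc : 0 < c) (he : 0 < e)
    (hX : 0 < X) (hY : 0 < Y)
    (h1 : X ≤ a + c) (h2 : X ≤ e + b) (h3 : Y ≤ e + a) (h4 : Y ≤ b + c) :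
    X * Y ≤ 4 * (a * b) ∨ X * Y ≤ 4 * (c * e) := by
  have aux : ∀ u v : ℝ, 0 < u → 0 < v → X ≤ 2 * u → Y ≤ 2 * v → X * Y ≤ 4 * (u * v) := by
    intro u v hu hv h h'
    have := mul_le_mul h h' hY.le (by positivity)
    linarith
  rcases le_total a c with h5 | h5 <;> rcases le_total e b with h6 | h6 <;>
    rcases le_total a e with h7 | h7 <;> rcases le_total b c with h8 | h8 <;>
    first
    | (left; exact aux a b ha hb (by linarith) (by linarith))
    | (right; exact aux c e hc he (by linarith) (by linarith))
    | (left; rw [mul_comm a b]; exact aux b a hb ha (by linarith) (by linarith))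
    | (right; rw [mul_comm c e]; exact aux e c he hc (by linarith) (by linarith))

lemma part_i {N : ℕ} (x y : EuclideanSpace ℝ (Fin N)) (m n : ℝ) :
    |upDist (x, Real.exp m) (y, Real.exp n) -
        (2 * Real.log (‖x - y‖ * Real.exp (-(max m n)) + 1) + |m - n|)| ≤ 2 * Real.log 4 := by
  have h := upDist_est (p := (x, Real.exp m)) (q := (y, Real.exp n))
    (Real.exp_pos m) (Real.exp_pos n)
  simp only [Real.log_exp] at h
  have hd := norm_nonneg (x - y)
  set M := max m n with hM
  have hMpos := Real.exp_pos M
  have e1 : Real.log (‖x - y‖ * Real.exp (-M) + 1) = Real.log (‖x - y‖ + Real.exp M) - M := by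
    have : ‖x - y‖ * Real.exp (-M) + 1 = (‖x - y‖ + Real.exp M) / Real.exp M := by
      rw [Real.exp_neg]; field_simp
    rw [this, Real.log_div (by positivity) hMpos.ne', Real.log_exp]
  have e2 : |m - n| = 2 * M - m - n := by
    rcases le_total m n with h | h
    · rw [hM, max_eq_right h, abs_of_nonpos (by linarith)]; ring
    · rw [hM, max_eq_left h, abs_of_nonneg (by linarith)]; ring
  have k1 : ‖x - y‖ + Real.exp M ≤ KK (x, Real.exp m) (y, Real.exp n) := by
    unfold KK; simp only
    rcases le_total m n with h | h
    · rw [hM, max_eq_right h]; linarith [Real.exp_pos m]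
    · rw [hM, max_eq_left h]; linarith [Real.exp_pos n]
  have k2 : KK (x, Real.exp m) (y, Real.exp n) ≤ 2 * (‖x - y‖ + Real.exp M) := by
    unfold KK; simp only
    linarith [Real.exp_le_exp.2 (le_max_left m n), Real.exp_le_exp.2 (le_max_right m n)]
  have l1 := Real.log_le_log (by positivity) k1
  have l2 := Real.log_le_log (lt_of_lt_of_le (by positivity) k1) k2
  rw [Real.log_mul (by norm_num) (by positivity)] at l2
  have l4 : Real.log 4 = 2 * Real.log 2 := by
    rw [show (4 : ℝ) = 2 ^ 2 by norm_num, Real.log_pow]; norm_num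
  have l0 : 0 < Real.log 2 := Real.log_pos (by norm_num)
  rw [e1, e2, abs_le]
  constructor <;> linarith [h.1, h.2]

lemma part_ii {N : ℕ} (x y : EuclideanSpace ℝ (Fin N)) (h : upDist (x, 1) (y, 1) ≤ 1) :
    ‖x - y‖ / 2 ≤ upDist (x, 1) (y, 1) := by
  have hd := norm_nonneg (x - y)
  unfold upDist at *
  simp only [sub_self, mul_one, Real.sqrt_one] at *
  set E := (Real.sqrt (‖x - y‖ ^ 2 + 0 ^ 2) + Real.sqrt (‖x - y‖ ^ 2 + (1 + 1) ^ 2)) / 2 with hE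
  have h1 : ‖x - y‖ ≤ Real.sqrt (‖x - y‖ ^ 2 + 0 ^ 2) := Real.le_sqrt_of_sq_le (by linarith)
  have h2 : 2 ≤ Real.sqrt (‖x - y‖ ^ 2 + (1 + 1) ^ 2) := Real.le_sqrt_of_sq_le (by nlinarith)
  have hE1 : 1 + ‖x - y‖ / 2 ≤ E := by
    rw [hE, le_div_iff₀ (by norm_num)]
    have := add_le_add h1 h2
    refine le_trans (by linarith) this
  have hE0 : 0 < E := by linarith
  have hE2 : E ≤ 2 := by
    have l2 := Real.log_two_gt_d9
    exact (Real.log_le_log_iff hE0 (by norm_num)).1 (by linarith)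
  have hl := Real.one_sub_inv_le_log_of_pos hE0
  have : ‖x - y‖ / 4 ≤ 1 - E⁻¹ := by
    have : 1 - E⁻¹ = (E - 1) / E := by field_simp
    rw [this, le_div_iff₀ hE0]
    nlinarith
  linarith

lemma part_hyp {N : ℕ} (o p q r : EuclideanSpace ℝ (Fin N) × ℝ)
    (ho : 0 < o.2) (hp : 0 < p.2) (hq : 0 < q.2) (hr : 0 < r.2) :
    min (upGromovProd o p q) (upGromovProd o q r) - 10 * Real.log 4 ≤ upGromovProd o p r := by
  have l0 : 0 < Real.log 4 := Real.log_pos (by norm_num)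
  have Kop := KK_pos ho hp
  have Koq := KK_pos ho hq
  have Kor := KK_pos ho hr
  have Kpq := KK_pos hp hq
  have Kqr := KK_pos hq hr
  have Kpr := KK_pos hp hr
  have e1 := upDist_est ho hp
  have e2 := upDist_est ho hq
  have e3 := upDist_est ho hr
  have e4 := upDist_est hp hq
  have e5 := upDist_est hq hr
  have e6 := upDist_est hp hr
  have t3 := KK_tri o p q hp
  have t4 := KK_tri o r q hr
  rw [KK_comm r q] at t4
  have t2 := KK_tri p o r ho
  rw [KK_comm p o] at t2
  have := four_pt Kpq Kor Kqr Kop Kpr Koq (KK_tri p q r hq) t2 t3 t4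
  unfold upGromovProd
  rcases this with h | h
  · have := Real.log_le_log (by positivity) h
    rw [Real.log_mul Kpr.ne' Koq.ne', Real.log_mul (by norm_num) (by positivity),
      Real.log_mul Kpq.ne' Kor.ne'] at this
    have := min_le_left ((upDist o p + upDist o q - upDist p q) / 2)
      ((upDist o q + upDist o r - upDist q r) / 2)
    linarith [e1.1, e1.2, e2.1, e2.2, e3.1, e3.2, e4.1, e4.2, e6.1, e6.2]
  · have := Real.log_le_log (by positivity) h
    rw [Real.log_mul Kpr.ne' Koq.ne', Real.log_mul (by norm_num) (by positivity),
      Real.log_mul Kqr.ne' Kop.ne'] at this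
    have := min_le_right ((upDist o p + upDist o q - upDist p q) / 2)
      ((upDist o q + upDist o r - upDist q r) / 2)
    linarith [e1.1, e1.2, e2.1, e2.2, e3.1, e3.2, e5.1, e5.2, e6.1, e6.2]

lemma tendsto_inf_top {α : Type*} {l : Filter α} {f g : α → ℝ} (hf : Tendsto f l atTop)
    (hg : Tendsto g l atTop) : Tendsto (fun a => f a ⊓ g a) l atTop := by
  refine tendsto_atTop.2 (fun b => ?_)
  filter_upwards [tendsto_atTop.1 hf b, tendsto_atTop.1 hg b] with a h1 h2 using le_inf h1 h2

lemma seq_log {N : ℕ} {u : ℕ → EuclideanSpace ℝ (Fin N) × ℝ} (hu : upGromovSeq u) :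
    Tendsto (fun k => Real.log (KK ((0 : EuclideanSpace ℝ (Fin N)), 1) (u k))) atTop atTop := by
  have h := hu.2.comp tendsto_atTop_diagonal
  have h' := tendsto_atTop_add_const_right atTop (- Real.log 4) (h.atTop_div_const
    (show (0 : ℝ) < 2 by norm_num))
  refine tendsto_atTop_mono (fun k => ?_) h'
  have hk : 0 < (u k).2 := by linarith [hu.1 k]
  have e1 := upDist_est (p := ((0 : EuclideanSpace ℝ (Fin N)), (1 : ℝ))) one_pos hk
  have e2 := upDist_est hk hk
  have l0 : 0 < Real.log 4 := Real.log_pos (by norm_num)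
  have l1 := Real.log_nonneg (hu.1 k)
  have l2 : Real.log (u k).2 ≤ Real.log (KK (u k) (u k)) := by
    apply Real.log_le_log hk
    unfold KK
    linarith [norm_nonneg ((u k).1 - (u k).1)]
  simp only [Real.log_one] at e1
  simp only [Function.comp, id, upGromovProd]
  linarith [e1.2, e2.1]

lemma part_equiv {N : ℕ} {u v : ℕ → EuclideanSpace ℝ (Fin N) × ℝ} (hu : upGromovSeq u)
    (hv : upGromovSeq v) : upGromovEquiv u v := by
  unfold upGromovEquiv
  rw [← prod_atTop_atTop_eq]
  have h1 := (seq_log hu).comp (tendsto_fst (f := atTop) (g := (atTop : Filter ℕ)))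
  have h2 := (seq_log hv).comp (tendsto_snd (f := (atTop : Filter ℕ)) (g := atTop))
  have h3 := tendsto_atTop_add_const_right _ (- (10 * Real.log 4)) (tendsto_inf_top h1 h2)
  refine tendsto_atTop_mono (fun pr => ?_) h3
  have hp : 0 < (u pr.1).2 := by linarith [hu.1 pr.1]
  have hq : 0 < (v pr.2).2 := by linarith [hv.1 pr.2]
  set o : EuclideanSpace ℝ (Fin N) × ℝ := ((0 : EuclideanSpace ℝ (Fin N)), (1 : ℝ)) with ho
  have ho2 : 0 < o.2 := one_pos
  have e1 := upDist_est ho2 hp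
  have e2 := upDist_est ho2 hq
  have e3 := upDist_est hp hq
  have lo : Real.log o.2 = 0 := Real.log_one
  have l0 : 0 < Real.log 4 := Real.log_pos (by norm_num)
  have t := KK_tri (u pr.1) o (v pr.2) ho2
  rw [KK_comm (u pr.1) o] at t
  have Kp := KK_pos ho2 hp
  have Kq := KK_pos ho2 hq
  have Kpq := KK_pos hp hq
  simp only [Function.comp, upGromovProd]
  rcases le_total (KK o (u pr.1)) (KK o (v pr.2)) with hle | hle
  · have h4 := Real.log_le_log Kpq (show KK (u pr.1) (v pr.2) ≤ 4 * KK o (v pr.2) by linarith)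
    rw [Real.log_mul (by norm_num) Kq.ne'] at h4
    have := inf_le_left (a := Real.log (KK o (u pr.1))) (b := Real.log (KK o (v pr.2)))
    linarith [e1.1, e2.1, e3.2]
  · have h4 := Real.log_le_log Kpq (show KK (u pr.1) (v pr.2) ≤ 4 * KK o (u pr.1) by linarith)
    rw [Real.log_mul (by norm_num) Kp.ne'] at h4
    have := inf_le_right (a := Real.log (KK o (u pr.1))) (b := Real.log (KK o (v pr.2)))
    linarith [e1.1, e2.1, e3.2]

lemma part_ex (N : ℕ) : ∃ u : ℕ → EuclideanSpace ℝ (Fin N) × ℝ, upGromovSeq u := by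
  refine ⟨fun k => (0, Real.exp k), fun k => Real.one_le_exp (by positivity), ?_⟩
  rw [← prod_atTop_atTop_eq]
  have h1 := (tendsto_natCast_atTop_atTop (R := ℝ)).comp
    (tendsto_fst (f := atTop) (g := (atTop : Filter ℕ)))
  have h2 := (tendsto_natCast_atTop_atTop (R := ℝ)).comp
    (tendsto_snd (f := (atTop : Filter ℕ)) (g := atTop))
  refine (tendsto_inf_top h1 h2).congr (fun pr => ?_)
  have g : ∀ k : ℕ, upDist ((0 : EuclideanSpace ℝ (Fin N)), (1 : ℝ)) (0, Real.exp k) = k := by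
    intro k
    have := upDist_vert (0 : EuclideanSpace ℝ (Fin N)) 0 k
    rw [Real.exp_zero] at this
    rw [this, zero_sub, abs_neg, abs_of_nonneg (by positivity)]
  simp only [upGromovProd, g, upDist_vert, Function.comp]
  rcases le_total (pr.1 : ℝ) (pr.2 : ℝ) with h | h
  · rw [inf_eq_left.2 h, abs_of_nonpos (by linarith)]; ring
  · rw [inf_eq_right.2 h, abs_of_nonneg (by linarith)]; ring

/-- **Proposition 3.6.** The horoball `H = {x ∈ ℝ^{N+1}_+ : x_{N+1} ≥ 1}` of
real hyperbolic space, with the vertical rays `γ_x(t) = (x, e^t)`, is an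
admissible horoball over `ℝ^{N}`:
(i) a uniform logarithmic distance formula holds,
(ii) on the horosphere `{x_{N+1} = 1}` the hyperbolic metric is bi-Lipschitz
below by the Euclidean metric at small scales,
(iii) every point of `H` lies within uniformly bounded distance of a vertical
ray,
(iv) the vertical rays are geodesic rays, `H` is Gromov hyperbolic, and its
Gromov boundary is a single point. -/
theorem real_horoball_admissible :
    -- (i) the admissible-horoball distance formula, with a universal constant
    (∃ C : ℝ, 0 < C ∧ ∀ (N : ℕ) (x y : EuclideanSpace ℝ (Fin N)) (m n : ℝ),
      0 ≤ m → 0 ≤ n →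
      |upDist (x, Real.exp m) (y, Real.exp n) -
        (2 * Real.log (‖x - y‖ * Real.exp (-(max m n)) + 1) + |m - n|)| ≤ C) ∧
    -- (ii) lower bi-Lipschitz bound at scale ≤ 1 on the horosphere
    (∃ L : ℝ, 1 ≤ L ∧ ∀ (N : ℕ) (x y : EuclideanSpace ℝ (Fin N)),
      upDist (x, 1) (y, 1) ≤ 1 → ‖x - y‖ / L ≤ upDist (x, 1) (y, 1)) ∧
    -- (iii) every point of `H` is within distance `C` of some vertical ray
    (∃ C : ℝ, 0 < C ∧ ∀ (N : ℕ) (p : EuclideanSpace ℝ (Fin N) × ℝ), 1 ≤ p.2 →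
      ∃ (x : EuclideanSpace ℝ (Fin N)) (t : ℝ), 0 ≤ t ∧
        upDist p (x, Real.exp t) ≤ C) ∧
    -- (iv) vertical rays are unit-speed geodesic rays …
    (∀ (N : ℕ) (x : EuclideanSpace ℝ (Fin N)) (s t : ℝ), 0 ≤ s → 0 ≤ t →
      upDist (x, Real.exp s) (x, Real.exp t) = |s - t|) ∧
    -- … `H` is Gromov hyperbolic …
    (∃ δ : ℝ, 0 ≤ δ ∧ ∀ (N : ℕ) (o p q r : EuclideanSpace ℝ (Fin N) × ℝ),
      1 ≤ o.2 → 1 ≤ p.2 → 1 ≤ q.2 → 1 ≤ r.2 →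
      min (upGromovProd o p q) (upGromovProd o q r) - δ ≤ upGromovProd o p r) ∧
    -- … and the Gromov boundary of `H` is a single point
    (∀ N : ℕ, (∃ u : ℕ → EuclideanSpace ℝ (Fin N) × ℝ, upGromovSeq u) ∧
      ∀ u v : ℕ → EuclideanSpace ℝ (Fin N) × ℝ,
        upGromovSeq u → upGromovSeq v → upGromovEquiv u v) := by
  have l0 : 0 < Real.log 4 := Real.log_pos (by norm_num)
  refine ⟨⟨2 * Real.log 4, by positivity, fun N x y m n _ _ => part_i x y m n⟩,
    ⟨2, by norm_num, fun N x y h => part_ii x y h⟩,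
    ⟨1, one_pos, fun N p hp => ⟨p.1, Real.log p.2, Real.log_nonneg hp, ?_⟩⟩,
    fun N x s t _ _ => upDist_vert x s t,
    ⟨10 * Real.log 4, by positivity, fun N o p q r ho hp hq hr =>
      part_hyp o p q r (by linarith) (by linarith) (by linarith) (by linarith)⟩,
    fun N => ⟨part_ex N, fun u v hu hv => part_equiv hu hv⟩⟩
  have h := upDist_vert p.1 (Real.log p.2) (Real.log p.2)
  rw [Real.exp_log (by linarith)] at h
  rw [Real.exp_log (by linarith)]
  change upDist (p.1, p.2) (p.1, p.2) ≤ 1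
  rw [h]; simp

end RelHypPaper
end
end

section
/- Let (Z,ρ,ℬ) and (Z',ρ',ℬ') be shadow decorated metric spaces, and suppose (Z,ρ) is bounded and uniformly perfect. Then for any shadow-respecting quasisymmetric embedding h:Z→Z', the snowflake exponents λ_a, for (a,r)∈ℬ, are uniformly bounded away from zero and infinity: there is α≥1 (depending on the quasisymmetry data) with 1/α ≤ λ_a ≤ α for all (a,r)∈ℬ. -/
noncomputable section

open Metric Set Filter

namespace RelHypPaper

/-! ## Cusped spaces and relatively hyperbolic spaces -/

/-- `s` is `k`-coarsely connected. -/
def CoarselyConnectedWith {X : Type*} [PseudoMetricSpace X] (k : ℝ) (s : Set X) : Prop :=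
  ∀ x ∈ s, ∀ y ∈ s, ∃ (n : ℕ) (c : ℕ → X), c 0 = x ∧ c n = y ∧
    (∀ m ≤ n, c m ∈ s) ∧ ∀ m < n, dist (c m) (c (m + 1)) ≤ k

/-- The data of a cusped space for `(X, P)`: a proper geodesic space `Cusp`
containing (a uniformly properly embedded copy of) `X`, obtained by gluing to
each peripheral set `P i` a uniformly admissible horoball `Horo i`, foliated by
vertical geodesic rays `ray i x` based at the points `x` of a `C`-net
`core i ⊆ P i`, satisfying the logarithmic distance formula of admissible
horoballs. -/
structure CuspedSpace (X : Type*) [MetricSpace X] {ι : Type*} (P : ι → Set X) where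
  /-- the cusped space -/
  Cusp : Type*
  [metC : MetricSpace Cusp]
  /-- the uniform constant of the admissible horoballs and nets -/
  Cconst : ℝ
  /-- the uniform bi-Lipschitz constant of the admissible horoballs -/
  L : ℝ
  /-- the uniform coarse connectedness constant of the peripheral sets -/
  k : ℝ
  hC : 0 < Cconst
  hL : 1 ≤ L
  hk : 0 < k
  geodX : GeodesicSpace X
  properX : ProperSpace X
  conn : ∀ i, CoarselyConnectedWith k (P i)
  /-- the inclusion of `X` into the cusped space -/
  incl : X → Cusp
  incl_inj : Function.Injective incl
  incl_short : ∀ x y : X, dist (incl x) (incl y) ≤ dist x y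
  /-- the net `P̂ ⊆ P` along which the horoball is glued -/
  core : ι → Set X
  core_sub : ∀ i, core i ⊆ P i
  core_net : ∀ i, ∀ x ∈ P i, ∃ y ∈ core i, dist x y ≤ Cconst
  /-- the horoballs inside the cusped space -/
  Horo : ι → Set Cusp
  /-- the vertical geodesic rays of the horoballs -/
  ray : ι → X → ℝ → Cusp
  ray_zero : ∀ i, ∀ x ∈ core i, ray i x 0 = incl x
  ray_isom : ∀ i, ∀ x ∈ core i, ∀ s t : ℝ, 0 ≤ s → 0 ≤ t →
    dist (ray i x s) (ray i x t) = |s - t|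
  ray_mem : ∀ i, ∀ x ∈ core i, ∀ t : ℝ, 0 ≤ t → ray i x t ∈ Horo i
  horo_near_ray : ∀ i, ∀ p ∈ Horo i, ∃ x ∈ core i, ∃ t : ℝ, 0 ≤ t ∧
    dist p (ray i x t) ≤ Cconst
  core_lower : ∀ i, ∀ x ∈ core i, ∀ y ∈ core i,
    dist (incl x) (incl y) ≤ 1 → dist x y / L ≤ dist (incl x) (incl y)
  /-- the logarithmic distance formula inside horoballs -/
  dist_formula : ∀ i, ∀ x ∈ core i, ∀ y ∈ core i, ∀ m n : ℝ, 0 ≤ m → 0 ≤ n →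
    |dist (ray i x m) (ray i y n) -
      (2 * Real.log (dist x y * Real.exp (-(max m n)) + 1) + |m - n|)| ≤ Cconst
  /-- the cusped space is the union of `X` and the horoballs -/
  cusp_cover : ∀ p : Cusp, p ∈ Set.range incl ∨ ∃ i, p ∈ Horo i
  geodC : GeodesicSpace Cusp
  properC : ProperSpace Cusp

attribute [instance] CuspedSpace.metC

/-- `(X, P)` with a choice of cusped space is relatively hyperbolic when the
cusped space is Gromov hyperbolic. -/
structure RelHypSpace (X : Type*) [MetricSpace X] {ι : Type*} (P : ι → Set X)
    extends CuspedSpace X P where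
  δ : ℝ
  hδ : 0 ≤ δ
  hypC : GromovHyperbolicWith δ Cusp

/-- The boundary at infinity of a relatively hyperbolic space, together with its
shadow decoration: to each peripheral `P i` corresponds the parabolic point
`aP i`, namely the endpoint at infinity of the vertical rays of the horoball
`Horo i`. -/
structure BoundaryOf {X : Type*} [MetricSpace X] {ι : Type*} {P : ι → Set X}
    (RH : RelHypSpace X P) extends VisualBoundary RH.Cusp where
  /-- the parabolic points -/
  aP : ι → Z
  aP_inj : Function.Injective aP
  aP_spec : ∀ i : ι, ∃ γ : ℝ → RH.Cusp, GeodesicRay o γ ∧ β γ = aP i ∧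
    ∀ x ∈ RH.core i, SameEndpoint γ (RH.ray i x)
  shadow_le_diam : ∃ K : ℝ, 0 < K ∧ ∀ i : ι,
    ENNReal.ofReal (Real.exp (-ε * Metric.infDist o (RH.incl '' P i))) ≤
      ENNReal.ofReal K * EMetric.diam (Set.univ : Set Z)

/-- the radius of the shadow of the peripheral set `P i`. -/
def BoundaryOf.rP {X : Type*} [MetricSpace X] {ι : Type*} {P : ι → Set X}
    {RH : RelHypSpace X P} (V : BoundaryOf RH) (i : ι) : ℝ :=
  Real.exp (-V.ε * Metric.infDist V.o (RH.incl '' P i))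

/-- `(X,P)` is visually complete. -/
def VisuallyComplete {X : Type*} [MetricSpace X] {ι : Type*} {P : ι → Set X}
    (RH : RelHypSpace X P) : Prop :=
  ∀ w : RH.Cusp, ∃ C : ℝ, 0 ≤ C ∧ ∀ x : RH.Cusp,
    ∃ γa γb : ℝ → RH.Cusp, GeodesicRay w γa ∧ GeodesicRay w γb ∧
      ¬ SameEndpoint γa γb ∧
      (∃ t : ℝ, 0 ≤ t ∧ dist x (γa t) ≤ C) ∧
      (∃ t : ℝ, 0 ≤ t ∧ dist x (γb t) ≤ C) ∧
      ∃ ℓ : ℝ → RH.Cusp, IsGeodesicLine ℓ ∧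
        SameEndpoint (fun t => ℓ t) γa ∧ SameEndpoint (fun t => ℓ (-t)) γb ∧
        ∃ t : ℝ, dist x (ℓ t) ≤ C

end RelHypPaper
namespace RelHypPaper

/-! ## Shadow decorated spaces and quasisymmetric maps -/

/-- A shadow decoration on a metric space `Z`: a family of distinct points
`a i` with radii `r i > 0`, with `sup r ≼ diam Z`. -/
structure ShadowDecor (ι : Type*) (Z : Type*) [MetricSpace Z] where
  a : ι → Z
  r : ι → ℝ
  a_inj : Function.Injective a
  r_pos : ∀ i, 0 < r i
  r_le_diam : ∃ K : ℝ, 0 < K ∧ ∀ i,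
    ENNReal.ofReal (r i) ≤ ENNReal.ofReal K * EMetric.diam (Set.univ : Set Z)

/-- the shadow decoration on the boundary of a relatively hyperbolic space. -/
def BoundaryOf.decor {X : Type*} [MetricSpace X] {ι : Type*} {P : ι → Set X}
    {RH : RelHypSpace X P} (V : BoundaryOf RH) : ShadowDecor ι V.Z where
  a := V.aP
  r := V.rP
  a_inj := V.aP_inj
  r_pos := fun _ => Real.exp_pos _
  r_le_diam := V.shadow_le_diam

/-- a distortion function: an increasing self-homeomorphism of `[0,∞)`. -/
def IsDistortionFun (η : ℝ → ℝ) : Prop :=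
  η 0 = 0 ∧ (∀ t, 0 ≤ t → 0 ≤ η t) ∧ StrictMonoOn η (Set.Ici 0) ∧
    ContinuousOn η (Set.Ici 0) ∧ Filter.Tendsto η Filter.atTop Filter.atTop

/-- the `η`-quasisymmetry inequality. -/
def QSWith {Z Z' : Type*} [MetricSpace Z] [MetricSpace Z'] (η : ℝ → ℝ)
    (h : Z → Z') : Prop :=
  ∀ x y z : Z, ∀ t : ℝ, 0 ≤ t → dist x y ≤ t * dist x z →
    dist (h x) (h y) ≤ η t * dist (h x) (h z)

/-- an (η-)quasisymmetric embedding. -/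
def QSEmbedding {Z Z' : Type*} [MetricSpace Z] [MetricSpace Z'] (h : Z → Z') : Prop :=
  Function.Injective h ∧ ∃ η : ℝ → ℝ, IsDistortionFun η ∧ QSWith η h

/-- conditions (1), (2), (3) of a shadow-respecting quasisymmetric embedding,
with constant `C` and snowflake exponents `lam`. -/
structure ShadowRespectingWith {ι ι' Z Z' : Type*} [MetricSpace Z] [MetricSpace Z']
    (B : ShadowDecor ι Z) (B' : ShadowDecor ι' Z') (h : Z → Z')
    (C : ℝ) (lam : ι → ℝ) : Prop where
  hC : 1 ≤ C
  lam_pos : ∀ i, 0 < lam i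
  shadow_exists : ∀ i : ι, ∃ i' : ι', B'.a i' = h (B.a i)
  shadow_in : ∀ (i : ι) (i' : ι'), B'.a i' = h (B.a i) →
    ∀ b : Z, dist (B.a i) b ≤ B.r i → dist (B'.a i') (h b) ≤ C * B'.r i'
  shadow_out : ∀ (i : ι) (i' : ι'), B'.a i' = h (B.a i) →
    ∀ b : Z, B.r i ≤ dist (B.a i) b → B'.r i' ≤ C * dist (B'.a i') (h b)
  shadow_none : ∀ i' : ι', (¬ ∃ i : ι, B'.a i' = h (B.a i)) →
    ∀ b : Z, B'.r i' / C ≤ dist (B'.a i') (h b)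
  snowflake : ∀ (i : ι) (i' : ι'), B'.a i' = h (B.a i) → ∀ b c : Z,
    (dist (B.a i) b / B.r i) * dist (B.a i) b ≤ dist b c →
    dist b c ≤ dist (B.a i) b → dist (B.a i) b ≤ B.r i →
    (1 / C) * (dist b c / B.r i) ^ lam i ≤ dist (h b) (h c) / B'.r i' ∧
      dist (h b) (h c) / B'.r i' ≤ C * (dist b c / B.r i) ^ lam i

/-- a shadow-respecting quasisymmetric embedding. -/
def ShadowRespectingQS {ι ι' Z Z' : Type*} [MetricSpace Z] [MetricSpace Z']
    (B : ShadowDecor ι Z) (B' : ShadowDecor ι' Z') (h : Z → Z') : Prop :=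
  QSEmbedding h ∧ ∃ (C : ℝ) (lam : ι → ℝ), ShadowRespectingWith B B' h C lam

/-- a shadow-respecting quasisymmetric embedding which asymptotically
`lam₀`-snowflakes. -/
def ShadowRespectingQSSnowflake {ι ι' Z Z' : Type*} [MetricSpace Z] [MetricSpace Z']
    (B : ShadowDecor ι Z) (B' : ShadowDecor ι' Z') (h : Z → Z') (lam₀ : ℝ) : Prop :=
  QSEmbedding h ∧ ∃ C : ℝ, ShadowRespectingWith B B' h C (fun _ => lam₀)

/-- a uniformly perfect metric space. -/
def UniformlyPerfect (Z : Type*) [MetricSpace Z] : Prop :=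
  ∃ lam : ℝ, 1 < lam ∧ ∀ z : Z, ∀ r : ℝ, 0 < r →
    ENNReal.ofReal r ≤ EMetric.diam (Set.univ : Set Z) →
    (Metric.closedBall z r \ Metric.ball z (r / lam)).Nonempty

/-! ## Maps coarsely respecting peripheral structures -/

/-- `f` coarsely respects the peripheral structures `P`, `P'`. -/
def CoarselyRespectsPeripherals {X X' : Type*} [MetricSpace X] [MetricSpace X']
    {ι ι' : Type*} (P : ι → Set X) (P' : ι' → Set X') (f : X → X') : Prop :=
  (∃ C : ℝ, 0 < C ∧ ∀ i : ι, ∃ i' : ι',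
      f '' P i ⊆ Metric.cthickening C (P' i')) ∧
  (∀ C' : ℝ, 0 < C' → ∃ C : ℝ, 0 < C ∧ ∀ i' : ι',
      EMetric.diam (f ⁻¹' Metric.cthickening C' (P' i')) ≤ ENNReal.ofReal C ∨
      ∃ i : ι, f ⁻¹' Metric.cthickening C' (P' i') ⊆ Metric.cthickening C (P i))

/-- `f` is a snowflake on peripherals. -/
def SnowflakeOnPeripherals {X X' : Type*} [MetricSpace X] [MetricSpace X']
    {ι ι' : Type*} (P : ι → Set X) (P' : ι' → Set X') (f : X → X') : Prop :=
  PolynomiallyDistorted f ∧ CoarselyRespectsPeripherals P P' f ∧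
    ∃ C : ℝ, 0 < C ∧ ∀ i : ι, ∃ lam : ℝ, lam ∈ Set.Ioc (0:ℝ) 1 ∧
      ∀ x ∈ P i, ∀ y ∈ P i,
        (1 / C) * dist x y ^ lam - C ≤ dist (f x) (f y) ∧
        dist (f x) (f y) ≤ C * dist x y ^ lam + C

end RelHypPaper

namespace RelHypPaper

universe u₁ u₂ u₃ u₄

theorem aux_pair {η : ℝ → ℝ} {C L t : ℝ} (hη : IsDistortionFun η) (hC : 1 ≤ C) (hL : 1 < L)
    (ht : 0 < t) (ht1 : t ≤ 1) {l x y X Y : ℝ} (hl : 0 < l) (hy : 0 < y) (hX : 0 < X) (hY : 0 < Y)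
    (h1 : x ≤ L ^ 2 / t * y) (h2 : y ≤ t * x)
    (hx1 : 1 / C * x ^ l ≤ X) (hx2 : X ≤ C * x ^ l)
    (hy1 : 1 / C * y ^ l ≤ Y) (hy2 : Y ≤ C * y ^ l)
    (q1 : X ≤ η (L ^ 2 / t) * Y) (q2 : Y ≤ η t * X) (ht2 : η t ≤ 1 / (Real.exp 1 * C ^ 2))
    (ht3 : t ≤ 1 / Real.exp 1) :
    l ≤ Real.log (C ^ 2 * η (L ^ 2 / t)) ∧ 1 ≤ l * Real.log (L ^ 2 / t) := by
  have hC0 : 0 < C := by linarith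
  have hx : 0 < x := by
    by_contra hh
    push Not at hh
    nlinarith
  have he := Real.exp_pos 1
  have hyl : 0 < y ^ l := Real.rpow_pos_of_pos hy l
  have hxl : 0 < x ^ l := Real.rpow_pos_of_pos hx l
  have hLt : 0 < L ^ 2 / t := by positivity
  have hr : (x / y) ^ l = x ^ l / y ^ l := Real.div_rpow hx.le hy.le l
  have hη0 : 0 < η (L ^ 2 / t) := by
    by_contra hh
    push Not at hh
    nlinarith
  have a1 : x ^ l ≤ C * X := by
    rw [one_div, inv_mul_le_iff₀ hC0] at hx1; exact hx1
  constructor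
  · have hexp : Real.exp 1 ≤ x / y := by
      rw [le_div_iff₀ hy]
      rw [le_div_iff₀ he] at ht3
      nlinarith
    have k1 : Real.exp 1 ^ l ≤ (x / y) ^ l := Real.rpow_le_rpow he.le hexp hl.le
    have k2 : x ^ l / y ^ l ≤ C ^ 2 * η (L ^ 2 / t) := by
      rw [div_le_iff₀ hyl]
      calc x ^ l ≤ C * X := a1
        _ ≤ C * (η (L ^ 2 / t) * Y) := by gcongr
        _ ≤ C * (η (L ^ 2 / t) * (C * y ^ l)) := by gcongr
        _ = _ := by ring
    rw [Real.le_log_iff_exp_le (by positivity)]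
    rw [Real.exp_one_rpow] at k1
    linarith
  · have k1 : (x / y) ^ l ≤ (L ^ 2 / t) ^ l := by
      apply Real.rpow_le_rpow (by positivity) _ hl.le
      rwa [div_le_iff₀ hy]
    have a2 : y ^ l ≤ C * Y := by
      rw [one_div, inv_mul_le_iff₀ hC0] at hy1; exact hy1
    have k2 : Real.exp 1 ≤ x ^ l / y ^ l := by
      rw [le_div_iff₀ hyl]
      have : y ^ l ≤ C * (1 / (Real.exp 1 * C ^ 2) * (C * x ^ l)) := by
        calc y ^ l ≤ C * Y := a2
          _ ≤ C * (η t * X) := by gcongr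
          _ ≤ C * (1 / (Real.exp 1 * C ^ 2) * X) := by gcongr
          _ ≤ _ := by gcongr
      calc Real.exp 1 * y ^ l ≤ Real.exp 1 * (C * (1 / (Real.exp 1 * C ^ 2) * (C * x ^ l))) := by
            gcongr
        _ = x ^ l := by field_simp
    rw [← Real.log_rpow hLt, Real.le_log_iff_exp_le (by positivity)]
    linarith

theorem aux_t {η : ℝ → ℝ} (hη : IsDistortionFun η) {ε δ : ℝ} (hε : 0 < ε) (hδ : 0 < δ) :
    ∃ t, 0 < t ∧ t ≤ δ ∧ η t ≤ ε := by
  obtain ⟨h0, hnn, hm, hc, -⟩ := hη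
  have h := hc 0 (by simp)
  obtain ⟨d, hd, H⟩ := Metric.continuousWithinAt_iff.1 h ε hε
  have hp : 0 < min (d / 2) δ := by positivity
  refine ⟨min (d / 2) δ, hp, min_le_right _ _, ?_⟩
  have := H (x := min (d / 2) δ) (by simpa using hp.le) (by
    rw [Real.dist_eq, sub_zero, abs_of_pos hp]
    have := min_le_left (d / 2) δ
    linarith)
  rw [h0, Real.dist_eq, sub_zero] at this
  exact (le_abs_self _).trans this.le

/-- **Proposition 2.13.** If `(Z,ρ)` is bounded and uniformly perfect, the
snowflake exponents of any shadow-respecting quasisymmetric embedding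
`h : Z → Z'` are uniformly bounded away from `0` and `∞`, with bound `α`
depending only on the quasisymmetry data `(η, C)` and on the geometric data
(`lamUP`, `D`) of `Z`. -/
theorem snowflake_exponents_uniformly_bounded
    (η : ℝ → ℝ) (C lamUP D : ℝ)
    (hη : IsDistortionFun η) (hC : 1 ≤ C) (hlamUP : 1 < lamUP) (hD : 0 < D) :
    ∃ α : ℝ, 1 ≤ α ∧
      ∀ (ι : Type u₁) (ι' : Type u₂) (Z : Type u₃) (Z' : Type u₄)
        [MetricSpace Z] [MetricSpace Z']
        (B : ShadowDecor ι Z) (B' : ShadowDecor ι' Z') (h : Z → Z') (lam : ι → ℝ),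
        -- `Z` is bounded, with diameter at most `D`
        Bornology.IsBounded (Set.univ : Set Z) →
        Metric.diam (Set.univ : Set Z) ≤ D →
        -- `Z` is uniformly perfect with constant `lamUP`
        (∀ z : Z, ∀ r : ℝ, 0 < r →
          ENNReal.ofReal r ≤ EMetric.diam (Set.univ : Set Z) →
          (Metric.closedBall z r \ Metric.ball z (r / lamUP)).Nonempty) →
        -- `h` is an `η`-quasisymmetric embedding which is shadow-respecting
        -- with constant `C` and snowflake exponents `lam`
        Function.Injective h → QSWith η h →
        ShadowRespectingWith B B' h C lam →
        ∀ i : ι, 1 / α ≤ lam i ∧ lam i ≤ α := by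
  have he := Real.exp_pos 1
  have hC0 : 0 < C := by linarith
  have hL0 : 0 < lamUP := by linarith
  obtain ⟨t, ht, ht3, ht2⟩ := aux_t hη (ε := 1 / (Real.exp 1 * C ^ 2)) (δ := 1 / Real.exp 1)
    (by positivity) (by positivity)
  have ht1 : t ≤ 1 := ht3.trans (by
    rw [div_le_one he]; exact Real.one_le_exp (by norm_num))
  refine ⟨max 1 (max (Real.log (C ^ 2 * η (lamUP ^ 2 / t))) (Real.log (lamUP ^ 2 / t))),
    le_max_left _ _, ?_⟩
  intro ι ι' Z Z' _ _ B B' h lam hbd _ hUP hinj hqs hsr i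
  have hl := hsr.lam_pos i
  have hr := B.r_pos i
  obtain ⟨i', hi'⟩ := hsr.shadow_exists i
  have hr' := B'.r_pos i'
  -- a positive radius
  have hdpos : 0 < EMetric.diam (Set.univ : Set Z) := by
    obtain ⟨K, hK, H⟩ := B.r_le_diam
    rw [pos_iff_ne_zero]
    intro h0
    have := H i
    rw [h0, mul_zero] at this
    have h3 := ENNReal.ofReal_pos.2 hr
    exact absurd this (not_le.2 h3)
  have hdfin : EMetric.diam (Set.univ : Set Z) ≠ ⊤ := hbd.ediam_ne_top
  set d := (EMetric.diam (Set.univ : Set Z)).toReal with hd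
  have hd0 : 0 < d := ENNReal.toReal_pos hdpos.ne' hdfin
  set R := min (B.r i) d with hR
  have hR0 : 0 < R := lt_min hr hd0
  have key : ∀ s : ℝ, 0 < s → s ≤ R → ∃ b : Z, s / lamUP ≤ dist (B.a i) b ∧ dist (B.a i) b ≤ s := by
    intro s hs hsR
    obtain ⟨b, hb1, hb2⟩ := hUP (B.a i) s hs (by
      rw [← ENNReal.ofReal_toReal hdfin]
      exact ENNReal.ofReal_le_ofReal (hsR.trans (min_le_right _ _)))
    refine ⟨b, ?_, ?_⟩
    · rw [dist_comm]; simpa using hb2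
    · rw [dist_comm]; simpa using hb1
  have snow : ∀ b : Z, dist (B.a i) b ≤ B.r i →
      (1 / C) * (dist (B.a i) b / B.r i) ^ lam i ≤ dist (h (B.a i)) (h b) / B'.r i' ∧
      dist (h (B.a i)) (h b) / B'.r i' ≤ C * (dist (B.a i) b / B.r i) ^ lam i := by
    intro b hb
    have := hsr.snowflake i i' hi' b (B.a i) (by
      rw [dist_comm b]
      exact mul_le_of_le_one_left dist_nonneg ((div_le_one hr).2 hb)) (dist_comm _ _).le hb
    rwa [dist_comm b, dist_comm (h b)] at this
  have hRr : R ≤ B.r i := min_le_left _ _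
  obtain ⟨b1, h11, h12⟩ := key R hR0 le_rfl
  have hs : R * (t / lamUP) ≤ R :=
    mul_le_of_le_one_right hR0.le ((div_le_one hL0).2 (by linarith))
  obtain ⟨b2, h21, h22⟩ := key (R * (t / lamUP)) (by positivity) hs
  have p1 : 0 < dist (B.a i) b1 := lt_of_lt_of_le (by positivity) h11
  have p2 : 0 < dist (B.a i) b2 := lt_of_lt_of_le (by positivity) h21
  have P1 : 0 < dist (h (B.a i)) (h b1) := dist_pos.2 (hinj.ne (dist_pos.1 p1))
  have P2 : 0 < dist (h (B.a i)) (h b2) := dist_pos.2 (hinj.ne (dist_pos.1 p2))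
  have e1 : dist (B.a i) b1 ≤ lamUP ^ 2 / t * dist (B.a i) b2 := by
    calc dist (B.a i) b1 ≤ R := h12
      _ = lamUP ^ 2 / t * (R * (t / lamUP) / lamUP) := by field_simp
      _ ≤ _ := by gcongr
  have e2 : dist (B.a i) b2 ≤ t * dist (B.a i) b1 := by
    calc dist (B.a i) b2 ≤ R * (t / lamUP) := h22
      _ = t * (R / lamUP) := by ring
      _ ≤ _ := by gcongr
  have q1 := hqs _ _ _ _ (by positivity) e1
  have q2 := hqs _ _ _ _ ht.le e2
  obtain ⟨s1, s2⟩ := snow b1 (h12.trans hRr)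
  obtain ⟨s3, s4⟩ := snow b2 (h22.trans (hs.trans hRr))
  obtain ⟨A1, A2⟩ := aux_pair hη hC hlamUP ht ht1 hl (div_pos p2 hr) (div_pos P1 hr')
    (div_pos P2 hr')
    (by rw [← mul_div_assoc]; gcongr) (by rw [← mul_div_assoc]; gcongr) s1 s2 s3 s4
    (by rw [← mul_div_assoc]; gcongr) (by rw [← mul_div_assoc]; gcongr) ht2 ht3
  refine ⟨?_, A1.trans ((le_max_left _ _).trans (le_max_right _ _))⟩
  rw [div_le_iff₀ (lt_of_lt_of_le one_pos (le_max_left _ _))]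
  refine A2.trans ?_
  gcongr
  exact (le_max_right _ _).trans (le_max_right _ _)


end RelHypPaper
end
end
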